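/- Let T be the localisation of O_q(G) at the multiplicatively closed set generated by the 2n normal 𝓗-eigenvectors c^{ϖ_i}_{−ϖ_i, w_0ϖ_i} and c^{ϖ_i}_{−w_0ϖ_i, ϖ_i}, i ∈ {1,…,n}, equipped with the induced rational 𝓗-action. Then T is 𝓗-simple: the only 𝓗-invariant two-sided ideals of T are 0 and T. -/

import Mathlib

open scoped TensorProduct

/-- The `q`-factorial `(q - q⁻¹)(q² - q⁻²)⋯(qᵐ - q⁻ᵐ)`. -/
noncomputable def qfac (t : ℂ) (m : ℕ) : ℂ :=
  ∏ j ∈ Finset.range m, (t ^ (j + 1) - t⁻¹ ^ (j + 1))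

/-- The `q`-binomial coefficient `[m k]` at parameter `t`. -/
noncomputable def qbinom (t : ℂ) (m k : ℕ) : ℂ :=
  qfac t m / (qfac t k * qfac t (m - k))

/-- The defining relations of the quantised enveloping algebra `U_q(𝔤)` associated to a
Cartan matrix `a` with symmetrising integers `d`, on elements `E i`, `F i`, `K i` of a
`ℂ`-algebra `B`: the `K i` are commuting units, conjugation by `K i` rescales `E j` and
`F j` by `q_i^{±a i j}` (where `q_i = q^{d i}`), the commutator `[E i, F j]` is
`δ_{ij} (K_i - K_i⁻¹)/(q_i - q_i⁻¹)`, and the quantum Serre relations hold. -/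
def UqRels (q : ℂ) {n : ℕ} (a : Fin n → Fin n → ℤ) (d : Fin n → ℕ)
    (B : Type) [Ring B] [Algebra ℂ B] (E F : Fin n → B) (K : Fin n → Bˣ) : Prop :=
  (∀ i j, (K i : B) * (K j : B) = (K j : B) * (K i : B)) ∧
  (∀ i j, (K i : B) * E j = (q ^ ((d i : ℤ) * a i j)) • (E j * (K i : B))) ∧
  (∀ i j, (K i : B) * F j = (q ^ (-((d i : ℤ) * a i j))) • (F j * (K i : B))) ∧
  (∀ i j, E i * F j - F j * E i =
    if i = j then (q ^ (d i : ℤ) - q ^ (-(d i : ℤ)))⁻¹ • ((K i : B) - (((K i)⁻¹ : Bˣ) : B))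
    else 0) ∧
  (∀ i j, i ≠ j → ∑ k ∈ Finset.range ((1 - a i j).toNat + 1),
      ((-1 : ℂ) ^ k * qbinom (q ^ (d i : ℤ)) ((1 - a i j).toNat) k) •
        (E i ^ ((1 - a i j).toNat - k) * E j * E i ^ k) = 0) ∧
  (∀ i j, i ≠ j → ∑ k ∈ Finset.range ((1 - a i j).toNat + 1),
      ((-1 : ℂ) ^ k * qbinom (q ^ (d i : ℤ)) ((1 - a i j).toNat) k) •
        (F i ^ ((1 - a i j).toNat - k) * F j * F i ^ k) = 0)

/-- The weight space of weight `μ = ∑ μ i ϖ i` in a `U_q(𝔤)`-module: the set of vectors on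
which each `K i` acts by the scalar `q^{(μ, α_i)} = q^{μ i * d i}`. -/
noncomputable def wtSp (q : ℂ) {n : ℕ} (d : Fin n → ℕ)
    {U : Type} [Ring U] [Algebra ℂ U] (K : Fin n → Uˣ)
    {Vc : Type} [AddCommGroup Vc] [Module ℂ Vc] (ρ : U →ₐ[ℂ] Module.End ℂ Vc)
    (μ : Fin n → ℤ) : Submodule ℂ Vc :=
  ⨅ i : Fin n, LinearMap.ker (ρ (K i : U) - (q ^ (μ i * (d i : ℤ))) • (1 : Module.End ℂ Vc))

/-- `ξ` is a dual vector of weight `μ`:  equivalently (via the antipode-twisted action on the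
dual module), `ξ` vanishes on every weight space of weight `ν ≠ -μ`. -/
noncomputable def inDualWt (q : ℂ) {n : ℕ} (d : Fin n → ℕ)
    {U : Type} [Ring U] [Algebra ℂ U] (K : Fin n → Uˣ)
    {Vc : Type} [AddCommGroup Vc] [Module ℂ Vc] (ρ : U →ₐ[ℂ] Module.End ℂ Vc)
    (μ : Fin n → ℤ) (ξ : Module.Dual ℂ Vc) : Prop :=
  ∀ ν : Fin n → ℤ, ν ≠ -μ → ∀ x ∈ wtSp q d K ρ ν, ξ x = 0

/-- The Demazure-type submodule generated by the weight space of weight `ν` under the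
subalgebra of `U` generated by `gens` (take `gens = Set.range E` for `V⁺_w(λ)` with
`ν = wλ`, and `gens = Set.range F` for `V⁻_w(λ)`). -/
noncomputable def demazure (q : ℂ) {n : ℕ} (d : Fin n → ℕ)
    {U : Type} [Ring U] [Algebra ℂ U] (gens : Set U) (K : Fin n → Uˣ)
    {Vc : Type} [AddCommGroup Vc] [Module ℂ Vc] (ρ : U →ₐ[ℂ] Module.End ℂ Vc)
    (ν : Fin n → ℤ) : Submodule ℂ Vc :=
  Submodule.span ℂ
    {x | ∃ y ∈ Algebra.adjoin ℂ gens, ∃ u ∈ wtSp q d K ρ ν, x = ρ y u}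

/-- A two-sided ideal of a (possibly noncommutative) ring is prime if it is proper and
`x R y ⊆ P` implies `x ∈ P` or `y ∈ P`. -/
def IsPrimeTwoSided {R : Type*} [Ring R] (P : TwoSidedIdeal R) : Prop :=
  P ≠ ⊤ ∧ ∀ x y : R, (∀ r : R, x * r * y ∈ P) → x ∈ P ∨ y ∈ P

/-- An element `r` of a ring is normal if `rR = Rr`. -/
def IsNormalElem {R : Type*} [Ring R] (r : R) : Prop :=
  (∀ x, ∃ y, r * x = y * r) ∧ ∀ x, ∃ y, x * r = r * y

/-- The ideal `Q⁺_{w}` of `O_q(G)`: generated by the coordinate functions `c^{ϖ_j}_{ξ,v}` with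
`v` a highest weight vector of `V(ϖ_j)` and `ξ` orthogonal to the Demazure module
`V⁺_w(ϖ_j)`. -/
noncomputable def Qplus (q : ℂ) {n : ℕ} (d : Fin n → ℕ)
    {U : Type} [Ring U] [Algebra ℂ U] (E : Fin n → U) (K : Fin n → Uˣ)
    {V : (Fin n → ℕ) → Type} [∀ c, AddCommGroup (V c)] [∀ c, Module ℂ (V c)]
    (ρ : ∀ c, U →ₐ[ℂ] Module.End ℂ (V c))
    {W : Type} [Group W] (σ : W →* Multiplicative (AddAut (Fin n → ℤ)))
    {A : Type} [Ring A]
    (cf : ∀ c : Fin n → ℕ, Module.Dual ℂ (V c) → V c → A)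
    (w : W) : TwoSidedIdeal A :=
  TwoSidedIdeal.span
    {x | ∃ j : Fin n, ∃ ξ : Module.Dual ℂ (V (Pi.single j 1)),
      ∃ v ∈ wtSp q d K (ρ (Pi.single j 1)) (fun k => ((Pi.single j 1 : Fin n → ℕ) k : ℤ)),
        (∀ y ∈ demazure q d (Set.range E) K (ρ (Pi.single j 1))
            ((σ w).toAdd (fun k => ((Pi.single j 1 : Fin n → ℕ) k : ℤ))), ξ y = 0) ∧
        x = cf (Pi.single j 1) ξ v}

/-- The ideal `Q⁻_{w}` of `O_q(G)`: generated by the coordinate functions `c^{ϖ_j}_{ξ,v}` with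
`v` a lowest weight vector of `V(ϖ_j)` and `ξ` orthogonal to the Demazure module
`V⁻_{w w₀}(ϖ_j)`. -/
noncomputable def Qminus (q : ℂ) {n : ℕ} (d : Fin n → ℕ)
    {U : Type} [Ring U] [Algebra ℂ U] (F : Fin n → U) (K : Fin n → Uˣ)
    {V : (Fin n → ℕ) → Type} [∀ c, AddCommGroup (V c)] [∀ c, Module ℂ (V c)]
    (ρ : ∀ c, U →ₐ[ℂ] Module.End ℂ (V c))
    {W : Type} [Group W] (σ : W →* Multiplicative (AddAut (Fin n → ℤ))) (w₀ : W)
    {A : Type} [Ring A]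
    (cf : ∀ c : Fin n → ℕ, Module.Dual ℂ (V c) → V c → A)
    (w : W) : TwoSidedIdeal A :=
  TwoSidedIdeal.span
    {x | ∃ j : Fin n, ∃ ξ : Module.Dual ℂ (V (Pi.single j 1)),
      ∃ v ∈ wtSp q d K (ρ (Pi.single j 1)) ((σ w₀).toAdd (fun k => ((Pi.single j 1 : Fin n → ℕ) k : ℤ))),
        (∀ y ∈ demazure q d (Set.range F) K (ρ (Pi.single j 1))
            ((σ (w * w₀)).toAdd (fun k => ((Pi.single j 1 : Fin n → ℕ) k : ℤ))), ξ y = 0) ∧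
        x = cf (Pi.single j 1) ξ v}

/-!
Let `J ⊆ O_q(G)` be the contraction of an `𝓗`-invariant ideal of `T`. Since `q` is not a root of
unity, the `𝓗`-eigenspaces are the weight spaces of the two regular actions of `U_q(𝔤)`, so `J` is
spanned by biweight vectors; moreover, right factors that are inverted in `T` can be cancelled
in `J`.

Let `x` be killed by the left action of all `E_i` and `y` by the right action of all `F_i`. The span
of the elements `x y - t y x`, where `t` is the scalar that makes them vanish on `U⁰`, is stable
under the left `E_i` and the right `F_i`, hence it vanishes on `U⁻U⁰U⁺ = U_q(𝔤)`. Starting from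
extremal vectors, this `q`-commutation propagates: an inverted coordinate function `z` satisfies
`z b = t b z` for every biweight vector `b`. If `z` is killed by both actions of all `F_i`, applying
the right action of `E_i` to this relation with `b ∈ J` leaves, modulo `J`, a multiple of
`(E_i b) z`, whose coefficient is non-zero because the weight of `z` is. Hence `E_i b ∈ J`, and
symmetrically `F_i b ∈ J`: the ideal `J` is stable under the right regular action.

As `V(λ)* ≅ V(-w₀λ)`, the antipode of `U_q(𝔤)` induces one on `O_q(G)`, and
`∑ S(b₁) b₂ = ε(b)`. Right stability puts each `b₂` in `J` when `b ∈ J`, so a non-zero `J`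
contains `1`.
-/

namespace QuantumGroup

section LinearAlgebra

variable {𝕜 M : Type*} [Field 𝕜] [AddCommGroup M] [Module 𝕜 M] {ι κ : Type*}

theorem mem_of_sum_simultaneous_eigenvectors_mem {f : ι → Module.End 𝕜 M} {χ : κ → ι → 𝕜}
    (hχ : Function.Injective χ) {N : Submodule 𝕜 M} (hN : ∀ i, ∀ y ∈ N, f i y ∈ N)
    (s : Finset κ) (x : κ → M) (hx : ∀ k ∈ s, ∀ i, f i (x k) = χ k i • x k)
    (hsum : ∑ k ∈ s, x k ∈ N) : ∀ k ∈ s, x k ∈ N := by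
  classical
  induction s using Finset.induction_on generalizing x with
  | empty => simp
  | insert k₀ s hk₀ ih =>
    have mem_of_mem : ∀ k ∈ s, x k ∈ N := by
      intro k hk
      obtain ⟨i, hi⟩ := Function.ne_iff.mp (hχ.ne (ne_of_mem_of_not_mem hk hk₀))
      have h_eliminate : ∑ j ∈ s, (χ j i - χ k₀ i) • x j ∈ N := by
        convert N.sub_mem (hN i _ hsum) (N.smul_mem (χ k₀ i) hsum) using 1
        rw [map_sum, Finset.smul_sum, Finset.sum_insert hk₀, Finset.sum_insert hk₀,
          hx _ (Finset.mem_insert_self _ _), add_sub_add_left_eq_sub, ← Finset.sum_sub_distrib]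
        refine Finset.sum_congr rfl fun j hj => ?_
        rw [hx _ (Finset.mem_insert_of_mem hj), sub_smul]
      have h_smul : (χ k i - χ k₀ i) • x k ∈ N := by
        refine ih (fun j => (χ j i - χ k₀ i) • x j) (fun j hj l => ?_) h_eliminate k hk
        rw [map_smul, hx _ (Finset.mem_insert_of_mem hj), smul_comm]
      exact (N.smul_mem_iff (sub_ne_zero.mpr hi)).mp h_smul
    intro k hk
    rcases Finset.mem_insert.mp hk with rfl | hk
    · rw [Finset.sum_insert hk₀] at hsum
      exact (N.add_mem_iff_left (N.sum_mem mem_of_mem)).mp hsum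
    · exact mem_of_mem k hk

theorem mem_of_mem_iSup_of_simultaneous_eigenvectors {f : ι → Module.End 𝕜 M} {χ : κ → ι → 𝕜}
    (hχ : Function.Injective χ) {N : κ → Submodule 𝕜 M}
    (hN : ∀ k, ∀ y ∈ N k, ∀ i, f i y = χ k i • y) {x : M} (hxN : x ∈ ⨆ k, N k)
    {k : κ} (hx : ∀ i, f i x = χ k i • x) : x ∈ N k := by
  classical
  obtain ⟨y, hy⟩ := (Submodule.mem_iSup_iff_exists_finsupp N x).mp hxN
  have h_eig : ∀ j i, f i (y j - (Pi.single k x : κ → M) j) =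
      χ j i • (y j - (Pi.single k x : κ → M) j) := by
    intro j i
    rcases eq_or_ne j k with rfl | hj
    · rw [Pi.single_eq_same, map_sub, hN j _ (hy.1 j), hx, smul_sub]
    · rw [Pi.single_eq_of_ne hj, sub_zero, hN j _ (hy.1 j)]
  have h_sum : ∑ j ∈ insert k y.support, (y j - (Pi.single k x : κ → M) j) = 0 := by
    rw [Finset.sum_sub_distrib, Finset.sum_pi_single', if_pos (Finset.mem_insert_self _ _),
      ← Finset.sum_subset (Finset.subset_insert k y.support), sub_eq_zero]
    · exact hy.2
    · exact fun j _ hj => Finsupp.notMem_support_iff.mp hj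
  have h_comp := mem_of_sum_simultaneous_eigenvectors_mem hχ (N := ⊥) (by simp) _ _
    (fun j _ => h_eig j) (h_sum ▸ Submodule.zero_mem _) k (Finset.mem_insert_self _ _)
  rw [Pi.single_eq_same, Submodule.mem_bot, sub_eq_zero] at h_comp
  exact h_comp ▸ hy.1 k

end LinearAlgebra

section CartanMatrix

variable {n : ℕ}

/-- The simple root `α_k` in the basis of fundamental weights. -/
def simpleRoot (a : Fin n → Fin n → ℤ) (k : Fin n) : Fin n → ℤ := fun i => a i k

/-- The monoid `Q⁺` of non-negative combinations of simple roots. -/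
def positiveCone (a : Fin n → Fin n → ℤ) : AddSubmonoid (Fin n → ℤ) :=
  AddSubmonoid.closure (Set.range (simpleRoot a))

/-- An integer multiple of the invariant form: an integral symmetric form on the weight
lattice with `(μ, α_k) = D d_k μ_k`, together with a `D`-th root of `q`, so that
`q^{(μ, ν) / D}` makes sense for all weights. -/
structure WeightForm (q : ℂ) (a : Fin n → Fin n → ℤ) (d : Fin n → ℕ) where
  form : (Fin n → ℤ) →+ (Fin n → ℤ) →+ ℤ
  scale : ℕ
  scale_pos : 0 < scale
  root : ℂˣ
  root_pow : (root : ℂ) ^ scale = q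
  form_comm : ∀ x y, form x y = form y x
  form_simpleRoot : ∀ x k, form x (simpleRoot a k) = scale * (d k * x k)

variable {a : Fin n → Fin n → ℤ} {d : Fin n → ℕ} {W : Type*} [Group W]
  {σ : W →* Multiplicative (AddAut (Fin n → ℤ))} {s : Fin n → W}

theorem det_ne_zero_of_finite_weylGroup [Finite W] (ha_diag : ∀ i, a i i = 2)
    (hsgen : Subgroup.closure (Set.range s) = ⊤)
    (hs : ∀ i (μ : Fin n → ℤ), (σ (s i)).toAdd μ = fun k => μ k - μ i * a k i) :
    (Matrix.of a).det ≠ 0 := by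
  classical
  have := Fintype.ofFinite W
  intro hdet
  obtain ⟨y, hy, hya⟩ := Matrix.exists_vecMul_eq_zero_iff.mpr hdet
  have dotProduct_smul_eq : ∀ w μ, y ⬝ᵥ (σ w).toAdd μ = y ⬝ᵥ μ := by
    intro w
    have hw : w ∈ Subgroup.closure (Set.range s) := hsgen ▸ Subgroup.mem_top w
    induction hw using Subgroup.closure_induction with
    | mem _ hx =>
      obtain ⟨i, rfl⟩ := hx
      intro μ
      have hyi : y ⬝ᵥ (fun k => a k i) = 0 := congrFun hya i
      have : (fun k => μ k - μ i * a k i) = μ - μ i • fun k => a k i := rfl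
      rw [hs, this, dotProduct_sub, dotProduct_smul, hyi, smul_zero, sub_zero]
    | one => intro μ; rw [map_one]; rfl
    | mul v w _ _ hv hw => intro μ; rw [map_mul]; exact (hv _).trans (hw μ)
    | inv w _ hw =>
      intro μ
      rw [← hw, map_inv]
      exact congrArg _ ((σ w).toAdd.apply_symm_apply μ)
  have sum_orbit_eq_zero : ∀ μ, ∑ w, (σ w).toAdd μ = 0 := by
    intro μ
    funext i
    have h_fixed : (σ (s i)).toAdd (∑ w, (σ w).toAdd μ) = ∑ w, (σ w).toAdd μ := by
      rw [map_sum]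
      refine Fintype.sum_equiv (Equiv.mulLeft (s i)) _ _ fun w => ?_
      rw [Equiv.coe_mulLeft, map_mul]; rfl
    have := congrFun ((hs i _).symm.trans h_fixed) i
    simp only [ha_diag] at this
    rw [Pi.zero_apply]; omega
  refine hy (dotProduct_eq_zero y fun μ => ?_)
  have : (Fintype.card W : ℤ) * (y ⬝ᵥ μ) = 0 := by
    rw [← nsmul_eq_mul, ← Finset.card_univ, ← Finset.sum_const,
      ← Finset.sum_congr rfl fun w _ => dotProduct_smul_eq w μ, ← dotProduct_sum,
      sum_orbit_eq_zero, dotProduct_zero]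
  exact (mul_eq_zero.mp this).resolve_left (by exact_mod_cast Fintype.card_ne_zero)

open Matrix in
theorem transpose_diagonal_mul_adjugate (ha_symm : ∀ i j, (d i : ℤ) * a i j = d j * a j i)
    (hdet : (Matrix.of a).det ≠ 0) :
    (diagonal (fun i => (d i : ℤ)) * (of a).adjugate)ᵀ =
      diagonal (fun i => (d i : ℤ)) * (of a).adjugate := by
  set A := of a
  set δ : Matrix (Fin n) (Fin n) ℤ := diagonal fun i => (d i : ℤ)
  have h_symm : Aᵀ * δ = δ * A := by
    ext i j
    rw [mul_diagonal, diagonal_mul, transpose_apply, mul_comm]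
    exact (ha_symm j i)
  have h_left : Aᵀ * (δ * A.adjugate) = A.det • δ := by
    rw [← Matrix.mul_assoc, h_symm, Matrix.mul_assoc, mul_adjugate, Matrix.mul_smul, Matrix.mul_one]
  have h_right : Aᵀ * (δ * A.adjugate)ᵀ = A.det • δ := by
    rw [← transpose_mul, Matrix.mul_assoc, adjugate_mul, Matrix.mul_smul, Matrix.mul_one,
      transpose_smul, diagonal_transpose]
  have h_cancel : A.det • (δ * A.adjugate)ᵀ = A.det • (δ * A.adjugate) := by
    have := congrArg (Aᵀ.adjugate * ·) (h_right.trans h_left.symm)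
    simpa only [← Matrix.mul_assoc, adjugate_mul, det_transpose, Matrix.smul_mul,
      Matrix.one_mul] using this
  exact smul_right_injective _ hdet h_cancel

open Matrix in
theorem nonempty_weightForm {q : ℂ} (hq : q ≠ 0) (hdet : (Matrix.of a).det ≠ 0)
    (ha_symm : ∀ i j, (d i : ℤ) * a i j = d j * a j i) : Nonempty (WeightForm q a d) := by
  set A := of a
  set X := diagonal (fun i => (d i : ℤ)) * A.adjugate with hX
  set D := (A.det ^ 2).natAbs with hD
  have hD_cast : (D : ℤ) = A.det ^ 2 := by rw [hD, Int.natAbs_of_nonneg (sq_nonneg _)]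
  have hD_pos : 0 < D := Int.natAbs_pos.mpr (pow_ne_zero 2 hdet)
  obtain ⟨h, hh⟩ := IsAlgClosed.exists_pow_nat_eq q hD_pos
  have hh_ne : h ≠ 0 := by rintro rfl; exact hq (by rw [← hh, zero_pow hD_pos.ne'])
  have hX_symm : Xᵀ = X := transpose_diagonal_mul_adjugate ha_symm hdet
  refine ⟨{ form := AddMonoidHom.mk'
              (fun x => AddMonoidHom.mk' (fun y => A.det * (x ⬝ᵥ X *ᵥ y)) ?_) ?_
            scale := D, scale_pos := hD_pos
            root := Units.mk0 h hh_ne, root_pow := hh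
            form_comm := fun x y => ?_, form_simpleRoot := fun x k => ?_ }⟩
  · intro y z
    rw [mulVec_add, dotProduct_add, mul_add]
  · intro x z
    ext y
    exact (congrArg _ (add_dotProduct x z _)).trans (mul_add _ _ _)
  · change A.det * (x ⬝ᵥ X *ᵥ y) = A.det * (y ⬝ᵥ X *ᵥ x)
    rw [dotProduct_mulVec, ← mulVec_transpose, hX_symm, dotProduct_comm]
  · have h_root : simpleRoot a k = A *ᵥ Pi.single k 1 := by
      rw [mulVec_single_one]; rfl
    change A.det * (x ⬝ᵥ X *ᵥ simpleRoot a k) = _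
    rw [h_root, mulVec_mulVec, hX, Matrix.mul_assoc, adjugate_mul, Matrix.mul_smul,
      Matrix.mul_one, smul_mulVec, dotProduct_smul, diagonal_mulVec_single, mul_one,
      dotProduct_single, hD_cast, smul_eq_mul]
    ring

namespace WeightForm

variable {q : ℂ} (B : WeightForm q a d)

theorem form_weylGroup (ha_diag : ∀ i, a i i = 2) (hsgen : Subgroup.closure (Set.range s) = ⊤)
    (hs : ∀ i (μ : Fin n → ℤ), (σ (s i)).toAdd μ = fun k => μ k - μ i * a k i) (w : W)
    (x y : Fin n → ℤ) : B.form ((σ w).toAdd x) ((σ w).toAdd y) = B.form x y := by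
  have hw : w ∈ Subgroup.closure (Set.range s) := hsgen ▸ Subgroup.mem_top w
  induction hw using Subgroup.closure_induction generalizing x y with
  | mem _ hx =>
    obtain ⟨i, rfl⟩ := hx
    have hs' : ∀ μ, (σ (s i)).toAdd μ = μ - μ i • simpleRoot a i := hs i
    simp only [hs', map_sub, map_zsmul, AddMonoidHom.sub_apply, AddMonoidHom.smul_apply,
      B.form_comm (simpleRoot a i), B.form_simpleRoot, simpleRoot, ha_diag, smul_eq_mul]
    ring
  | one => rw [map_one]; rfl
  | mul v w _ _ hv hw => rw [map_mul]; exact (hv _ _).trans (hw x y)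
  | inv w _ hw =>
    rw [map_inv, ← hw]
    exact congrArg₂ (fun u v => B.form u v) ((σ w).toAdd.apply_symm_apply x)
      ((σ w).toAdd.apply_symm_apply y)

theorem form_nonneg {μ x : Fin n → ℤ} (hμ : ∀ i, 0 ≤ μ i) (hx : x ∈ positiveCone a) :
    0 ≤ B.form μ x := by
  induction hx using AddSubmonoid.closure_induction with
  | mem _ h =>
    obtain ⟨k, rfl⟩ := h
    have := hμ k
    rw [B.form_simpleRoot]
    positivity
  | zero => rw [map_zero]
  | add x y _ _ hx hy => rw [map_add]; exact add_nonneg hx hy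

theorem form_one_simpleRoot_pos (hd : ∀ i, 0 < d i) (k : Fin n) :
    0 < B.form 1 (simpleRoot a k) := by
  have := B.scale_pos
  have := hd k
  rw [B.form_simpleRoot, Pi.one_apply, mul_one]
  positivity

theorem form_one_pos (hd : ∀ i, 0 < d i) {x : Fin n → ℤ} (hx : x ∈ positiveCone a)
    (hx0 : x ≠ 0) : 0 < B.form 1 x := by
  induction hx using AddSubmonoid.closure_induction with
  | mem _ h => obtain ⟨k, rfl⟩ := h; exact B.form_one_simpleRoot_pos hd k
  | zero => exact absurd rfl hx0
  | add x y hx hy ihx ihy =>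
    have hx_nonneg := B.form_nonneg (μ := 1) (fun _ => zero_le_one) hx
    have hy_nonneg := B.form_nonneg (μ := 1) (fun _ => zero_le_one) hy
    rw [map_add]
    by_cases hx1 : x = 0
    · exact add_pos_of_nonneg_of_pos hx_nonneg (ihy (by rintro rfl; simp [hx1] at hx0))
    · exact add_pos_of_pos_of_nonneg (ihx hx1) hy_nonneg

end WeightForm

end CartanMatrix

section Algebra

variable {𝕜 R : Type*} [Field 𝕜] [Ring R] [Algebra 𝕜 R]

theorem mem_of_forall_mem_adjoin {M : Type*} [AddCommGroup M] [Module 𝕜 M] {S : Set R}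
    (ρ : R →ₐ[𝕜] Module.End 𝕜 M) {N : Submodule 𝕜 M} (hS : ∀ u ∈ S, ∀ x ∈ N, ρ u x ∈ N)
    {u : R} (hu : u ∈ Algebra.adjoin 𝕜 S) : ∀ x ∈ N, ρ u x ∈ N := by
  induction hu using Algebra.adjoin_induction with
  | mem u hu => exact hS u hu
  | algebraMap r => intro x hx; rw [AlgHom.commutes]; exact N.smul_mem r hx
  | add u v _ _ hu hv => intro x hx; rw [map_add]; exact N.add_mem (hu x hx) (hv x hx)
  | mul u v _ _ hu hv => intro x hx; rw [map_mul]; exact hu _ (hv x hx)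

theorem adjoin_mul_adjoin_le {S T : Set R} (h : ∀ t ∈ T, ∀ s ∈ S, ∃ c : 𝕜, t * s = c • (s * t)) :
    (Algebra.adjoin 𝕜 T).toSubmodule * (Algebra.adjoin 𝕜 S).toSubmodule ≤
      (Algebra.adjoin 𝕜 S).toSubmodule * (Algebra.adjoin 𝕜 T).toSubmodule := by
  set A := Algebra.adjoin 𝕜 S
  set B := Algebra.adjoin 𝕜 T
  have generator_mul : ∀ t ∈ T, ∀ x ∈ A, ∃ y ∈ A, t * x = y * t := by
    intro t ht x hx
    induction hx using Algebra.adjoin_induction with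
    | mem s hs =>
      obtain ⟨c, hc⟩ := h t ht s hs
      exact ⟨c • s, A.smul_mem (Algebra.subset_adjoin hs) c, by rw [hc, smul_mul_assoc]⟩
    | algebraMap r => exact ⟨_, A.algebraMap_mem r, (Algebra.commutes r t).symm⟩
    | add x x' _ _ hx hx' =>
      obtain ⟨y, hy, hxy⟩ := hx
      obtain ⟨y', hy', hxy'⟩ := hx'
      exact ⟨y + y', A.add_mem hy hy', by rw [mul_add, add_mul, hxy, hxy']⟩
    | mul x x' _ _ hx hx' =>
      obtain ⟨y, hy, hxy⟩ := hx
      obtain ⟨y', hy', hxy'⟩ := hx'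
      exact ⟨y * y', A.mul_mem hy hy', by rw [← mul_assoc, hxy, mul_assoc, hxy', mul_assoc]⟩
  refine Submodule.mul_le.mpr fun t ht => ?_
  induction ht using Algebra.adjoin_induction with
  | mem t ht =>
    intro x hx
    obtain ⟨y, hy, hxy⟩ := generator_mul t ht x hx
    exact hxy ▸ Submodule.mul_mem_mul hy (Algebra.subset_adjoin ht)
  | algebraMap r =>
    intro x hx
    rw [Algebra.commutes]
    exact Submodule.mul_mem_mul hx (B.algebraMap_mem r)
  | add t t' _ _ ht ht' =>
    intro x hx
    rw [add_mul]
    exact add_mem (ht x hx) (ht' x hx)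
  | mul t t' _ _ ht ht' =>
    intro x hx
    rw [mul_assoc]
    refine Submodule.mul_induction_on (ht' x hx) (fun y hy z hz => ?_) fun y z hy hz => ?_
    · have := Submodule.mul_mem_mul (ht y hy) (show z ∈ B.toSubmodule from hz)
      rwa [mul_assoc, mul_assoc, (Subalgebra.isIdempotentElem_toSubmodule B).eq] at this
    · rw [mul_add]
      exact add_mem hy hz

theorem inv_mul_eq_smul {g : Rˣ} {x : R} {c : 𝕜} (hc : c ≠ 0) (h : (g : R) * x = c • (x * g)) :
    (↑g⁻¹ : R) * x = c⁻¹ • (x * ↑g⁻¹) := by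
  rw [eq_inv_smul_iff₀ hc, ← Units.mul_right_inj g, mul_smul_comm, Units.mul_inv_cancel_left,
    ← mul_assoc, h, smul_mul_assoc, mul_assoc, Units.mul_inv, mul_one]

theorem pow_mul_eq_smul {g x : R} {c : 𝕜} (h : g * x = c • (x * g)) (m : ℕ) :
    g ^ m * x = c ^ m • (x * g ^ m) := by
  induction m with
  | zero => simp only [pow_zero, one_mul, mul_one, one_smul]
  | succ m ih =>
    rw [pow_succ', mul_assoc, ih, mul_smul_comm, ← mul_assoc, h, smul_mul_assoc, smul_smul,
      mul_assoc, pow_succ]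

theorem mul_pow_eq_smul {g x : R} {c : 𝕜} (h : g * x = c • (x * g)) (m : ℕ) :
    g * x ^ m = c ^ m • (x ^ m * g) := by
  induction m with
  | zero => simp only [pow_zero, one_mul, mul_one, one_smul]
  | succ m ih =>
    rw [pow_succ, ← mul_assoc, ih, smul_mul_assoc, mul_assoc, h, mul_smul_comm, smul_smul,
      mul_assoc, pow_succ]

theorem mul_pow_of_mul_eq_smul {g x : R} {c : 𝕜} (h : g * x = c • (x * g)) (m : ℕ) :
    (x * g) ^ m = c ^ m.choose 2 • (x ^ m * g ^ m) := by
  induction m with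
  | zero => simp
  | succ m ih =>
    calc (x * g) ^ (m + 1) = c ^ m.choose 2 • (x ^ m * (g ^ m * x) * g) := by
          rw [pow_succ, ih, smul_mul_assoc]; simp only [mul_assoc]
      _ = c ^ (m + 1).choose 2 • (x ^ (m + 1) * g ^ (m + 1)) := by
          rw [pow_mul_eq_smul h, mul_smul_comm, smul_mul_assoc, smul_smul, ← pow_add,
            Nat.choose_succ_succ' m 1, Nat.choose_one_right, add_comm m, pow_succ x, pow_succ g]
          simp only [mul_assoc]

theorem choose_two_add (k l : ℕ) :
    (k + l).choose 2 = k.choose 2 + l.choose 2 + k * l := by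
  induction l with
  | zero => simp
  | succ l ih =>
    rw [← add_assoc, Nat.choose_succ_succ' _ 1, Nat.choose_succ_succ' l 1, ih,
      Nat.choose_one_right, Nat.choose_one_right]
    ring

/-- The left-hand side `∑ₖ (-1)ᵏ [r k] x^{r-k} y xᵏ` of the quantum Serre relation. -/
noncomputable def serreSum {R : Type*} [Ring R] [Algebra ℂ R] (t : ℂ) (r : ℕ) (x y : R) : R :=
  ∑ k ∈ Finset.range (r + 1), ((-1 : ℂ) ^ k * qbinom t r k) • (x ^ (r - k) * y * x ^ k)

theorem pow_mul_mul_pow_of_mul_eq_smul {g h x y : R} {α β : 𝕜} (hx : g * x = α • (x * g))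
    (hy : g * y = β • (y * g)) (hhx : h * x = β • (x * h)) (hgh : g * h = h * g) (k l : ℕ) :
    (x * g) ^ k * (y * h) * (x * g) ^ l =
      (α ^ (k + l).choose 2 * β ^ (k + l)) • (x ^ k * y * x ^ l * (g ^ (k + l) * h)) := by
  have hgkxl : g ^ k * x ^ l = (α ^ k) ^ l • (x ^ l * g ^ k) :=
    mul_pow_eq_smul (pow_mul_eq_smul hx k) l
  calc (x * g) ^ k * (y * h) * (x * g) ^ l
      = (α ^ k.choose 2 * α ^ l.choose 2) • (x ^ k * (g ^ k * y) * (h * x ^ l) * g ^ l) := by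
        rw [mul_pow_of_mul_eq_smul hx, mul_pow_of_mul_eq_smul hx, smul_mul_assoc, smul_mul_assoc,
          mul_smul_comm, smul_smul]
        simp only [mul_assoc]
    _ = (α ^ k.choose 2 * α ^ l.choose 2 * β ^ k * β ^ l) •
          (x ^ k * y * (g ^ k * x ^ l) * h * g ^ l) := by
        rw [pow_mul_eq_smul hy, mul_pow_eq_smul hhx]
        simp only [mul_smul_comm, smul_mul_assoc, smul_smul, mul_assoc, mul_comm (β ^ k)]
    _ = _ := by
        rw [hgkxl, choose_two_add, pow_add α, pow_add α, pow_add β, pow_mul, pow_add g,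
          mul_assoc (g ^ k) (g ^ l), (show Commute g h from hgh).pow_left l]
        simp only [mul_smul_comm, smul_mul_assoc, smul_smul, mul_assoc]
        congr 1
        ring

theorem qbinom_sub (t : ℂ) {r k : ℕ} (hk : k ≤ r) : qbinom t r (r - k) = qbinom t r k := by
  rw [qbinom, qbinom, Nat.sub_sub_self hk, mul_comm]

theorem serreSum_op {R : Type*} [Ring R] [Algebra ℂ R] (t : ℂ) (r : ℕ) (x y : R) :
    serreSum t r (MulOpposite.op x) (MulOpposite.op y) =
      (-1 : ℂ) ^ r • MulOpposite.op (serreSum t r x y) := by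
  rw [serreSum, serreSum, ← Finset.sum_range_reflect, Finset.op_sum, Finset.smul_sum]
  refine Finset.sum_congr rfl fun k hk => ?_
  have hk : k ≤ r := Nat.lt_succ_iff.mp (Finset.mem_range.mp hk)
  have h_sign : (-1 : ℂ) ^ (r - k) = (-1) ^ r * (-1) ^ k := by
    rw [← pow_add, ← Nat.sub_add_cancel hk, Nat.add_sub_cancel, add_assoc, pow_add _ _ (k + k),
      Even.neg_one_pow ⟨k, rfl⟩, mul_one]
  rw [Nat.add_sub_cancel, Nat.sub_sub_self hk, qbinom_sub t hk, h_sign, MulOpposite.op_smul,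
    smul_smul, mul_assoc]
  simp only [MulOpposite.op_mul, MulOpposite.op_pow, mul_assoc]

theorem serreSum_smul_mul {R : Type*} [Ring R] [Algebra ℂ R] {g h x y : R} {α β : ℂ}
    (hx : g * x = α • (x * g)) (hy : g * y = β • (y * g)) (hhx : h * x = β • (x * h))
    (hgh : g * h = h * g) (lam mu t : ℂ) (r : ℕ) :
    serreSum t r (lam • (x * g)) (mu • (y * h)) =
      (lam ^ r * mu * α ^ r.choose 2 * β ^ r) • (serreSum t r x y * (g ^ r * h)) := by
  rw [serreSum, serreSum, Finset.sum_mul, Finset.smul_sum]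
  refine Finset.sum_congr rfl fun k hk => ?_
  have hkr : r - k + k = r := Nat.sub_add_cancel (Nat.lt_succ_iff.mp (Finset.mem_range.mp hk))
  have h_term := pow_mul_mul_pow_of_mul_eq_smul hx hy hhx hgh (r - k) k
  rw [hkr] at h_term
  rw [smul_pow, smul_pow, smul_mul_smul_comm, smul_mul_smul_comm, h_term, smul_mul_assoc]
  simp only [smul_smul]
  congr 1
  calc _ = (-1) ^ k * qbinom t r k * (lam ^ (r - k) * lam ^ k * mu * (α ^ r.choose 2 * β ^ r)) := by
        ring
    _ = _ := by rw [← pow_add, hkr]; ring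

theorem zpow_injective_of_transcendental {q : 𝕜} [Algebra ℚ 𝕜] (hq : Transcendental ℚ q) :
    Function.Injective fun m : ℤ => q ^ m := by
  have hq0 : q ≠ 0 := by rintro rfl; exact hq isAlgebraic_zero
  have pow_ne_one : ∀ k : ℕ, q ^ k = 1 → k = 0 := by
    intro k hk
    by_contra hk0
    refine hq ⟨Polynomial.X ^ k - Polynomial.C 1, Polynomial.X_pow_sub_C_ne_zero
      (Nat.pos_of_ne_zero hk0) 1, ?_⟩
    simp [hk]
  intro m m' (h : q ^ m = q ^ m')
  have h1 : q ^ (m - m') = 1 := by rw [zpow_sub₀ hq0, h, div_self (zpow_ne_zero _ hq0)]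
  refine sub_eq_zero.mp (Int.natAbs_eq_zero.mp (pow_ne_one _ ?_))
  rcases Int.natAbs_eq (m - m') with h' | h' <;> rw [h'] at h1
  · exact_mod_cast h1
  · rwa [zpow_neg, inv_eq_one, zpow_natCast] at h1

end Algebra

/-- The Hopf algebra `U_q(𝔤)`, presented by `UqRels`, for a symmetrisable Cartan matrix `a` and a
non-zero `q` that is not a root of unity. -/
structure QuantizedEnveloping (q : ℂ) {n : ℕ} (a : Fin n → Fin n → ℤ) (d : Fin n → ℕ) where
  zpow_injective : Function.Injective fun m : ℤ => q ^ m
  diag : ∀ i, a i i = 2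
  d_pos : ∀ i, 0 < d i
  symm : ∀ i j, (d i : ℤ) * a i j = (d j : ℤ) * a j i
  U : Type
  [ring : Ring U]
  [algebra : Algebra ℂ U]
  E : Fin n → U
  F : Fin n → U
  K : Fin n → Uˣ
  rels : UqRels q a d U E F K
  universal : ∀ (B : Type) [Ring B] [Algebra ℂ B] (E' F' : Fin n → B) (K' : Fin n → Bˣ),
    UqRels q a d B E' F' K' → ∃! φ : U →ₐ[ℂ] B,
      (∀ i, φ (E i) = E' i) ∧ (∀ i, φ (F i) = F' i) ∧ (∀ i, φ (K i : U) = (K' i : B))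
  Δ : U →ₐ[ℂ] U ⊗[ℂ] U
  ε : U →ₐ[ℂ] ℂ
  Δ_E : ∀ i, Δ (E i) = E i ⊗ₜ 1 + (K i : U) ⊗ₜ E i
  Δ_F : ∀ i, Δ (F i) = F i ⊗ₜ (((K i)⁻¹ : Uˣ) : U) + 1 ⊗ₜ F i
  Δ_K : ∀ i, Δ (K i : U) = (K i : U) ⊗ₜ (K i : U)
  ε_E : ∀ i, ε (E i) = 0
  ε_F : ∀ i, ε (F i) = 0
  ε_K : ∀ i, ε (K i : U) = 1

attribute [instance] QuantizedEnveloping.ring QuantizedEnveloping.algebra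

namespace QuantizedEnveloping

variable {q : ℂ} {n : ℕ} {a : Fin n → Fin n → ℤ} {d : Fin n → ℕ}

section Generators

variable (H : QuantizedEnveloping q a d)

theorem uqRels_of_injective {B C : Type} [Ring B] [Algebra ℂ B] [Ring C] [Algebra ℂ C]
    {f : B →ₐ[ℂ] C} (hf : Function.Injective f) {E F : Fin n → B} {K : Fin n → Bˣ}
    (h : UqRels q a d C (f ∘ E) (f ∘ F) (fun i => Units.map (f : B →* C) (K i))) :
    UqRels q a d B E F K := by
  obtain ⟨hKK, hKE, hKF, hEF, hEE, hFF⟩ := h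
  refine ⟨fun i j => hf ?_, fun i j => hf ?_, fun i j => hf ?_, fun i j => hf ?_,
    fun i j hij => hf ?_, fun i j hij => hf ?_⟩
  · simpa using hKK i j
  · simpa using hKE i j
  · simpa using hKF i j
  · have := hEF i j
    split_ifs at this ⊢ <;> simpa using this
  · simpa using hEE i j hij
  · simpa using hFF i j hij

include H in
theorem q_ne_zero : q ≠ 0 := by
  rintro rfl
  exact absurd (@H.zpow_injective 1 2 (by simp)) (by norm_num)

/-- The subalgebra `U⁰`. -/
def cartan : Subalgebra ℂ H.U :=
  Algebra.adjoin ℂ (Set.range (fun i => (H.K i : H.U)) ∪ Set.range fun i => (↑(H.K i)⁻¹ : H.U))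

/-- The subalgebra `U⁺`. -/
def upper : Subalgebra ℂ H.U := Algebra.adjoin ℂ (Set.range H.E)

/-- The subalgebra `U⁻`. -/
def lower : Subalgebra ℂ H.U := Algebra.adjoin ℂ (Set.range H.F)

theorem K_mem_cartan (i : Fin n) : (H.K i : H.U) ∈ H.cartan :=
  Algebra.subset_adjoin (.inl ⟨i, rfl⟩)

theorem K_inv_mem_cartan (i : Fin n) : (↑(H.K i)⁻¹ : H.U) ∈ H.cartan :=
  Algebra.subset_adjoin (.inr ⟨i, rfl⟩)

theorem E_mem_upper (i : Fin n) : H.E i ∈ H.upper := Algebra.subset_adjoin ⟨i, rfl⟩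

theorem F_mem_lower (i : Fin n) : H.F i ∈ H.lower := Algebra.subset_adjoin ⟨i, rfl⟩

theorem eq_top_of_generators_mem {B : Subalgebra ℂ H.U} (hE : ∀ i, H.E i ∈ B)
    (hF : ∀ i, H.F i ∈ B) (hK : ∀ i, (H.K i : H.U) ∈ B) (hK' : ∀ i, (↑(H.K i)⁻¹ : H.U) ∈ B) :
    B = ⊤ := by
  let K' : Fin n → Bˣ := fun i =>
    ⟨⟨H.K i, hK i⟩, ⟨↑(H.K i)⁻¹, hK' i⟩, by ext; simp, by ext; simp⟩
  have h_map : (fun i => Units.map (B.val : B →* H.U) (K' i)) = H.K := by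
    funext i
    ext
    rfl
  have h_rels : UqRels q a d B (fun i => ⟨H.E i, hE i⟩) (fun i => ⟨H.F i, hF i⟩) K' :=
    uqRels_of_injective (f := B.val) Subtype.val_injective (h_map ▸ H.rels)
  obtain ⟨φ, ⟨hφE, hφF, hφK⟩, -⟩ := H.universal B _ _ _ h_rels
  have h_id : B.val.comp φ = AlgHom.id ℂ H.U := by
    refine (H.universal H.U H.E H.F H.K H.rels).unique ⟨fun i => ?_, fun i => ?_, fun i => ?_⟩
      ⟨fun _ => rfl, fun _ => rfl, fun _ => rfl⟩
    · simp [hφE]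
    · simp [hφF]
    · simp [hφK, K']
  refine eq_top_iff.mpr fun u _ => ?_
  have hu : (φ u : H.U) = u := DFunLike.congr_fun h_id u
  exact hu ▸ (φ u).2

@[elab_as_elim]
theorem induction_on {p : H.U → Prop} (u : H.U) (E : ∀ i, p (H.E i)) (F : ∀ i, p (H.F i))
    (K : ∀ i, p (H.K i)) (K_inv : ∀ i, p ↑(H.K i)⁻¹)
    (algebraMap : ∀ r, p (algebraMap ℂ H.U r)) (add : ∀ u v, p u → p v → p (u + v))
    (mul : ∀ u v, p u → p v → p (u * v)) : p u := by
  let B : Subalgebra ℂ H.U :=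
    { carrier := {u | p u}
      mul_mem' := mul _ _
      add_mem' := add _ _
      algebraMap_mem' := algebraMap }
  have hB : B = ⊤ := H.eq_top_of_generators_mem E F K K_inv
  exact (hB ▸ Algebra.mem_top : u ∈ B)

theorem K_mul_K (i j : Fin n) : (H.K i : H.U) * H.K j = H.K j * H.K i := H.rels.1 i j

theorem K_mul_E (i j : Fin n) :
    (H.K i : H.U) * H.E j = q ^ ((d i : ℤ) * a i j) • (H.E j * H.K i) := H.rels.2.1 i j

theorem K_mul_F (i j : Fin n) :
    (H.K i : H.U) * H.F j = q ^ (-((d i : ℤ) * a i j)) • (H.F j * H.K i) := H.rels.2.2.1 i j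

theorem E_mul_F_sub (i j : Fin n) : H.E i * H.F j - H.F j * H.E i =
    if i = j then (q ^ (d i : ℤ) - q ^ (-(d i : ℤ)))⁻¹ • ((H.K i : H.U) - ↑(H.K i)⁻¹) else 0 :=
  H.rels.2.2.2.1 i j

theorem K_inv_mul_E (i j : Fin n) :
    (↑(H.K i)⁻¹ : H.U) * H.E j = q ^ (-((d i : ℤ) * a i j)) • (H.E j * ↑(H.K i)⁻¹) := by
  rw [zpow_neg]
  exact inv_mul_eq_smul (zpow_ne_zero _ H.q_ne_zero) (H.K_mul_E i j)

theorem K_inv_mul_F (i j : Fin n) :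
    (↑(H.K i)⁻¹ : H.U) * H.F j = q ^ ((d i : ℤ) * a i j) • (H.F j * ↑(H.K i)⁻¹) := by
  rw [← neg_neg ((d i : ℤ) * a i j), zpow_neg]
  exact inv_mul_eq_smul (zpow_ne_zero _ H.q_ne_zero) (H.K_mul_F i j)

end Generators

section Triangular

variable (H : QuantizedEnveloping q a d)

theorem cartan_mul_lower_le :
    H.cartan.toSubmodule * H.lower.toSubmodule ≤ H.lower.toSubmodule * H.cartan.toSubmodule := by
  refine adjoin_mul_adjoin_le ?_
  rintro _ (⟨i, rfl⟩ | ⟨i, rfl⟩) _ ⟨j, rfl⟩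
  · exact ⟨_, H.K_mul_F i j⟩
  · exact ⟨_, H.K_inv_mul_F i j⟩

theorem E_mul_K (i j : Fin n) :
    H.E j * H.K i = q ^ (-((d i : ℤ) * a i j)) • ((H.K i : H.U) * H.E j) := by
  rw [zpow_neg, H.K_mul_E, inv_smul_smul₀ (zpow_ne_zero _ H.q_ne_zero)]

theorem E_mul_K_inv (i j : Fin n) :
    H.E j * ↑(H.K i)⁻¹ = q ^ ((d i : ℤ) * a i j) • ((↑(H.K i)⁻¹ : H.U) * H.E j) := by
  rw [H.K_inv_mul_E, zpow_neg, smul_inv_smul₀ (zpow_ne_zero _ H.q_ne_zero)]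

theorem upper_mul_cartan_le :
    H.upper.toSubmodule * H.cartan.toSubmodule ≤ H.cartan.toSubmodule * H.upper.toSubmodule := by
  refine adjoin_mul_adjoin_le ?_
  rintro _ ⟨j, rfl⟩ _ (⟨i, rfl⟩ | ⟨i, rfl⟩)
  · exact ⟨_, H.E_mul_K i j⟩
  · exact ⟨_, H.E_mul_K_inv i j⟩

theorem E_mul_sub_mul_E_mem (i : Fin n) {f : H.U} (hf : f ∈ H.lower) :
    H.E i * f - f * H.E i ∈ H.lower.toSubmodule * H.cartan.toSubmodule := by
  set L := H.lower.toSubmodule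
  set C := H.cartan.toSubmodule
  have hLL : L * L = L := Subalgebra.isIdempotentElem_toSubmodule _
  induction hf using Algebra.adjoin_induction with
  | mem f hf =>
    obtain ⟨j, rfl⟩ := hf
    have h_mem : (H.K i : H.U) - ↑(H.K i)⁻¹ ∈ H.cartan :=
      sub_mem (H.K_mem_cartan i) (H.K_inv_mem_cartan i)
    rw [H.E_mul_F_sub, ← one_mul (ite _ _ _)]
    refine Submodule.mul_mem_mul (one_mem H.lower) ?_
    split_ifs
    · exact H.cartan.smul_mem h_mem _
    · exact zero_mem _
  | algebraMap r => rw [Algebra.commutes, sub_self]; exact zero_mem _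
  | add f g _ _ hf hg =>
    rw [mul_add, add_mul, add_sub_add_comm]
    exact add_mem hf hg
  | mul f g hfL hgL hf hg =>
    have h_left : (H.E i * f - f * H.E i) * g ∈ L * C := by
      have h_le : L * C * L ≤ L * C := by
        calc L * C * L = L * (C * L) := mul_assoc _ _ _
          _ ≤ L * (L * C) := mul_le_mul_right H.cartan_mul_lower_le _
          _ = L * C := by rw [← mul_assoc, hLL]
      exact h_le (Submodule.mul_mem_mul hf hgL)
    have h_right : f * (H.E i * g - g * H.E i) ∈ L * C := by
      have h_le : L * (L * C) = L * C := by rw [← mul_assoc, hLL]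
      exact h_le ▸ Submodule.mul_mem_mul hfL hg
    convert add_mem h_left h_right using 1
    noncomm_ring

/-- The span `U⁻U⁰U⁺` of all products `f k e`; it is all of `U_q(𝔤)`. -/
def triangular : Submodule ℂ H.U :=
  H.lower.toSubmodule * H.cartan.toSubmodule * H.upper.toSubmodule

theorem lower_mul_triangular_le : H.lower.toSubmodule * H.triangular ≤ H.triangular := by
  rw [triangular, ← mul_assoc, ← mul_assoc,
    (Subalgebra.isIdempotentElem_toSubmodule H.lower).eq]

theorem cartan_mul_triangular_le : H.cartan.toSubmodule * H.triangular ≤ H.triangular := by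
  set L := H.lower.toSubmodule
  set C := H.cartan.toSubmodule
  set P := H.upper.toSubmodule
  calc C * (L * C * P) = C * L * (C * P) := by simp only [mul_assoc]
    _ ≤ L * C * (C * P) := mul_le_mul_left H.cartan_mul_lower_le _
    _ = L * (C * C) * P := by simp only [mul_assoc]
    _ = L * C * P := by rw [(Subalgebra.isIdempotentElem_toSubmodule H.cartan).eq]

theorem E_mul_mem_triangular (i : Fin n) {x : H.U} (hx : x ∈ H.triangular) :
    H.E i * x ∈ H.triangular := by
  unfold triangular at hx ⊢
  set L := H.lower.toSubmodule
  set C := H.cartan.toSubmodule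
  set P := H.upper.toSubmodule
  have upper_mul_le : P * (C * P) ≤ C * P := by
    calc P * (C * P) = P * C * P := (mul_assoc _ _ _).symm
      _ ≤ C * P * P := mul_le_mul_left H.upper_mul_cartan_le _
      _ = C * P := by rw [mul_assoc, (Subalgebra.isIdempotentElem_toSubmodule H.upper).eq]
  rw [mul_assoc] at hx
  refine Submodule.mul_induction_on hx (fun f hf y hy => ?_) fun y z hy hz => ?_
  · have h_comm : (H.E i * f - f * H.E i) * y ∈ L * C * P := by
      have := Submodule.mul_mem_mul (H.E_mul_sub_mul_E_mem i hf) hy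
      rwa [mul_assoc, ← mul_assoc C, (Subalgebra.isIdempotentElem_toSubmodule H.cartan).eq,
        ← mul_assoc] at this
    have h_pass : f * (H.E i * y) ∈ L * C * P := by
      rw [mul_assoc]
      exact Submodule.mul_mem_mul hf
        (upper_mul_le (Submodule.mul_mem_mul (H.E_mem_upper i) hy))
    convert add_mem h_comm h_pass using 1
    noncomm_ring
  · rw [mul_add]
    exact add_mem hy hz

theorem triangular_eq_top : H.triangular = ⊤ := by
  have mul_mem : ∀ u : H.U, ∀ x ∈ H.triangular, u * x ∈ H.triangular := by
    intro u
    induction u using H.induction_on with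
    | E i => exact fun x => H.E_mul_mem_triangular i
    | F i =>
      exact fun x hx => H.lower_mul_triangular_le (Submodule.mul_mem_mul (H.F_mem_lower i) hx)
    | K i =>
      exact fun x hx => H.cartan_mul_triangular_le (Submodule.mul_mem_mul (H.K_mem_cartan i) hx)
    | K_inv i =>
      exact fun x hx => H.cartan_mul_triangular_le
        (Submodule.mul_mem_mul (H.K_inv_mem_cartan i) hx)
    | algebraMap r =>
      intro x hx
      rw [← Algebra.smul_def]
      exact H.triangular.smul_mem r hx
    | add u v hu hv => intro x hx; rw [add_mul]; exact add_mem (hu x hx) (hv x hx)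
    | mul u v hu hv => intro x hx; rw [mul_assoc]; exact hu _ (hv x hx)
  have one_mem : (1 : H.U) ∈ H.triangular := by
    have h1 (A : Subalgebra ℂ H.U) : (1 : H.U) ∈ A.toSubmodule := one_mem A
    have := Submodule.mul_mem_mul (Submodule.mul_mem_mul (h1 H.lower) (h1 H.cartan)) (h1 H.upper)
    rwa [one_mul, one_mul] at this
  exact eq_top_iff.mpr fun u _ => mul_one u ▸ mul_mem u 1 one_mem

theorem triangular_induction {p : H.U → Prop}
    (mul : ∀ f ∈ H.lower, ∀ k ∈ H.cartan, ∀ e ∈ H.upper, p (f * k * e))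
    (add : ∀ u v, p u → p v → p (u + v)) (u : H.U) : p u := by
  have hu : u ∈ H.triangular := H.triangular_eq_top ▸ Submodule.mem_top
  refine Submodule.mul_induction_on hu (fun x hx e he => ?_) add
  refine Submodule.mul_induction_on hx (fun f hf k hk => mul f hf k hk e he) fun x y hx hy => ?_
  rw [add_mul]
  exact add _ _ hx hy

end Triangular

section Antipode

variable (H : QuantizedEnveloping q a d)

open MulOpposite

theorem commute_K_inv_K (i j : Fin n) : Commute (↑(H.K i)⁻¹ : H.U) (H.K j : H.U) :=
  Commute.units_inv_left (H.K_mul_K i j)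

theorem commute_K_inv_K_inv (i j : Fin n) : Commute (↑(H.K i)⁻¹ : H.U) (↑(H.K j)⁻¹ : H.U) :=
  Commute.units_inv_right (H.commute_K_inv_K i j)

theorem K_inv_mul_E_mul_F (i j : Fin n) : H.F j * H.K j * (↑(H.K i)⁻¹ * H.E i) =
    ↑(H.K i)⁻¹ * (H.F j * H.E i) * H.K j := by
  calc H.F j * H.K j * (↑(H.K i)⁻¹ * H.E i)
      = H.F j * ↑(H.K i)⁻¹ * (H.K j * H.E i) := by
        rw [mul_assoc, ← mul_assoc (H.K j : H.U), ← (H.commute_K_inv_K i j).eq]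
        simp only [mul_assoc]
    _ = (↑(H.K i)⁻¹ * H.F j) * (H.E i * H.K j) := by
        rw [H.K_mul_E, H.K_inv_mul_F, H.symm, mul_smul_comm, smul_mul_assoc]
    _ = _ := by simp only [mul_assoc]

theorem serreSum_E_antipode {i j : Fin n} (hij : i ≠ j) :
    serreSum (q ^ (d i : ℤ)) (1 - a i j).toNat (-(↑(H.K i)⁻¹ * H.E i)) (-(↑(H.K j)⁻¹ * H.E j)) =
      0 := by
  rw [H.K_inv_mul_E, H.K_inv_mul_E, ← neg_smul, ← neg_smul,
    serreSum_smul_mul (H.K_inv_mul_E i i) (H.K_inv_mul_E i j)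
      (H.symm i j ▸ H.K_inv_mul_E j i) (H.commute_K_inv_K_inv i j)]
  have : serreSum (q ^ (d i : ℤ)) (1 - a i j).toNat (H.E i) (H.E j) = 0 :=
    H.rels.2.2.2.2.1 i j hij
  rw [this, zero_mul, smul_zero]

theorem serreSum_F_antipode {i j : Fin n} (hij : i ≠ j) :
    serreSum (q ^ (d i : ℤ)) (1 - a i j).toNat (-(H.F i * H.K i)) (-(H.F j * H.K j)) = 0 := by
  rw [← neg_one_smul ℂ (H.F i * _), ← neg_one_smul ℂ (H.F j * _),
    serreSum_smul_mul (H.K_mul_F i i) (H.K_mul_F i j)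
      (H.symm i j ▸ H.K_mul_F j i) (H.K_mul_K i j)]
  have : serreSum (q ^ (d i : ℤ)) (1 - a i j).toNat (H.F i) (H.F j) = 0 :=
    H.rels.2.2.2.2.2 i j hij
  rw [this, zero_mul, smul_zero]

theorem uqRels_antipode : UqRels q a d H.Uᵐᵒᵖ (fun i => op (-(↑(H.K i)⁻¹ * H.E i)))
    (fun i => op (-(H.F i * H.K i))) (fun i => Units.opEquiv.symm (op (H.K i)⁻¹)) := by
  refine ⟨fun i j => unop_injective (H.commute_K_inv_K_inv j i),
    fun i j => unop_injective ?_, fun i j => unop_injective ?_, fun i j => unop_injective ?_,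
    fun i j hij => ?_, fun i j hij => ?_⟩
  · change -(↑(H.K j)⁻¹ * H.E j) * ↑(H.K i)⁻¹ =
      q ^ ((d i : ℤ) * a i j) • (↑(H.K i)⁻¹ * -(↑(H.K j)⁻¹ * H.E j))
    rw [neg_mul, mul_assoc, H.E_mul_K_inv, mul_neg, smul_neg, mul_smul_comm, ← mul_assoc,
      ← mul_assoc, (H.commute_K_inv_K_inv i j).eq]
  · change -(H.F j * H.K j) * ↑(H.K i)⁻¹ =
      q ^ (-((d i : ℤ) * a i j)) • (↑(H.K i)⁻¹ * -(H.F j * H.K j))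
    rw [mul_neg, ← mul_assoc, H.K_inv_mul_F, smul_mul_assoc, smul_neg, smul_smul, zpow_neg,
      inv_mul_cancel₀ (zpow_ne_zero _ H.q_ne_zero), one_smul, mul_assoc,
      (H.commute_K_inv_K i j).eq, neg_mul, mul_assoc]
  · have h_sandwich : -(H.F j * H.K j) * -(↑(H.K i)⁻¹ * H.E i) -
        -(↑(H.K i)⁻¹ * H.E i) * -(H.F j * H.K j) =
        -(↑(H.K i)⁻¹ * (H.E i * H.F j - H.F j * H.E i) * H.K j) := by
      rw [neg_mul_neg, neg_mul_neg, H.K_inv_mul_E_mul_F]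
      noncomm_ring
    refine h_sandwich.trans ?_
    rw [H.E_mul_F_sub]
    split_ifs with hij
    · subst hij
      rw [mul_smul_comm, smul_mul_assoc, mul_sub, sub_mul, Units.inv_mul, one_mul,
        Units.inv_mul_cancel_right, ← smul_neg, neg_sub]
      rfl
    · rw [mul_zero, zero_mul, neg_zero]
      rfl
  · change serreSum _ _ _ _ = _
    rw [serreSum_op, H.serreSum_E_antipode hij, op_zero, smul_zero]
  · change serreSum _ _ _ _ = _
    rw [serreSum_op, H.serreSum_F_antipode hij, op_zero, smul_zero]

/-- The antipode of `U_q(𝔤)`, as an algebra map to the opposite algebra. -/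
noncomputable def antipodeOp : H.U →ₐ[ℂ] H.Uᵐᵒᵖ :=
  (H.universal _ _ _ _ H.uqRels_antipode).choose

/-- The antipode of `U_q(𝔤)`. -/
noncomputable def S : H.U →ₗ[ℂ] H.U :=
  (opLinearEquiv ℂ).symm.toLinearMap ∘ₗ H.antipodeOp.toLinearMap

theorem S_one : H.S 1 = 1 := congrArg unop (map_one H.antipodeOp)

theorem S_mul (u v : H.U) : H.S (u * v) = H.S v * H.S u :=
  congrArg unop (map_mul H.antipodeOp u v)

theorem S_E (i : Fin n) : H.S (H.E i) = -(↑(H.K i)⁻¹ * H.E i) :=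
  congrArg unop ((H.universal _ _ _ _ H.uqRels_antipode).choose_spec.1.1 i)

theorem S_F (i : Fin n) : H.S (H.F i) = -(H.F i * H.K i) :=
  congrArg unop ((H.universal _ _ _ _ H.uqRels_antipode).choose_spec.1.2.1 i)

theorem S_K (i : Fin n) : H.S (H.K i) = ↑(H.K i)⁻¹ :=
  congrArg unop ((H.universal _ _ _ _ H.uqRels_antipode).choose_spec.1.2.2 i)

theorem S_K_inv (i : Fin n) : H.S ↑(H.K i)⁻¹ = H.K i := by
  have h : H.S ↑(H.K i)⁻¹ * ↑(H.K i)⁻¹ = 1 := by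
    nth_rw 2 [← H.S_K]
    rw [← H.S_mul, Units.mul_inv, S_one]
  rw [← Units.mul_left_inj (H.K i)⁻¹, h, Units.mul_inv]

theorem Δ_K_inv (i : Fin n) : H.Δ ↑(H.K i)⁻¹ = (↑(H.K i)⁻¹ : H.U) ⊗ₜ (↑(H.K i)⁻¹ : H.U) := by
  refine left_inv_eq_right_inv (a := H.Δ (H.K i)) ?_ ?_
  · rw [← map_mul, Units.inv_mul, map_one]
  · rw [H.Δ_K, Algebra.TensorProduct.tmul_mul_tmul, Units.mul_inv,
      Algebra.TensorProduct.one_def]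

theorem ε_K_inv (i : Fin n) : H.ε ↑(H.K i)⁻¹ = 1 := by
  have := map_mul H.ε (H.K i : H.U) ↑(H.K i)⁻¹
  rwa [Units.mul_inv, map_one, H.ε_K, one_mul, eq_comm] at this

/-- The linear map `x ⊗ y ↦ S x * y`. -/
noncomputable def antipodeMul : H.U ⊗[ℂ] H.U →ₗ[ℂ] H.U :=
  LinearMap.mul' ℂ H.U ∘ₗ TensorProduct.map H.S LinearMap.id

theorem antipodeMul_tmul (x y : H.U) : H.antipodeMul (x ⊗ₜ y) = H.S x * y := rfl

theorem antipodeMul_mul_tmul (t : H.U ⊗[ℂ] H.U) (x y : H.U) :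
    H.antipodeMul (t * x ⊗ₜ y) = H.S x * H.antipodeMul t * y := by
  induction t using TensorProduct.induction_on with
  | zero => simp
  | tmul u v =>
    rw [Algebra.TensorProduct.tmul_mul_tmul, antipodeMul_tmul, antipodeMul_tmul, S_mul]
    simp only [mul_assoc]
  | add s t hs ht => rw [add_mul, map_add, hs, ht, map_add, mul_add, add_mul]

theorem antipodeMul_mul {t : H.U ⊗[ℂ] H.U} {c : ℂ} (ht : H.antipodeMul t = algebraMap ℂ H.U c)
    (t' : H.U ⊗[ℂ] H.U) : H.antipodeMul (t * t') = c • H.antipodeMul t' := by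
  induction t' using TensorProduct.induction_on with
  | zero => simp
  | tmul u v =>
    rw [antipodeMul_mul_tmul, ht, antipodeMul_tmul, ← Algebra.commutes, mul_assoc, Algebra.smul_def]
  | add s s' hs hs' => rw [mul_add, map_add, hs, hs', map_add, smul_add]

theorem antipodeMul_Δ (u : H.U) : H.antipodeMul (H.Δ u) = algebraMap ℂ H.U (H.ε u) := by
  induction u using H.induction_on with
  | E i =>
    rw [H.Δ_E, map_add, antipodeMul_tmul, antipodeMul_tmul, S_E, S_K, H.ε_E, map_zero, mul_one,
      neg_add_cancel]
  | F i =>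
    rw [H.Δ_F, map_add, antipodeMul_tmul, antipodeMul_tmul, S_F, S_one, H.ε_F, map_zero, neg_mul,
      mul_assoc, Units.mul_inv, mul_one, one_mul, neg_add_cancel]
  | K i => rw [H.Δ_K, antipodeMul_tmul, S_K, H.ε_K, Units.inv_mul, map_one]
  | K_inv i => rw [Δ_K_inv, antipodeMul_tmul, S_K_inv, ε_K_inv, Units.mul_inv, map_one]
  | algebraMap r =>
    rw [AlgHom.commutes, AlgHom.commutes, Algebra.TensorProduct.algebraMap_apply,
      antipodeMul_tmul, mul_one, Algebra.algebraMap_eq_smul_one, map_smul, S_one]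
    exact (Algebra.algebraMap_eq_smul_one r).symm
  | add u v hu hv => rw [map_add, map_add, map_add, map_add, hu, hv]
  | mul u v hu hv => rw [map_mul, H.antipodeMul_mul hu, hv, Algebra.smul_def, map_mul, map_mul]

/-- The linear map `x ⊗ y ↦ S y ⊗ S x`. -/
noncomputable def antipodeSwap : H.U ⊗[ℂ] H.U →ₗ[ℂ] H.U ⊗[ℂ] H.U :=
  TensorProduct.map H.S H.S ∘ₗ (TensorProduct.comm ℂ H.U H.U).toLinearMap

theorem antipodeSwap_tmul (x y : H.U) : H.antipodeSwap (x ⊗ₜ y) = H.S y ⊗ₜ H.S x := rfl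

theorem antipodeSwap_mul (s t : H.U ⊗[ℂ] H.U) :
    H.antipodeSwap (s * t) = H.antipodeSwap t * H.antipodeSwap s := by
  induction s using TensorProduct.induction_on with
  | zero => simp
  | add s s' hs hs' => rw [add_mul, map_add, hs, hs', map_add, mul_add]
  | tmul u v =>
    induction t using TensorProduct.induction_on with
    | zero => simp
    | add s s' hs hs' => rw [mul_add, map_add, hs, hs', map_add, add_mul]
    | tmul u' v' =>
      rw [Algebra.TensorProduct.tmul_mul_tmul, antipodeSwap_tmul, antipodeSwap_tmul,
        antipodeSwap_tmul, S_mul, S_mul, Algebra.TensorProduct.tmul_mul_tmul]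

theorem ε_S (u : H.U) : H.ε (H.S u) = H.ε u := by
  induction u using H.induction_on with
  | E i => simp [S_E, H.ε_E]
  | F i => simp [S_F, H.ε_F]
  | K i => rw [S_K, ε_K_inv, H.ε_K]
  | K_inv i => rw [S_K_inv, ε_K_inv, H.ε_K]
  | algebraMap r => rw [Algebra.algebraMap_eq_smul_one, map_smul, S_one]
  | add u v hu hv => rw [map_add, map_add, map_add, hu, hv]
  | mul u v hu hv => rw [S_mul, map_mul, map_mul, hu, hv, mul_comm]

theorem Δ_S (u : H.U) : H.Δ (H.S u) = H.antipodeSwap (H.Δ u) := by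
  induction u using H.induction_on with
  | E i =>
    rw [S_E, map_neg, map_mul, Δ_K_inv, H.Δ_E, map_add, antipodeSwap_tmul, antipodeSwap_tmul,
      S_one, S_E, S_K, mul_add, Algebra.TensorProduct.tmul_mul_tmul,
      Algebra.TensorProduct.tmul_mul_tmul, Units.inv_mul, mul_one, TensorProduct.neg_tmul,
      TensorProduct.tmul_neg, neg_add, add_comm]
  | F i =>
    rw [S_F, map_neg, map_mul, H.Δ_K, H.Δ_F, map_add, antipodeSwap_tmul, antipodeSwap_tmul,
      S_one, S_F, S_K_inv, add_mul, Algebra.TensorProduct.tmul_mul_tmul,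
      Algebra.TensorProduct.tmul_mul_tmul, Units.inv_mul, one_mul, TensorProduct.neg_tmul,
      TensorProduct.tmul_neg, neg_add, add_comm]
  | K i => rw [S_K, Δ_K_inv, H.Δ_K, antipodeSwap_tmul, S_K]
  | K_inv i => rw [S_K_inv, H.Δ_K, Δ_K_inv, antipodeSwap_tmul, S_K_inv]
  | algebraMap r =>
    simp only [Algebra.algebraMap_eq_smul_one, map_smul, S_one, map_one,
      Algebra.TensorProduct.one_def, antipodeSwap_tmul]
  | add u v hu hv => simp only [map_add, hu, hv]
  | mul u v hu hv => rw [S_mul, map_mul, map_mul, antipodeSwap_mul, hu, hv]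

end Antipode

section WeightVector

variable (H : QuantizedEnveloping q a d)
  {V : Type} [AddCommGroup V] [Module ℂ V] {ρ : H.U →ₐ[ℂ] Module.End ℂ V}

theorem mem_wtSp {μ : Fin n → ℤ} {x : V} :
    x ∈ wtSp q d H.K ρ μ ↔ ∀ i, ρ (H.K i) x = q ^ (μ i * d i) • x := by
  simp [wtSp, Submodule.mem_iInf, sub_eq_zero]

include H in
theorem zpow_mul_d_inj {i : Fin n} {m m' : ℤ} : q ^ (m * d i) = q ^ (m' * d i) ↔ m = m' :=
  (H.zpow_injective.eq_iff (a := m * d i)).trans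
    (mul_left_inj' (Int.natCast_ne_zero.mpr (H.d_pos i).ne'))

include H in
theorem weight_injective :
    Function.Injective fun (μ : Fin n → ℤ) i => q ^ (μ i * d i) :=
  fun _ _ h => funext fun i => H.zpow_mul_d_inj.mp (congrFun h i)

theorem simpleRoot_mul (i k : Fin n) : simpleRoot a k i * d i = d i * a i k := mul_comm _ _

theorem E_mem_wtSp {μ : Fin n → ℤ} {x : V} (hx : x ∈ wtSp q d H.K ρ μ) (k : Fin n) :
    ρ (H.E k) x ∈ wtSp q d H.K ρ (μ + simpleRoot a k) := by
  rw [mem_wtSp] at *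
  intro i
  rw [← Module.End.mul_apply, ← map_mul, H.K_mul_E, map_smul, map_mul, LinearMap.smul_apply,
    Module.End.mul_apply, hx, map_smul, smul_smul, ← zpow_add₀ H.q_ne_zero, Pi.add_apply, add_mul,
    simpleRoot_mul, add_comm]

theorem F_mem_wtSp {μ : Fin n → ℤ} {x : V} (hx : x ∈ wtSp q d H.K ρ μ) (k : Fin n) :
    ρ (H.F k) x ∈ wtSp q d H.K ρ (μ - simpleRoot a k) := by
  rw [mem_wtSp] at *
  intro i
  rw [← Module.End.mul_apply, ← map_mul, H.K_mul_F, map_smul, map_mul, LinearMap.smul_apply,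
    Module.End.mul_apply, hx, map_smul, smul_smul, ← zpow_add₀ H.q_ne_zero, Pi.sub_apply, sub_mul,
    simpleRoot_mul, neg_add_eq_sub]

theorem K_inv_apply {μ : Fin n → ℤ} {x : V} (hx : x ∈ wtSp q d H.K ρ μ) (i : Fin n) :
    ρ ↑(H.K i)⁻¹ x = q ^ (-(μ i * d i)) • x := by
  have := H.mem_wtSp.mp hx i
  rw [zpow_neg, eq_inv_smul_iff₀ (zpow_ne_zero _ H.q_ne_zero), ← map_smul, ← this,
    ← Module.End.mul_apply, ← map_mul, Units.inv_mul, map_one, Module.End.one_apply]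

include H in
theorem zpow_sub_zpow_neg_eq_zero {m : ℤ} : q ^ m - q ^ (-m) = 0 ↔ m = 0 := by
  rw [sub_eq_zero, H.zpow_injective.eq_iff (a := m)]
  omega

theorem E_F_apply_self {μ : Fin n → ℤ} {x : V} (hx : x ∈ wtSp q d H.K ρ μ) (i : Fin n) :
    (q ^ (d i : ℤ) - q ^ (-(d i : ℤ))) • ρ (H.E i) (ρ (H.F i) x) =
      (q ^ (d i : ℤ) - q ^ (-(d i : ℤ))) • ρ (H.F i) (ρ (H.E i) x) +
        (q ^ (μ i * d i) - q ^ (-(μ i * d i))) • x := by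
  have hd : q ^ (d i : ℤ) - q ^ (-(d i : ℤ)) ≠ 0 :=
    mt H.zpow_sub_zpow_neg_eq_zero.mp (Int.natCast_ne_zero.mpr (H.d_pos i).ne')
  have h_comm := congrArg (fun u => ρ u x) (H.E_mul_F_sub i i)
  simp only [if_pos, map_sub, map_mul, map_smul, LinearMap.sub_apply, Module.End.mul_apply,
    LinearMap.smul_apply, H.mem_wtSp.mp hx i, H.K_inv_apply hx i] at h_comm
  rw [← sub_eq_iff_eq_add', ← smul_sub, h_comm, smul_inv_smul₀ hd, sub_smul]

include H in
theorem sub_nsmul_simpleRoot_self (μ : Fin n → ℤ) (i : Fin n) (k : ℕ) :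
    (μ - k • simpleRoot a i) i = μ i - 2 * k := by
  simp [simpleRoot, H.diag, mul_comm]

theorem F_pow_mem_wtSp {μ : Fin n → ℤ} {x : V} (hx : x ∈ wtSp q d H.K ρ μ) (i : Fin n) (k : ℕ) :
    (ρ (H.F i) ^ k) x ∈ wtSp q d H.K ρ (μ - k • simpleRoot a i) := by
  induction k with
  | zero => simpa using hx
  | succ k ih =>
    rw [pow_succ', Module.End.mul_apply, succ_nsmul, ← sub_sub]
    exact H.F_mem_wtSp ih i

include H in
theorem zpow_sub_zpow_neg_mul_add (x y z : ℤ) :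
    (q ^ x - q ^ (-x)) * (q ^ (z - y) - q ^ (-(z - y))) +
        (q ^ y - q ^ (-y)) * (q ^ (z + x) - q ^ (-(z + x))) =
      (q ^ (x + y) - q ^ (-(x + y))) * (q ^ z - q ^ (-z)) := by
  have hq := H.q_ne_zero
  simp only [zpow_neg, zpow_add₀ hq, zpow_sub₀ hq]
  field_simp
  ring

theorem E_F_pow_apply {μ : Fin n → ℤ} {x : V} (hx : x ∈ wtSp q d H.K ρ μ) {i : Fin n}
    (hE : ρ (H.E i) x = 0) (k : ℕ) :
    (q ^ (d i : ℤ) - q ^ (-(d i : ℤ))) ^ 2 • ρ (H.E i) ((ρ (H.F i) ^ (k + 1)) x) =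
      ((q ^ ((k + 1) * d i : ℤ) - q ^ (-((k + 1) * d i) : ℤ)) *
        (q ^ ((μ i - k) * d i) - q ^ (-((μ i - k) * d i)))) • (ρ (H.F i) ^ k) x := by
  induction k with
  | zero =>
    have h_base := H.E_F_apply_self hx i
    rw [hE, map_zero, smul_zero, zero_add] at h_base
    rw [zero_add, pow_one, pow_two, mul_smul, h_base, smul_smul]
    simp
  | succ k ih =>
    have h_step := H.E_F_apply_self (H.F_pow_mem_wtSp hx i (k + 1)) i
    have h_weight : (μ - (k + 1) • simpleRoot a i) i * d i =
        (μ i - (k + 1 : ℕ)) * d i - (k + 1) * d i := by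
      rw [H.sub_nsmul_simpleRoot_self]
      push_cast
      ring
    have h_scalar := H.zpow_sub_zpow_neg_mul_add (d i) ((k + 1) * d i) ((μ i - (k + 1 : ℕ)) * d i)
    rw [← Module.End.mul_apply (ρ (H.F i)), ← pow_succ', h_weight] at h_step
    rw [pow_two, mul_smul, h_step, smul_add, smul_smul, ← pow_two, ← map_smul, ih, map_smul,
      smul_smul, ← Module.End.mul_apply, ← pow_succ', ← add_smul, add_comm]
    convert congrArg (· • (ρ (H.F i) ^ (k + 1)) x) h_scalar using 5 <;> push_cast <;> ring_nf

theorem weight_nonneg_of_E_eq_zero [FiniteDimensional ℂ V] {μ : Fin n → ℤ} {x : V}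
    (hx : x ∈ wtSp q d H.K ρ μ) (hx0 : x ≠ 0) {i : Fin n} (hE : ρ (H.E i) x = 0) : 0 ≤ μ i := by
  have hN : ∃ k, (ρ (H.F i) ^ k) x = 0 := by
    by_contra! h
    refine Set.infinite_of_injective_forall_mem
      (f := fun k : ℕ => q ^ ((μ - k • simpleRoot a i) i * d i)) (fun k k' hk => ?_) (fun k => ?_)
      (Module.End.finite_hasEigenvalue (ρ (H.K i : H.U)))
    · have h_eq := H.zpow_mul_d_inj.mp hk
      simpa only [H.sub_nsmul_simpleRoot_self, sub_right_inj, mul_eq_mul_left_iff,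
        Nat.cast_inj, OfNat.ofNat_ne_zero, or_false] using h_eq
    · exact Module.End.hasEigenvalue_of_hasEigenvector
        ⟨Module.End.mem_eigenspace_iff.mpr (H.mem_wtSp.mp (H.F_pow_mem_wtSp hx i k) i), h k⟩
  classical
  obtain ⟨k, hk⟩ : ∃ k, Nat.find hN = k + 1 :=
    Nat.exists_eq_succ_of_ne_zero fun h0 => hx0 (by simpa [h0] using Nat.find_spec hN)
  have hk_ne : (ρ (H.F i) ^ k) x ≠ 0 := Nat.find_min hN (by omega)
  have h_zero := H.E_F_pow_apply hx hE k
  rw [show (ρ (H.F i) ^ (k + 1)) x = 0 from hk ▸ Nat.find_spec hN, map_zero, smul_zero, eq_comm,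
    smul_eq_zero_iff_left hk_ne, mul_eq_zero, H.zpow_sub_zpow_neg_eq_zero,
    H.zpow_sub_zpow_neg_eq_zero] at h_zero
  have hd : (d i : ℤ) ≠ 0 := Int.natCast_ne_zero.mpr (H.d_pos i).ne'
  rcases h_zero with h | h <;> have := (mul_eq_zero.mp h).resolve_right hd <;> omega

end WeightVector

section HighestWeight

variable (H : QuantizedEnveloping q a d)
  {V V' : Type} [AddCommGroup V] [Module ℂ V] [AddCommGroup V'] [Module ℂ V']

/-- Irreducibility of a representation; the zero module is allowed. -/
def IsIrreducible (ρ : H.U →ₐ[ℂ] Module.End ℂ V) : Prop :=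
  ∀ N : Submodule ℂ V, (∀ u, ∀ v ∈ N, ρ u v ∈ N) → N = ⊥ ∨ N = ⊤

/-- A non-zero vector of weight `μ` killed by every `E i`. -/
def IsHighestWeightVector (ρ : H.U →ₐ[ℂ] Module.End ℂ V) (μ : Fin n → ℤ) (v : V) : Prop :=
  v ≠ 0 ∧ v ∈ wtSp q d H.K ρ μ ∧ ∀ i, ρ (H.E i) v = 0

open Classical in
/-- An upper bound for the space of vectors of weight `μ` in the submodule generated by a highest
weight vector `v` of weight `ν`. -/
noncomputable def weightBound (ρ : H.U →ₐ[ℂ] Module.End ℂ V) (ν : Fin n → ℤ) (v : V)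
    (μ : Fin n → ℤ) : Submodule ℂ V :=
  if μ = ν then ℂ ∙ v else ⨆ _ : ν - μ ∈ positiveCone a, wtSp q d H.K ρ μ

variable {H} {ρ : H.U →ₐ[ℂ] Module.End ℂ V} {ρ' : H.U →ₐ[ℂ] Module.End ℂ V'} {ν μ : Fin n → ℤ}
  {v : V} {v' : V'}

theorem mem_wtSp_of_mem_iSup {N : (Fin n → ℤ) → Submodule ℂ V}
    (hN : ∀ μ, N μ ≤ wtSp q d H.K ρ μ) {x : V} (hxN : x ∈ ⨆ μ, N μ)
    (hx : x ∈ wtSp q d H.K ρ μ) : x ∈ N μ :=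
  mem_of_mem_iSup_of_simultaneous_eigenvectors (f := fun i => ρ (H.K i)) H.weight_injective
    (fun μ _ hy => H.mem_wtSp.mp (hN μ hy)) hxN (H.mem_wtSp.mp hx)

theorem weightBound_self : H.weightBound ρ ν v ν = ℂ ∙ v := if_pos rfl

theorem sub_mem_positiveCone_of_mem_weightBound {x : V} (hx : x ∈ H.weightBound ρ ν v μ)
    (hx0 : x ≠ 0) : ν - μ ∈ positiveCone a := by
  by_contra h
  have hμ : μ ≠ ν := by rintro rfl; exact h (sub_self μ ▸ zero_mem _)
  rw [weightBound, if_neg hμ, iSup_neg h] at hx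
  exact hx0 hx

theorem IsHighestWeightVector.weightBound_le (hv : H.IsHighestWeightVector ρ ν v) :
    H.weightBound ρ ν v μ ≤ wtSp q d H.K ρ μ := by
  unfold weightBound
  split_ifs with h
  · exact h ▸ (Submodule.span_singleton_le_iff_mem _ _).mpr hv.2.1
  · exact iSup_le fun _ => le_rfl

theorem IsHighestWeightVector.F_mem_weightBound (B : WeightForm q a d)
    (hv : H.IsHighestWeightVector ρ ν v) {x : V} (hx : x ∈ H.weightBound ρ ν v μ) (i : Fin n) :
    ρ (H.F i) x ∈ H.weightBound ρ ν v (μ - simpleRoot a i) := by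
  rcases eq_or_ne x 0 with rfl | hx0
  · simp
  have hμ := sub_mem_positiveCone_of_mem_weightBound hx hx0
  have hμi : ν - (μ - simpleRoot a i) ∈ positiveCone a := by
    rw [sub_sub_eq_add_sub, add_sub_right_comm]
    exact add_mem hμ (AddSubmonoid.subset_closure ⟨i, rfl⟩)
  have h_ne : μ - simpleRoot a i ≠ ν := by
    rintro rfl
    have h_pos := B.form_one_simpleRoot_pos H.d_pos i
    have h_nonneg := B.form_nonneg (μ := 1) (fun _ => zero_le_one) hμ
    rw [sub_sub_cancel_left, map_neg] at h_nonneg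
    omega
  rw [weightBound, if_neg h_ne, iSup_pos hμi]
  exact H.F_mem_wtSp (hv.weightBound_le hx) i

theorem IsHighestWeightVector.apply_mem_iSup_weightBound (B : WeightForm q a d)
    (hv : H.IsHighestWeightVector ρ ν v) (u : H.U) : ρ u v ∈ ⨆ μ, H.weightBound ρ ν v μ := by
  induction u using H.triangular_induction with
  | add x y hx hy => rw [map_add]; exact add_mem hx hy
  | mul f hf k hk e he =>
    have hv_mem := Submodule.mem_span_singleton_self (R := ℂ) v
    have he_mem : ρ e v ∈ ℂ ∙ v := by
      refine mem_of_forall_mem_adjoin ρ (Set.forall_mem_range.mpr fun i x hx => ?_) he v hv_mem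
      obtain ⟨c, rfl⟩ := Submodule.mem_span_singleton.mp hx
      rw [map_smul, hv.2.2, smul_zero]
      exact zero_mem _
    have hk_mem : ρ k (ρ e v) ∈ ℂ ∙ v := by
      refine mem_of_forall_mem_adjoin ρ ?_ hk _ he_mem
      rintro _ (⟨i, rfl⟩ | ⟨i, rfl⟩) x hx <;> obtain ⟨c, rfl⟩ := Submodule.mem_span_singleton.mp hx
      · rw [map_smul, H.mem_wtSp.mp hv.2.1]
        exact Submodule.smul_mem _ _ (Submodule.smul_mem _ _ hv_mem)
      · rw [map_smul, H.K_inv_apply hv.2.1]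
        exact Submodule.smul_mem _ _ (Submodule.smul_mem _ _ hv_mem)
    rw [map_mul, map_mul, Module.End.mul_apply, Module.End.mul_apply]
    refine mem_of_forall_mem_adjoin ρ (Set.forall_mem_range.mpr fun i x hx => ?_) hf _
      (Submodule.mem_iSup_of_mem (p := H.weightBound ρ ν v) ν (weightBound_self.ge hk_mem))
    induction hx using Submodule.iSup_induction' with
    | mem μ x hx => exact Submodule.mem_iSup_of_mem _ (hv.F_mem_weightBound B hx i)
    | zero => rw [map_zero]; exact zero_mem _
    | add x y _ _ hx hy => rw [map_add]; exact add_mem hx hy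

theorem IsHighestWeightVector.apply_mem_weightBound (B : WeightForm q a d)
    (hv : H.IsHighestWeightVector ρ ν v) {u : H.U} (hu : ρ u v ∈ wtSp q d H.K ρ μ) :
    ρ u v ∈ H.weightBound ρ ν v μ :=
  mem_wtSp_of_mem_iSup (fun _ => hv.weightBound_le) (hv.apply_mem_iSup_weightBound B u) hu

theorem IsIrreducible.exists_apply_eq (hρ : H.IsIrreducible ρ) (hv : v ≠ 0) (x : V) :
    ∃ u, ρ u v = x := by
  have h_range := hρ (LinearMap.range ((LinearMap.applyₗ v).comp ρ.toLinearMap)) (by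
    rintro u _ ⟨w, rfl⟩
    exact ⟨u * w, by simp⟩)
  refine LinearMap.range_eq_top.mp (h_range.resolve_left fun h_bot => hv ?_) x
  simpa using LinearMap.congr_fun (LinearMap.range_eq_bot.mp h_bot) 1

theorem IsHighestWeightVector.wtSp_le_weightBound (B : WeightForm q a d)
    (hv : H.IsHighestWeightVector ρ ν v) (hρ : H.IsIrreducible ρ) :
    wtSp q d H.K ρ μ ≤ H.weightBound ρ ν v μ := by
  intro x hx
  obtain ⟨u, rfl⟩ := hρ.exists_apply_eq hv.1 x
  exact hv.apply_mem_weightBound B hx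

theorem IsHighestWeightVector.prod (hv : H.IsHighestWeightVector ρ ν v)
    (hv' : H.IsHighestWeightVector ρ' ν v') :
    H.IsHighestWeightVector ((LinearMap.prodMapAlgHom ℂ V V').comp (ρ.prod ρ')) ν (v, v') := by
  refine ⟨fun h => hv.1 congr(($h).1), H.mem_wtSp.mpr fun i => ?_, fun i => ?_⟩
  · exact Prod.ext (H.mem_wtSp.mp hv.2.1 i) (H.mem_wtSp.mp hv'.2.1 i)
  · exact Prod.ext (hv.2.2 i) (hv'.2.2 i)

theorem IsHighestWeightVector.apply_eq_zero_of_apply_eq_zero (B : WeightForm q a d)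
    (hv : H.IsHighestWeightVector ρ ν v) (hv' : H.IsHighestWeightVector ρ' ν v')
    (hρ' : H.IsIrreducible ρ') {u : H.U} (hu : ρ u v = 0) : ρ' u v' = 0 := by
  by_contra h_ne
  obtain ⟨u', hu'⟩ := hρ'.exists_apply_eq h_ne v'
  have h_apply : (LinearMap.prodMapAlgHom ℂ V V').comp (ρ.prod ρ') (u' * u) (v, v') = (0, v') :=
    Prod.ext (by simp [hu]) (by simp [hu'])
  have h_weight : ((0, v') : V × V') ∈
      wtSp q d H.K ((LinearMap.prodMapAlgHom ℂ V V').comp (ρ.prod ρ')) ν :=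
    H.mem_wtSp.mpr fun i => Prod.ext (by simp) (H.mem_wtSp.mp hv'.2.1 i)
  have h_span := (hv.prod hv').apply_mem_weightBound B (h_apply ▸ h_weight)
  rw [h_apply, weightBound_self] at h_span
  obtain ⟨c, hc⟩ := Submodule.mem_span_singleton.mp h_span
  have hc0 : c = 0 := (smul_eq_zero_iff_left hv.1).mp congr(($hc).1)
  exact hv'.1 (by simpa [hc0] using congr(($hc).2).symm)

theorem IsHighestWeightVector.exists_equiv (B : WeightForm q a d)
    (hv : H.IsHighestWeightVector ρ ν v) (hρ : H.IsIrreducible ρ)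
    (hv' : H.IsHighestWeightVector ρ' ν v') (hρ' : H.IsIrreducible ρ') :
    ∃ f : V ≃ₗ[ℂ] V', ∀ u x, f (ρ u x) = ρ' u (f x) := by
  let g : H.U →ₗ[ℂ] V := (LinearMap.applyₗ v).comp ρ.toLinearMap
  let g' : H.U →ₗ[ℂ] V' := (LinearMap.applyₗ v').comp ρ'.toLinearMap
  have h_ker : LinearMap.ker g = LinearMap.ker g' := by
    ext u
    exact ⟨hv.apply_eq_zero_of_apply_eq_zero B hv' hρ',
      hv'.apply_eq_zero_of_apply_eq_zero B hv hρ⟩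
  let f : V ≃ₗ[ℂ] V' := (g.quotKerEquivOfSurjective (hρ.exists_apply_eq hv.1)).symm ≪≫ₗ
    Submodule.quotEquivOfEq _ _ h_ker ≪≫ₗ
    g'.quotKerEquivOfSurjective (hρ'.exists_apply_eq hv'.1)
  have hf : ∀ u, f (ρ u v) = ρ' u v' := fun u => by
    have : (g.quotKerEquivOfSurjective (hρ.exists_apply_eq hv.1)).symm (ρ u v) =
      Submodule.Quotient.mk u := (LinearEquiv.symm_apply_eq _).mpr rfl
    simp only [f, LinearEquiv.trans_apply, this]
    rfl
  refine ⟨f, fun u x => ?_⟩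
  obtain ⟨w, rfl⟩ := hρ.exists_apply_eq hv.1 x
  rw [hf, ← Module.End.mul_apply, ← map_mul, hf, map_mul, Module.End.mul_apply]

theorem finite_setOf_wtSp_ne_bot [FiniteDimensional ℂ V] :
    {μ | wtSp q d H.K ρ μ ≠ ⊥}.Finite := by
  refine ((Set.Finite.pi' fun i => Module.End.finite_hasEigenvalue (ρ (H.K i : H.U))).preimage
    H.weight_injective.injOn).subset fun μ hμ i => ?_
  obtain ⟨x, hx, hx0⟩ := Submodule.exists_mem_ne_zero_of_ne_bot hμ
  exact Module.End.hasEigenvalue_of_hasEigenvector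
    ⟨Module.End.mem_eigenspace_iff.mpr (H.mem_wtSp.mp hx i), hx0⟩

theorem exists_isHighestWeightVector [FiniteDimensional ℂ V] [Nontrivial V] (B : WeightForm q a d)
    (hρ : ⨆ μ, wtSp q d H.K ρ μ = ⊤) : ∃ ν v, H.IsHighestWeightVector ρ ν v := by
  have h_nonempty : {μ | wtSp q d H.K ρ μ ≠ ⊥}.Nonempty := by
    by_contra! h
    have h_bot : ∀ μ, wtSp q d H.K ρ μ = ⊥ := by simpa [Set.eq_empty_iff_forall_notMem] using h
    simp [h_bot] at hρ
  obtain ⟨ν, hν, hν_max⟩ := Set.exists_max_image _ (B.form 1) finite_setOf_wtSp_ne_bot h_nonempty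
  obtain ⟨v, hv, hv0⟩ := Submodule.exists_mem_ne_zero_of_ne_bot hν
  refine ⟨ν, v, hv0, hv, fun i => by_contra fun hE => ?_⟩
  have h_le := hν_max _ (Submodule.ne_bot_iff _ |>.mpr ⟨_, H.E_mem_wtSp hv i, hE⟩)
  have h_pos := B.form_one_simpleRoot_pos H.d_pos i
  rw [map_add] at h_le
  omega

end HighestWeight

section Contragredient

variable (H : QuantizedEnveloping q a d)
  {V : Type} [AddCommGroup V] [Module ℂ V]

theorem S_surjective : Function.Surjective H.S := by
  intro u
  induction u using H.induction_on with
  | E i => exact ⟨-(H.E i * ↑(H.K i)⁻¹), by simp [H.S_mul, H.S_E, H.S_K_inv]⟩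
  | F i => exact ⟨-(H.K i * H.F i), by simp [H.S_mul, H.S_F, H.S_K]⟩
  | K i => exact ⟨_, H.S_K_inv i⟩
  | K_inv i => exact ⟨_, H.S_K i⟩
  | algebraMap r => exact ⟨r • 1, by rw [map_smul, H.S_one, Algebra.algebraMap_eq_smul_one]⟩
  | add u v hu hv =>
    obtain ⟨⟨u', rfl⟩, v', rfl⟩ := And.intro hu hv
    exact ⟨u' + v', map_add _ _ _⟩
  | mul u v hu hv =>
    obtain ⟨⟨u', rfl⟩, v', rfl⟩ := And.intro hu hv
    exact ⟨v' * u', H.S_mul _ _⟩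

/-- The contragredient representation `u ξ = ξ ∘ S(u)`. -/
noncomputable def dualRep (ρ : H.U →ₐ[ℂ] Module.End ℂ V) :
    H.U →ₐ[ℂ] Module.End ℂ (Module.Dual ℂ V) :=
  AlgHom.ofLinearMap (Module.Dual.transpose ∘ₗ ρ.toLinearMap ∘ₗ H.S)
    (by ext; simp [H.S_one, Module.Dual.transpose_apply])
    fun u v => by ext; simp [H.S_mul, Module.Dual.transpose_apply]

variable {H} {ρ : H.U →ₐ[ℂ] Module.End ℂ V} {μ ν : Fin n → ℤ} {ξ : Module.Dual ℂ V}

theorem dualRep_apply (u : H.U) (ξ : Module.Dual ℂ V) (x : V) :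
    H.dualRep ρ u ξ x = ξ (ρ (H.S u) x) := rfl

theorem mem_wtSp_dualRep :
    ξ ∈ wtSp q d H.K (H.dualRep ρ) μ ↔ ∀ i x, ξ (ρ ↑(H.K i)⁻¹ x) = q ^ (μ i * d i) * ξ x := by
  simp only [H.mem_wtSp, LinearMap.ext_iff, dualRep_apply, H.S_K, LinearMap.smul_apply, smul_eq_mul]

theorem inDualWt_of_mem_wtSp_dualRep (hξ : ξ ∈ wtSp q d H.K (H.dualRep ρ) μ) :
    inDualWt q d H.K ρ μ ξ := by
  intro ν hν x hx
  by_contra h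
  refine hν (neg_eq_iff_eq_neg.mp (H.weight_injective (funext fun i => ?_)))
  have h_eq := mem_wtSp_dualRep.mp hξ i x
  rw [H.K_inv_apply hx, map_smul, smul_eq_mul] at h_eq
  simpa using mul_right_cancel₀ h h_eq

theorem inDualWt_iff_mem_wtSp_dualRep (hρ : ⨆ μ, wtSp q d H.K ρ μ = ⊤) :
    inDualWt q d H.K ρ μ ξ ↔ ξ ∈ wtSp q d H.K (H.dualRep ρ) μ := by
  refine ⟨fun hξ => mem_wtSp_dualRep.mpr fun i x => ?_, inDualWt_of_mem_wtSp_dualRep⟩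
  induction hρ.ge (Submodule.mem_top (x := x)) using Submodule.iSup_induction' with
  | mem ν x hx =>
    rw [H.K_inv_apply hx, map_smul, smul_eq_mul]
    rcases eq_or_ne ν (-μ) with rfl | hν
    · simp
    · rw [hξ ν hν x hx, mul_zero, mul_zero]
  | zero => simp
  | add x y _ _ hx hy => simp only [map_add, hx, hy, mul_add]

theorem apply_K_of_inDualWt (hρ : ⨆ μ, wtSp q d H.K ρ μ = ⊤) (hξ : inDualWt q d H.K ρ μ ξ)
    (i : Fin n) (x : V) : ξ (ρ (H.K i) x) = q ^ (-(μ i * d i)) * ξ x := by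
  have h_inv := mem_wtSp_dualRep.mp ((inDualWt_iff_mem_wtSp_dualRep hρ).mp hξ) i (ρ (H.K i) x)
  rw [← Module.End.mul_apply, ← map_mul, Units.inv_mul, map_one, Module.End.one_apply] at h_inv
  rw [h_inv, ← mul_assoc, ← zpow_add₀ H.q_ne_zero, neg_add_cancel, zpow_zero, one_mul]

theorem exists_basis_mem_wtSp (hρ : ⨆ μ, wtSp q d H.K ρ μ = ⊤) :
    ∃ (ι : Type) (b : Module.Basis ι ℂ V), ∀ j, ∃ μ, b j ∈ wtSp q d H.K ρ μ := by
  have h_span : ⊤ ≤ Submodule.span ℂ (⋃ μ, (wtSp q d H.K ρ μ : Set V)) := by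
    rw [← hρ, Submodule.iSup_eq_span]
  exact ⟨_, Module.Basis.ofSpan h_span, fun j =>
    Set.mem_iUnion.mp (Module.Basis.ofSpan_subset h_span ⟨j, rfl⟩)⟩

theorem iSup_wtSp_dualRep [FiniteDimensional ℂ V] (hρ : ⨆ μ, wtSp q d H.K ρ μ = ⊤) :
    ⨆ μ, wtSp q d H.K (H.dualRep ρ) μ = ⊤ := by
  classical
  obtain ⟨ι, b, hb⟩ := exists_basis_mem_wtSp hρ
  have : Finite ι := Module.Finite.finite_basis b
  rw [eq_top_iff, ← b.dualBasis.span_eq, Submodule.span_le, Set.range_subset_iff]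
  intro j
  choose μ hμ using hb
  refine Submodule.mem_iSup_of_mem (-μ j) (mem_wtSp_dualRep.mpr fun i x => ?_)
  induction b.mem_span x using Submodule.span_induction with
  | mem x hx =>
    obtain ⟨k, rfl⟩ := hx
    rw [H.K_inv_apply (hμ k), map_smul, smul_eq_mul, b.dualBasis_apply_self]
    split_ifs with hkj
    · rw [hkj, Pi.neg_apply, neg_mul]
    · rw [mul_zero, mul_zero]
  | zero => simp
  | add x y _ _ hx hy => simp only [map_add, hx, hy, mul_add]
  | smul r x _ hx => simp only [map_smul, hx, smul_eq_mul, mul_left_comm]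

theorem IsIrreducible.dualRep [FiniteDimensional ℂ V] (hρ : H.IsIrreducible ρ) :
    H.IsIrreducible (H.dualRep ρ) := by
  intro N hN
  have h_stable : ∀ u, ∀ x ∈ N.dualCoannihilator, ρ u x ∈ N.dualCoannihilator := by
    intro u x hx
    obtain ⟨u, rfl⟩ := H.S_surjective u
    rw [Submodule.mem_dualCoannihilator] at hx ⊢
    exact fun ξ hξ => hx _ (hN u ξ hξ)
  rw [← Subspace.dualCoannihilator_dualAnnihilator_eq (W := N)]
  rcases hρ _ h_stable with h | h <;> rw [h]
  · exact .inr Submodule.dualAnnihilator_bot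
  · exact .inl Submodule.dualAnnihilator_top

theorem exists_mem_wtSp_apply_ne_zero [FiniteDimensional ℂ V] (hρ : ⨆ μ, wtSp q d H.K ρ μ = ⊤)
    {x : V} (hx : x ∈ wtSp q d H.K ρ μ) (hx0 : x ≠ 0) :
    ∃ ξ ∈ wtSp q d H.K (H.dualRep ρ) (-μ), ξ x ≠ 0 := by
  by_contra! h
  refine hx0 ((Module.forall_dual_apply_eq_zero_iff ℂ x).mp fun ξ => ?_)
  induction (iSup_wtSp_dualRep hρ).ge (Submodule.mem_top (x := ξ))
    using Submodule.iSup_induction' with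
  | mem ν ξ hξ =>
    rcases eq_or_ne ν (-μ) with rfl | hν
    · exact h ξ hξ
    · exact inDualWt_of_mem_wtSp_dualRep hξ μ (fun h => hν (by rw [h, neg_neg])) x hx
  | zero => simp
  | add ξ η _ _ hξ hη => rw [LinearMap.add_apply, hξ, hη, add_zero]

end Contragredient

end QuantizedEnveloping

/-- The quantised coordinate ring `O_q(G)`, realised as an algebra `A` of linear forms on
`U_q(𝔤)` generated by the coordinate functions of the modules `V(λ)`, `λ ∈ P⁺`, together with the
Weyl group. -/
structure QuantizedCoordinateRing (q : ℂ) {n : ℕ} (a : Fin n → Fin n → ℤ) (d : Fin n → ℕ)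
    extends QuantizedEnveloping q a d where
  W : Type
  [group : Group W]
  [finite : Finite W]
  σ : W →* Multiplicative (AddAut (Fin n → ℤ))
  s : Fin n → W
  closure_range_s : Subgroup.closure (Set.range s) = ⊤
  σ_s : ∀ i (μ : Fin n → ℤ), (σ (s i)).toAdd μ = fun k => μ k - μ i * a k i
  w₀ : W
  w₀_nonpos : ∀ μ : Fin n → ℤ, (∀ i, 0 ≤ μ i) → ∀ i, (σ w₀).toAdd μ i ≤ 0
  V : (Fin n → ℕ) → Type
  [addCommGroup : ∀ c, AddCommGroup (V c)]
  [module : ∀ c, Module ℂ (V c)]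
  ρ : ∀ c, U →ₐ[ℂ] Module.End ℂ (V c)
  [finiteDimensional : ∀ c, FiniteDimensional ℂ (V c)]
  isIrreducible : ∀ c, toQuantizedEnveloping.IsIrreducible (ρ c)
  exists_highestWeightVector : ∀ c, ∃ v : V c,
    toQuantizedEnveloping.IsHighestWeightVector (ρ c) (fun i => (c i : ℤ)) v
  iSup_wtSp : ∀ c, ⨆ μ : Fin n → ℤ, wtSp q d K (ρ c) μ = ⊤
  finrank_wtSp_extremal : ∀ c (w : W),
    Module.finrank ℂ (wtSp q d K (ρ c) ((σ w).toAdd (fun i => (c i : ℤ)))) = 1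
  A : Type
  [ringA : Ring A]
  [algebraA : Algebra ℂ A]
  ι : A →ₗ[ℂ] U →ₗ[ℂ] ℂ
  ι_injective : Function.Injective ι
  ι_one : ι 1 = ε.toLinearMap
  ι_mul : ∀ x y : A, ι (x * y) =
    (TensorProduct.lid ℂ ℂ).toLinearMap ∘ₗ TensorProduct.map (ι x) (ι y) ∘ₗ Δ.toLinearMap
  cf : ∀ c : Fin n → ℕ, Module.Dual ℂ (V c) → V c → A
  ι_cf : ∀ c ξ v u, ι (cf c ξ v) u = ξ (ρ c u v)
  adjoin_cf : Algebra.adjoin ℂ {x : A | ∃ c ξ v, x = cf c ξ v} = ⊤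

attribute [instance] QuantizedCoordinateRing.group QuantizedCoordinateRing.finite
  QuantizedCoordinateRing.addCommGroup QuantizedCoordinateRing.module
  QuantizedCoordinateRing.finiteDimensional QuantizedCoordinateRing.ringA
  QuantizedCoordinateRing.algebraA

namespace QuantizedCoordinateRing

open QuantizedEnveloping

variable {q : ℂ} {n : ℕ} {a : Fin n → Fin n → ℤ} {d : Fin n → ℕ}

section DualModule

variable (O : QuantizedCoordinateRing q a d) (c : Fin n → ℕ)

/-- Some choice of an invariant form on the weight lattice. -/
noncomputable def weightForm : WeightForm q a d :=
  (nonempty_weightForm O.q_ne_zero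
    (det_ne_zero_of_finite_weylGroup O.diag O.closure_range_s O.σ_s) O.symm).some

/-- The dominant weight `∑ c i ϖ i`. -/
abbrev dominantWeight (c : Fin n → ℕ) : Fin n → ℤ := fun i => c i

theorem form_σ (w : O.W) (x y : Fin n → ℤ) :
    O.weightForm.form ((O.σ w).toAdd x) ((O.σ w).toAdd y) = O.weightForm.form x y :=
  O.weightForm.form_weylGroup O.diag O.closure_range_s O.σ_s w x y

theorem wtSp_extremal_ne_bot (w : O.W) :
    wtSp q d O.K (O.ρ c) ((O.σ w).toAdd (dominantWeight c)) ≠ ⊥ := by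
  intro h
  have h_rank := O.finrank_wtSp_extremal c w
  rw [h, finrank_bot] at h_rank
  exact zero_ne_one h_rank

theorem sub_mem_positiveCone {μ : Fin n → ℤ} {x : O.V c} (hx : x ∈ wtSp q d O.K (O.ρ c) μ)
    (hx0 : x ≠ 0) : dominantWeight c - μ ∈ positiveCone a := by
  obtain ⟨v, hv⟩ := O.exists_highestWeightVector c
  exact sub_mem_positiveCone_of_mem_weightBound
    (hv.wtSp_le_weightBound O.weightForm (O.isIrreducible c) hx) hx0

include O in
theorem neg_simpleRoot_notMem_positiveCone (i : Fin n) : -simpleRoot a i ∉ positiveCone a := by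
  intro h
  have h_nonneg := O.weightForm.form_nonneg (μ := 1) (fun _ => zero_le_one) h
  have h_pos := O.weightForm.form_one_simpleRoot_pos O.d_pos i
  rw [map_neg] at h_nonneg
  omega

theorem wtSp_add_simpleRoot_eq_bot (i : Fin n) :
    wtSp q d O.K (O.ρ c) (dominantWeight c + simpleRoot a i) = ⊥ := by
  by_contra h
  obtain ⟨x, hx, hx0⟩ := Submodule.exists_mem_ne_zero_of_ne_bot h
  have h_mem := O.sub_mem_positiveCone c hx hx0
  rw [sub_add_cancel_left] at h_mem
  exact O.neg_simpleRoot_notMem_positiveCone i h_mem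

theorem exists_dualRep_equiv : ∃ (c' : Fin n → ℕ) (f : Module.Dual ℂ (O.V c) ≃ₗ[ℂ] O.V c'),
    ∀ u ξ, f (O.dualRep (O.ρ c) u ξ) = O.ρ c' u (f ξ) := by
  obtain ⟨v, hv⟩ := O.exists_highestWeightVector c
  have : Nontrivial (O.V c) := ⟨v, 0, hv.1⟩
  obtain ⟨ν, ξ, hξ⟩ := exists_isHighestWeightVector O.weightForm (iSup_wtSp_dualRep (O.iSup_wtSp c))
  have hν : ∀ i, 0 ≤ ν i := fun i => O.weight_nonneg_of_E_eq_zero hξ.2.1 hξ.1 (hξ.2.2 i)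
  obtain ⟨c', rfl⟩ : ∃ c', dominantWeight c' = ν :=
    ⟨fun i => (ν i).toNat, funext fun i => Int.toNat_of_nonneg (hν i)⟩
  obtain ⟨v', hv'⟩ := O.exists_highestWeightVector c'
  exact ⟨c', hξ.exists_equiv O.weightForm (O.isIrreducible c).dualRep hv' (O.isIrreducible c')⟩

variable {c} {c' : Fin n → ℕ} {f : Module.Dual ℂ (O.V c) ≃ₗ[ℂ] O.V c'}

theorem dual_eq_zero {ξ : Module.Dual ℂ (O.V c)}
    (hξ : ∀ ν, ∀ x ∈ wtSp q d O.K (O.ρ c) ν, ξ x = 0) : ξ = 0 :=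
  LinearMap.ker_eq_top.mp (eq_top_iff.mpr (O.iSup_wtSp c ▸ iSup_le hξ))

theorem map_mem_wtSp (hf : ∀ u ξ, f (O.dualRep (O.ρ c) u ξ) = O.ρ c' u (f ξ)) {μ : Fin n → ℤ}
    {ξ : Module.Dual ℂ (O.V c)} :
    f ξ ∈ wtSp q d O.K (O.ρ c') μ ↔ ξ ∈ wtSp q d O.K (O.dualRep (O.ρ c)) μ := by
  simp only [O.mem_wtSp, ← hf, ← map_smul, f.injective.eq_iff]

theorem add_mem_positiveCone_of_dualRep_equiv
    (hf : ∀ u ξ, f (O.dualRep (O.ρ c) u ξ) = O.ρ c' u (f ξ)) {μ : Fin n → ℤ} {x : O.V c}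
    (hx : x ∈ wtSp q d O.K (O.ρ c) μ) (hx0 : x ≠ 0) :
    dominantWeight c' + μ ∈ positiveCone a := by
  obtain ⟨ξ, hξ, hξx⟩ := exists_mem_wtSp_apply_ne_zero (O.iSup_wtSp c) hx hx0
  have hξ0 : f ξ ≠ 0 := fun h => hξx (by simp [f.map_eq_zero_iff.mp h])
  simpa using O.sub_mem_positiveCone c' ((O.map_mem_wtSp hf).mpr hξ) hξ0

theorem add_mem_positiveCone_of_mem_wtSp_dual
    (hf : ∀ u ξ, f (O.dualRep (O.ρ c) u ξ) = O.ρ c' u (f ξ)) {μ : Fin n → ℤ} {y : O.V c'}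
    (hy : y ∈ wtSp q d O.K (O.ρ c') μ) (hy0 : y ≠ 0) :
    dominantWeight c + μ ∈ positiveCone a := by
  obtain ⟨ξ, rfl⟩ := f.surjective y
  have hξ : inDualWt q d O.K (O.ρ c) μ ξ :=
    inDualWt_of_mem_wtSp_dualRep ((O.map_mem_wtSp hf).mp hy)
  by_cases h_bot : wtSp q d O.K (O.ρ c) (-μ) = ⊥
  · have hξ0 : ξ ≠ 0 := fun h => hy0 (by rw [h, map_zero])
    refine (hξ0 (O.dual_eq_zero fun ν x hx => ?_)).elim
    rcases eq_or_ne ν (-μ) with rfl | hν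
    · rw [h_bot, Submodule.mem_bot] at hx
      rw [hx, map_zero]
    · exact hξ ν hν x hx
  · obtain ⟨x, hx, hx0⟩ := Submodule.exists_mem_ne_zero_of_ne_bot h_bot
    simpa using O.sub_mem_positiveCone c hx hx0

theorem dominantWeight_dual (hf : ∀ u ξ, f (O.dualRep (O.ρ c) u ξ) = O.ρ c' u (f ξ)) :
    dominantWeight c' = -(O.σ O.w₀).toAdd (dominantWeight c) := by
  obtain ⟨x, hx, hx0⟩ := Submodule.exists_mem_ne_zero_of_ne_bot (O.wtSp_extremal_ne_bot c O.w₀)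
  obtain ⟨y, hy, hy0⟩ := Submodule.exists_mem_ne_zero_of_ne_bot (O.wtSp_extremal_ne_bot c' O.w₀⁻¹)
  have h_cone := O.add_mem_positiveCone_of_dualRep_equiv hf hx hx0
  have h_cone' := O.add_mem_positiveCone_of_mem_wtSp_dual hf hy hy0
  set z := dominantWeight c + (O.σ O.w₀⁻¹).toAdd (dominantWeight c') with hz
  have h_inv : (O.σ O.w₀).toAdd ((O.σ O.w₀⁻¹).toAdd (dominantWeight c')) = dominantWeight c' := by
    rw [map_inv]
    exact (O.σ O.w₀).toAdd.apply_symm_apply _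
  have hw₀z : (O.σ O.w₀).toAdd z = dominantWeight c' + (O.σ O.w₀).toAdd (dominantWeight c) := by
    rw [hz, map_add, h_inv, add_comm]
  have h_nonpos : O.weightForm.form 1 z ≤ 0 := by
    have := O.weightForm.form_nonneg (μ := -(O.σ O.w₀).toAdd 1) (fun i =>
      neg_nonneg.mpr (O.w₀_nonpos 1 (fun _ => zero_le_one) i)) (hw₀z ▸ h_cone)
    rwa [map_neg, AddMonoidHom.neg_apply, O.form_σ, neg_nonneg] at this
  have hz0 : z = 0 := by_contra fun h =>
    h_nonpos.not_gt (O.weightForm.form_one_pos O.d_pos h_cone' h)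
  rwa [hz0, map_zero, eq_comm, ← eq_neg_iff_add_eq_zero] at hw₀z

theorem wtSp_sub_simpleRoot_eq_bot (c : Fin n → ℕ) (i : Fin n) :
    wtSp q d O.K (O.ρ c) ((O.σ O.w₀).toAdd (dominantWeight c) - simpleRoot a i) = ⊥ := by
  obtain ⟨c', f, hf⟩ := O.exists_dualRep_equiv c
  by_contra h
  obtain ⟨x, hx, hx0⟩ := Submodule.exists_mem_ne_zero_of_ne_bot h
  have h_mem := O.add_mem_positiveCone_of_dualRep_equiv hf hx hx0
  rw [O.dominantWeight_dual hf, neg_add_eq_sub, sub_sub_cancel_left] at h_mem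
  exact O.neg_simpleRoot_notMem_positiveCone i h_mem

theorem E_apply_eq_zero {v : O.V c} (hv : v ∈ wtSp q d O.K (O.ρ c) (dominantWeight c))
    (i : Fin n) : O.ρ c (O.E i) v = 0 := by
  have h_mem := O.E_mem_wtSp hv i
  rwa [O.wtSp_add_simpleRoot_eq_bot c i, Submodule.mem_bot] at h_mem

theorem F_apply_eq_zero {v : O.V c}
    (hv : v ∈ wtSp q d O.K (O.ρ c) ((O.σ O.w₀).toAdd (dominantWeight c))) (i : Fin n) :
    O.ρ c (O.F i) v = 0 := by
  have h_mem := O.F_mem_wtSp hv i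
  rwa [O.wtSp_sub_simpleRoot_eq_bot c i, Submodule.mem_bot] at h_mem

theorem apply_F_eq_zero {ξ : Module.Dual ℂ (O.V c)}
    (hξ : inDualWt q d O.K (O.ρ c) (-dominantWeight c) ξ) (i : Fin n) (x : O.V c) :
    ξ (O.ρ c (O.F i) x) = 0 := by
  refine LinearMap.congr_fun (O.dual_eq_zero (ξ := ξ ∘ₗ O.ρ c (O.F i)) fun ν y hy => ?_) x
  by_cases hν : ν - simpleRoot a i = dominantWeight c
  · rw [eq_add_of_sub_eq hν, O.wtSp_add_simpleRoot_eq_bot c i, Submodule.mem_bot] at hy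
    rw [hy, map_zero]
  · exact hξ _ (by rwa [neg_neg]) _ (O.F_mem_wtSp hy i)

theorem apply_E_eq_zero {ξ : Module.Dual ℂ (O.V c)}
    (hξ : inDualWt q d O.K (O.ρ c) (-(O.σ O.w₀).toAdd (dominantWeight c)) ξ) (i : Fin n)
    (x : O.V c) : ξ (O.ρ c (O.E i) x) = 0 := by
  refine LinearMap.congr_fun (O.dual_eq_zero (ξ := ξ ∘ₗ O.ρ c (O.E i)) fun ν y hy => ?_) x
  by_cases hν : ν + simpleRoot a i = (O.σ O.w₀).toAdd (dominantWeight c)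
  · rw [eq_sub_of_add_eq hν, O.wtSp_sub_simpleRoot_eq_bot c i, Submodule.mem_bot] at hy
    rw [hy, map_zero]
  · exact hξ _ (by rwa [neg_neg]) _ (O.E_mem_wtSp hy i)

end DualModule

section TensorProduct

open TensorProduct

variable {U : Type*} [AddCommGroup U] [Module ℂ U]

theorem dualDistrib_comp (f g : Module.Dual ℂ U) (s t : Module.End ℂ U) (w : U ⊗[ℂ] U) :
    dualDistrib ℂ U U ((f ∘ₗ s) ⊗ₜ (g ∘ₗ t)) w = dualDistrib ℂ U U (f ⊗ₜ g) (map s t w) := by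
  induction w using TensorProduct.induction_on with
  | zero => simp only [map_zero]
  | tmul x y => rfl
  | add x y hx hy => rw [map_add, map_add, map_add, hx, hy]

/-- The endomorphisms of `M ⊗ M` by which `U ⊗ U` acts, given a family `m` of endomorphisms of `M`
indexed by `U`. -/
noncomputable def tensorSquare {M : Type*} [AddCommGroup M] [Module ℂ M]
    (m : U →ₗ[ℂ] Module.End ℂ M) : U ⊗[ℂ] U →ₗ[ℂ] Module.End ℂ (M ⊗[ℂ] M) :=
  homTensorHomMap (RingHom.id ℂ) M M M M ∘ₗ map m m

theorem tensorSquare_mul (B : Type*) [Ring B] [Algebra ℂ B] :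
    tensorSquare (LinearMap.mul ℂ B) = LinearMap.mul ℂ (B ⊗[ℂ] B) := by
  ext x y x' y'
  simp [tensorSquare]

theorem tensorSquare_mul_flip (B : Type*) [Ring B] [Algebra ℂ B] :
    tensorSquare (LinearMap.mul ℂ B).flip = (LinearMap.mul ℂ (B ⊗[ℂ] B)).flip := by
  ext x y x' y'
  simp [tensorSquare]

end TensorProduct

section RegularAction

open TensorProduct

variable (O : QuantizedCoordinateRing q a d)

theorem cf_induction {p : O.A → Prop} (cf : ∀ c ξ v, p (O.cf c ξ v)) (one : p 1)
    (smul : ∀ (r : ℂ) b, p b → p (r • b)) (add : ∀ b b', p b → p b' → p (b + b'))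
    (mul : ∀ b b', p b → p b' → p (b * b')) (b : O.A) : p b := by
  have hb : b ∈ Algebra.adjoin ℂ {x : O.A | ∃ c ξ v, x = O.cf c ξ v} :=
    O.adjoin_cf ▸ Algebra.mem_top
  induction hb using Algebra.adjoin_induction with
  | mem b hb =>
    obtain ⟨c, ξ, v, rfl⟩ := hb
    exact cf c ξ v
  | algebraMap r => exact Algebra.algebraMap_eq_smul_one (A := O.A) r ▸ smul r 1 one
  | add b b' _ _ hb hb' => exact add b b' hb hb'
  | mul b b' _ _ hb hb' => exact mul b b' hb hb'

theorem ι_mul_apply (b b' : O.A) (u : O.U) :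
    O.ι (b * b') u = dualDistrib ℂ O.U O.U (O.ι b ⊗ₜ O.ι b') (O.Δ u) := by
  rw [O.ι_mul]
  rfl

variable {O} {m : O.U →ₗ[ℂ] Module.End ℂ O.U}

theorem exists_ι_eq_comp_apply (hΔ : ∀ x u, O.Δ (m x u) = tensorSquare m (O.Δ x) (O.Δ u))
    (hε : ∀ x u, O.ε (m x u) = O.ε x * O.ε u)
    (hcf : ∀ c ξ v x, ∃ b, O.ι b = O.ι (O.cf c ξ v) ∘ₗ m x) (b : O.A) :
    ∀ x, ∃ b', O.ι b' = O.ι b ∘ₗ m x := by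
  induction b using O.cf_induction with
  | cf c ξ v => exact hcf c ξ v
  | one => exact fun x => ⟨O.ε x • 1, LinearMap.ext fun u => by simp [O.ι_one, hε]⟩
  | smul r b hb =>
    intro x
    obtain ⟨y, hy⟩ := hb x
    exact ⟨r • y, by rw [map_smul, map_smul, hy, LinearMap.smul_comp]⟩
  | add b b' hb hb' =>
    intro x
    obtain ⟨y, hy⟩ := hb x
    obtain ⟨y', hy'⟩ := hb' x
    exact ⟨y + y', by rw [map_add, map_add, hy, hy', LinearMap.add_comp]⟩
  | mul b b' hb hb' =>
    have h_tensor : ∀ z, ∃ y, ∀ u, O.ι y u =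
        dualDistrib ℂ O.U O.U (O.ι b ⊗ₜ O.ι b') (tensorSquare m z (O.Δ u)) := by
      intro z
      induction z using TensorProduct.induction_on with
      | zero => exact ⟨0, fun u => by simp only [map_zero, LinearMap.zero_apply]⟩
      | tmul x x' =>
        obtain ⟨y, hy⟩ := hb x
        obtain ⟨y', hy'⟩ := hb' x'
        exact ⟨y * y', fun u => by rw [ι_mul_apply, hy, hy', dualDistrib_comp]; rfl⟩
      | add z z' h h' =>
        obtain ⟨y, hy⟩ := h
        obtain ⟨y', hy'⟩ := h'
        exact ⟨y + y', fun u => by simp only [map_add, LinearMap.add_apply, hy, hy']⟩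
    intro x
    obtain ⟨y, hy⟩ := h_tensor (O.Δ x)
    exact ⟨y, LinearMap.ext fun u => by rw [hy, LinearMap.comp_apply, ι_mul_apply, hΔ]⟩

theorem exists_translate (hΔ : ∀ x u, O.Δ (m x u) = tensorSquare m (O.Δ x) (O.Δ u))
    (hε : ∀ x u, O.ε (m x u) = O.ε x * O.ε u)
    (hcf : ∀ c ξ v x, ∃ b, O.ι b = O.ι (O.cf c ξ v) ∘ₗ m x) :
    ∃ t : O.U →ₗ[ℂ] Module.End ℂ O.A, ∀ x b, O.ι (t x b) = O.ι b ∘ₗ m x := by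
  choose t ht using exists_ι_eq_comp_apply hΔ hε hcf
  refine ⟨LinearMap.mk₂ ℂ (fun x b => t b x) ?_ ?_ ?_ ?_, fun x b => ht b x⟩
  all_goals
    intros
    apply O.ι_injective
    ext u
    simp [ht]

theorem translate_mul {t : O.U →ₗ[ℂ] Module.End ℂ O.A}
    (hΔ : ∀ x u, O.Δ (m x u) = tensorSquare m (O.Δ x) (O.Δ u))
    (ht : ∀ x b, O.ι (t x b) = O.ι b ∘ₗ m x) (x : O.U) (b b' : O.A) :
    t x (b * b') = LinearMap.mul' ℂ O.A (tensorSquare t (O.Δ x) (b ⊗ₜ b')) := by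
  have h_tensor : ∀ z u, O.ι (LinearMap.mul' ℂ O.A (tensorSquare t z (b ⊗ₜ b'))) u =
      dualDistrib ℂ O.U O.U (O.ι b ⊗ₜ O.ι b') (tensorSquare m z (O.Δ u)) := by
    intro z u
    induction z using TensorProduct.induction_on with
    | zero => simp only [map_zero, LinearMap.zero_apply]
    | tmul x x' =>
      exact (ι_mul_apply O (t x b) (t x' b') u).trans (by rw [ht, ht, dualDistrib_comp]; rfl)
    | add z z' h h' => simp only [map_add, LinearMap.add_apply, h, h']
  refine O.ι_injective (LinearMap.ext fun u => ?_)
  rw [h_tensor, ht, LinearMap.comp_apply, ι_mul_apply, hΔ]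

variable (O)

theorem Δ_mul_eq_tensorSquare (x u : O.U) :
    O.Δ (LinearMap.mul ℂ O.U x u) = tensorSquare (LinearMap.mul ℂ O.U) (O.Δ x) (O.Δ u) := by
  rw [tensorSquare_mul, LinearMap.mul_apply', LinearMap.mul_apply', map_mul]

theorem Δ_mul_flip_eq_tensorSquare (x u : O.U) :
    O.Δ ((LinearMap.mul ℂ O.U).flip x u) =
      tensorSquare (LinearMap.mul ℂ O.U).flip (O.Δ x) (O.Δ u) := by
  rw [tensorSquare_mul_flip, LinearMap.flip_apply, LinearMap.flip_apply, LinearMap.mul_apply',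
    LinearMap.mul_apply', map_mul]

theorem exists_lreg : ∃ t : O.U →ₗ[ℂ] Module.End ℂ O.A,
    ∀ x b, O.ι (t x b) = O.ι b ∘ₗ (LinearMap.mul ℂ O.U).flip x :=
  exists_translate O.Δ_mul_flip_eq_tensorSquare (fun x u => by simp [mul_comm])
    fun c ξ v x => ⟨O.cf c ξ (O.ρ c x v), LinearMap.ext fun u => by simp [O.ι_cf]⟩

theorem exists_rreg : ∃ t : O.U →ₗ[ℂ] Module.End ℂ O.A,
    ∀ x b, O.ι (t x b) = O.ι b ∘ₗ LinearMap.mul ℂ O.U x :=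
  exists_translate O.Δ_mul_eq_tensorSquare (fun x u => by simp)
    fun c ξ v x => ⟨O.cf c (ξ ∘ₗ O.ρ c x) v, LinearMap.ext fun u => by simp [O.ι_cf]⟩

/-- The left regular action of `U_q(𝔤)` on `O_q(G)`: `(x · b)(u) = b (u x)`. -/
noncomputable def lreg : O.U →ₗ[ℂ] Module.End ℂ O.A := O.exists_lreg.choose

/-- The right regular action of `U_q(𝔤)` on `O_q(G)`: `(b · x)(u) = b (x u)`. It is
contravariant in `x`. -/
noncomputable def rreg : O.U →ₗ[ℂ] Module.End ℂ O.A := O.exists_rreg.choose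

theorem ι_lreg (x : O.U) (b : O.A) (u : O.U) : O.ι (O.lreg x b) u = O.ι b (u * x) :=
  LinearMap.congr_fun (O.exists_lreg.choose_spec x b) u

theorem ι_rreg (x : O.U) (b : O.A) (u : O.U) : O.ι (O.rreg x b) u = O.ι b (x * u) :=
  LinearMap.congr_fun (O.exists_rreg.choose_spec x b) u

variable {O} in
theorem ext {b b' : O.A} (h : ∀ u, O.ι b u = O.ι b' u) : b = b' :=
  O.ι_injective (LinearMap.ext h)

theorem lreg_mul (x y : O.U) (b : O.A) : O.lreg (x * y) b = O.lreg x (O.lreg y b) :=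
  ext fun u => by rw [ι_lreg, ι_lreg, ι_lreg, mul_assoc]

theorem rreg_mul (x y : O.U) (b : O.A) : O.rreg (x * y) b = O.rreg y (O.rreg x b) :=
  ext fun u => by rw [ι_rreg, ι_rreg, ι_rreg, mul_assoc]

theorem rreg_lreg (x y : O.U) (b : O.A) : O.rreg x (O.lreg y b) = O.lreg y (O.rreg x b) :=
  ext fun u => by rw [ι_rreg, ι_lreg, ι_lreg, ι_rreg, mul_assoc]

theorem lreg_one (b : O.A) : O.lreg 1 b = b := ext fun u => by rw [ι_lreg, mul_one]

theorem rreg_one (b : O.A) : O.rreg 1 b = b := ext fun u => by rw [ι_rreg, one_mul]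

theorem lreg_cf (c) (ξ : Module.Dual ℂ (O.V c)) (v : O.V c) (x : O.U) :
    O.lreg x (O.cf c ξ v) = O.cf c ξ (O.ρ c x v) :=
  ext fun u => by rw [ι_lreg, ι_cf, ι_cf, map_mul, Module.End.mul_apply]

theorem rreg_cf (c) (ξ : Module.Dual ℂ (O.V c)) (v : O.V c) (x : O.U) :
    O.rreg x (O.cf c ξ v) = O.cf c (ξ ∘ₗ O.ρ c x) v :=
  ext fun u => by rw [ι_rreg, ι_cf, ι_cf, map_mul, Module.End.mul_apply, LinearMap.comp_apply]

theorem lreg_apply_mul (x : O.U) (b b' : O.A) :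
    O.lreg x (b * b') = LinearMap.mul' ℂ O.A (tensorSquare O.lreg (O.Δ x) (b ⊗ₜ b')) :=
  translate_mul O.Δ_mul_flip_eq_tensorSquare O.exists_lreg.choose_spec x b b'

theorem rreg_apply_mul (x : O.U) (b b' : O.A) :
    O.rreg x (b * b') = LinearMap.mul' ℂ O.A (tensorSquare O.rreg (O.Δ x) (b ⊗ₜ b')) :=
  translate_mul O.Δ_mul_eq_tensorSquare O.exists_rreg.choose_spec x b b'

theorem lreg_K_mul (i : Fin n) (b b' : O.A) :
    O.lreg (O.K i) (b * b') = O.lreg (O.K i) b * O.lreg (O.K i) b' := by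
  rw [lreg_apply_mul, O.Δ_K]
  rfl

theorem rreg_K_mul (i : Fin n) (b b' : O.A) :
    O.rreg (O.K i) (b * b') = O.rreg (O.K i) b * O.rreg (O.K i) b' := by
  rw [rreg_apply_mul, O.Δ_K]
  rfl

theorem lreg_E_mul (i : Fin n) (b b' : O.A) : O.lreg (O.E i) (b * b') =
    O.lreg (O.E i) b * b' + O.lreg (O.K i) b * O.lreg (O.E i) b' := by
  rw [lreg_apply_mul, O.Δ_E, map_add, LinearMap.add_apply, map_add]
  exact congrArg₂ _ (congrArg _ (O.lreg_one b')) rfl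

theorem rreg_E_mul (i : Fin n) (b b' : O.A) : O.rreg (O.E i) (b * b') =
    O.rreg (O.E i) b * b' + O.rreg (O.K i) b * O.rreg (O.E i) b' := by
  rw [rreg_apply_mul, O.Δ_E, map_add, LinearMap.add_apply, map_add]
  exact congrArg₂ _ (congrArg _ (O.rreg_one b')) rfl

theorem lreg_F_mul (i : Fin n) (b b' : O.A) : O.lreg (O.F i) (b * b') =
    O.lreg (O.F i) b * O.lreg (↑(O.K i)⁻¹) b' + b * O.lreg (O.F i) b' := by
  rw [lreg_apply_mul, O.Δ_F, map_add, LinearMap.add_apply, map_add]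
  exact congrArg₂ _ rfl (congrArg (· * _) (O.lreg_one b))

theorem rreg_F_mul (i : Fin n) (b b' : O.A) : O.rreg (O.F i) (b * b') =
    O.rreg (O.F i) b * O.rreg (↑(O.K i)⁻¹) b' + b * O.rreg (O.F i) b' := by
  rw [rreg_apply_mul, O.Δ_F, map_add, LinearMap.add_apply, map_add]
  exact congrArg₂ _ rfl (congrArg (· * _) (O.rreg_one b))

end RegularAction

section HopfIdeal

open TensorProduct

variable (O : QuantizedCoordinateRing q a d)

/-- The coordinate function `cf c ξ v` as a bilinear function of `ξ` and `v`. -/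
noncomputable def cfHom (c : Fin n → ℕ) : Module.Dual ℂ (O.V c) →ₗ[ℂ] O.V c →ₗ[ℂ] O.A :=
  LinearMap.mk₂ ℂ (O.cf c) (fun _ _ _ => ext fun _ => by simp [O.ι_cf])
    (fun _ _ _ => ext fun _ => by simp [O.ι_cf]) (fun _ _ _ => ext fun _ => by simp [O.ι_cf])
    (fun _ _ _ => ext fun _ => by simp [O.ι_cf])

theorem rreg_mul_mem (b b' : O.A) (x : O.U) : O.rreg x (b * b') ∈
    LinearMap.range (O.rreg.flip b) * LinearMap.range (O.rreg.flip b') := by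
  rw [rreg_apply_mul]
  induction O.Δ x using TensorProduct.induction_on with
  | zero => simp
  | tmul y z => exact Submodule.mul_mem_mul ⟨y, rfl⟩ ⟨z, rfl⟩
  | add w w' h h' => simpa only [map_add, LinearMap.add_apply] using Submodule.add_mem _ h h'

theorem rreg_apply_one (x : O.U) : O.rreg x 1 = O.ε x • 1 :=
  ext fun u => by simp [ι_rreg, O.ι_one]

instance finiteDimensional_range_rreg_flip (b : O.A) :
    FiniteDimensional ℂ (LinearMap.range (O.rreg.flip b)) := by
  refine .of_fg ?_
  induction b using O.cf_induction with
  | cf c ξ v =>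
    refine (Module.Finite.fg_top.map ((O.cfHom c).flip v)).of_le ?_
    rintro _ ⟨x, rfl⟩
    exact ⟨ξ ∘ₗ O.ρ c x, Submodule.mem_top, (O.rreg_cf c ξ v x).symm⟩
  | one =>
    refine (Submodule.fg_span_singleton (R := ℂ) (1 : O.A)).of_le ?_
    rintro _ ⟨x, rfl⟩
    exact Submodule.mem_span_singleton.mpr ⟨O.ε x, (O.rreg_apply_one x).symm⟩
  | smul r b hb =>
    refine hb.of_le ?_
    rintro _ ⟨x, rfl⟩
    exact ⟨r • x, by simp⟩
  | add b b' hb hb' =>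
    refine (hb.sup hb').of_le ?_
    rintro _ ⟨x, rfl⟩
    exact Submodule.mem_sup.mpr ⟨_, ⟨x, rfl⟩, _, ⟨x, rfl⟩, (map_add (O.rreg x) b b').symm⟩
  | mul b b' hb hb' =>
    refine (hb.mul hb').of_le ?_
    rintro _ ⟨x, rfl⟩
    exact O.rreg_mul_mem b b' x

theorem exists_rreg_apply_eq_sum (b : O.A) :
    ∃ (k : ℕ) (x : Fin k → O.U) (y : Fin k → LinearMap.range (O.rreg.flip b)),
      ∀ u, O.rreg u b = ∑ j, O.ι (O.lreg (x j) b) u • (y j : O.A) := by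
  set N := LinearMap.range (O.rreg.flip b)
  have h_inj : Function.Injective (O.ι ∘ₗ N.subtype) :=
    O.ι_injective.comp N.subtype_injective
  have h_surj := LinearMap.flip_surjective_iff₁.mpr h_inj
  let β := Module.finBasis ℂ N
  choose x hx using fun j => h_surj (β.coord j)
  refine ⟨_, x, β, fun u => ?_⟩
  have h_coord : ∀ j, β.repr ⟨O.rreg u b, u, rfl⟩ j = O.ι (O.lreg (x j) b) u := fun j =>
    (LinearMap.congr_fun (hx j) ⟨O.rreg u b, u, rfl⟩).symm.trans
      (by rw [ι_lreg, ← ι_rreg]; rfl)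
  have h_sum := congrArg N.subtype (β.sum_repr ⟨O.rreg u b, u, rfl⟩)
  simp only [h_coord, map_sum, map_smul, Submodule.subtype_apply] at h_sum
  exact h_sum.symm

theorem exists_ι_eq_comp_S (b : O.A) : ∃ b', O.ι b' = O.ι b ∘ₗ O.S := by
  induction b using O.cf_induction with
  | cf c ξ v =>
    obtain ⟨c', f, hf⟩ := O.exists_dualRep_equiv c
    refine ⟨O.cf c' (Module.Dual.eval ℂ _ v ∘ₗ f.symm) (f ξ), LinearMap.ext fun u => ?_⟩
    rw [LinearMap.comp_apply, ι_cf, ι_cf, ← hf, LinearMap.comp_apply, LinearEquiv.coe_coe,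
      f.symm_apply_apply]
    rfl
  | one => exact ⟨1, LinearMap.ext fun u => by simp [O.ι_one, ε_S]⟩
  | smul r b hb =>
    obtain ⟨y, hy⟩ := hb
    exact ⟨r • y, by rw [map_smul, map_smul, hy, LinearMap.smul_comp]⟩
  | add b b' hb hb' =>
    obtain ⟨y, hy⟩ := hb
    obtain ⟨y', hy'⟩ := hb'
    exact ⟨y + y', by rw [map_add, map_add, hy, hy', LinearMap.add_comp]⟩
  | mul b b' hb hb' =>
    obtain ⟨y, hy⟩ := hb
    obtain ⟨y', hy'⟩ := hb'
    have h_swap : ∀ w, dualDistrib ℂ O.U O.U (O.ι y' ⊗ₜ O.ι y) w =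
        dualDistrib ℂ O.U O.U (O.ι b ⊗ₜ O.ι b') (O.antipodeSwap w) := by
      intro w
      induction w using TensorProduct.induction_on with
      | zero => simp only [map_zero]
      | tmul u v => simp [hy, hy', antipodeSwap_tmul, mul_comm]
      | add w w' h h' => rw [map_add, map_add, map_add, h, h']
    exact ⟨y' * y, LinearMap.ext fun u => by
      rw [ι_mul_apply, h_swap, LinearMap.comp_apply, ι_mul_apply, Δ_S]⟩

theorem sum_mul_eq_smul_one {b : O.A} {k : ℕ} {x : Fin k → O.U} {y y' : Fin k → O.A}
    (hy : ∀ u, O.rreg u b = ∑ j, O.ι (O.lreg (x j) b) u • y j)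
    (hy' : ∀ j, O.ι (y' j) = O.ι (O.lreg (x j) b) ∘ₗ O.S) :
    ∑ j, y' j * y j = O.ι b 1 • (1 : O.A) := by
  have h_antipode : ∀ w, ∑ j, dualDistrib ℂ O.U O.U (O.ι (y' j) ⊗ₜ O.ι (y j)) w =
      O.ι b (O.antipodeMul w) := by
    intro w
    induction w using TensorProduct.induction_on with
    | zero => simp only [map_zero, Finset.sum_const_zero]
    | tmul u v => simp [hy', antipodeMul_tmul, ← ι_rreg, hy]
    | add w w' h h' => simp only [map_add, Finset.sum_add_distrib, h, h']
  refine ext fun u => ?_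
  simp only [map_sum, LinearMap.sum_apply, ι_mul_apply]
  rw [h_antipode, antipodeMul_Δ, Algebra.algebraMap_eq_smul_one]
  simp [O.ι_one, mul_comm]

theorem one_mem_of_rreg_mem {J : Submodule ℂ O.A} (h_mul : ∀ x, ∀ b ∈ J, x * b ∈ J)
    (h_rreg : ∀ u, ∀ b ∈ J, O.rreg u b ∈ J) (hJ : J ≠ ⊥) : (1 : O.A) ∈ J := by
  obtain ⟨b₀, hb₀, h_ne⟩ := Submodule.exists_mem_ne_zero_of_ne_bot hJ
  obtain ⟨u, hu⟩ : ∃ u, O.ι b₀ u ≠ 0 := by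
    by_contra! h
    exact h_ne (ext fun u => by rw [h, map_zero, LinearMap.zero_apply])
  set b := O.rreg u b₀ with hb_def
  have hb : b ∈ J := h_rreg u b₀ hb₀
  have hb1 : O.ι b 1 ≠ 0 := by rwa [hb_def, ι_rreg, mul_one]
  obtain ⟨k, x, y, hy⟩ := O.exists_rreg_apply_eq_sum b
  choose y' hy' using fun j => O.exists_ι_eq_comp_S (O.lreg (x j) b)
  have h_sum := O.sum_mul_eq_smul_one hy hy'
  have hyJ : ∀ j, (y j : O.A) ∈ J := by
    intro j
    obtain ⟨v, hv⟩ := (y j).2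
    exact hv ▸ h_rreg v b hb
  rw [← Submodule.smul_mem_iff J hb1, ← h_sum]
  exact Submodule.sum_mem _ fun j _ => h_mul _ _ (hyJ j)

end HopfIdeal

/-- Pairs `(κ, θ)` of weights. A coordinate function `cf c ξ v` with `ξ` of weight `-κ` and `v` of
weight `θ` has biweight `(κ, θ)`; with this sign, evaluation at `1` vanishes on biweights with
`κ ≠ θ`. -/
abbrev Biweight (n : ℕ) : Type := (Fin n → ℤ) × (Fin n → ℤ)

section Weight

variable (O : QuantizedCoordinateRing q a d)

/-- The subspace of `O_q(G)` on which `K i` acts by `q ^ (p.1 i * d i)` through the right regular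
action and by `q ^ (p.2 i * d i)` through the left one. -/
noncomputable def weightSpace (p : Biweight n) : Submodule ℂ O.A :=
  ⨅ i, (O.rreg (O.K i)).eigenspace (q ^ (p.1 i * d i)) ⊓
    (O.lreg (O.K i)).eigenspace (q ^ (p.2 i * d i))

variable {O} {p p' : Biweight n} {b b' : O.A}

theorem mem_weightSpace : b ∈ O.weightSpace p ↔ ∀ i,
    O.rreg (O.K i) b = q ^ (p.1 i * d i) • b ∧ O.lreg (O.K i) b = q ^ (p.2 i * d i) • b := by
  simp [weightSpace, Submodule.mem_iInf]

theorem rreg_K_apply (hb : b ∈ O.weightSpace p) (i : Fin n) :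
    O.rreg (O.K i) b = q ^ (p.1 i * d i) • b :=
  (mem_weightSpace.mp hb i).1

theorem lreg_K_apply (hb : b ∈ O.weightSpace p) (i : Fin n) :
    O.lreg (O.K i) b = q ^ (p.2 i * d i) • b :=
  (mem_weightSpace.mp hb i).2

theorem rreg_K_inv_apply (hb : b ∈ O.weightSpace p) (i : Fin n) :
    O.rreg ↑(O.K i)⁻¹ b = q ^ (-(p.1 i * d i)) • b := by
  rw [zpow_neg, eq_inv_smul_iff₀ (zpow_ne_zero _ O.q_ne_zero), ← map_smul, ← rreg_K_apply hb,
    ← rreg_mul, Units.mul_inv, rreg_one]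

theorem lreg_K_inv_apply (hb : b ∈ O.weightSpace p) (i : Fin n) :
    O.lreg ↑(O.K i)⁻¹ b = q ^ (-(p.2 i * d i)) • b := by
  rw [zpow_neg, eq_inv_smul_iff₀ (zpow_ne_zero _ O.q_ne_zero), ← map_smul, ← lreg_K_apply hb,
    ← lreg_mul, Units.inv_mul, lreg_one]

theorem cf_mem_weightSpace {c : Fin n → ℕ} {κ θ : Fin n → ℤ} {ξ : Module.Dual ℂ (O.V c)}
    {v : O.V c} (hξ : inDualWt q d O.K (O.ρ c) (-κ) ξ) (hv : v ∈ wtSp q d O.K (O.ρ c) θ) :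
    O.cf c ξ v ∈ O.weightSpace (κ, θ) := by
  refine mem_weightSpace.mpr fun i => ⟨?_, ?_⟩
  · rw [rreg_cf, show ξ ∘ₗ O.ρ c (O.K i) = q ^ (κ i * d i) • ξ from LinearMap.ext fun x => by
      simpa using apply_K_of_inDualWt (O.iSup_wtSp c) hξ i x]
    exact LinearMap.map_smul₂ (O.cfHom c) _ ξ v
  · rw [lreg_cf, O.mem_wtSp.mp hv i]
    exact (O.cfHom c ξ).map_smul _ v

theorem lreg_E_cf_eq_zero {c : Fin n → ℕ} (ξ : Module.Dual ℂ (O.V c)) {v : O.V c}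
    (hv : v ∈ wtSp q d O.K (O.ρ c) (dominantWeight c)) (i : Fin n) :
    O.lreg (O.E i) (O.cf c ξ v) = 0 := by
  rw [lreg_cf, O.E_apply_eq_zero hv]
  exact map_zero (O.cfHom c ξ)

theorem lreg_F_cf_eq_zero {c : Fin n → ℕ} (ξ : Module.Dual ℂ (O.V c)) {v : O.V c}
    (hv : v ∈ wtSp q d O.K (O.ρ c) ((O.σ O.w₀).toAdd (dominantWeight c))) (i : Fin n) :
    O.lreg (O.F i) (O.cf c ξ v) = 0 := by
  rw [lreg_cf, O.F_apply_eq_zero hv]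
  exact map_zero (O.cfHom c ξ)

theorem rreg_E_cf_eq_zero {c : Fin n → ℕ} {ξ : Module.Dual ℂ (O.V c)}
    (hξ : inDualWt q d O.K (O.ρ c) (-(O.σ O.w₀).toAdd (dominantWeight c)) ξ) (v : O.V c)
    (i : Fin n) : O.rreg (O.E i) (O.cf c ξ v) = 0 := by
  rw [rreg_cf, show ξ ∘ₗ O.ρ c (O.E i) = 0 from LinearMap.ext (O.apply_E_eq_zero hξ i)]
  exact LinearMap.map_zero₂ (O.cfHom c) v

theorem rreg_F_cf_eq_zero {c : Fin n → ℕ} {ξ : Module.Dual ℂ (O.V c)}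
    (hξ : inDualWt q d O.K (O.ρ c) (-dominantWeight c) ξ) (v : O.V c) (i : Fin n) :
    O.rreg (O.F i) (O.cf c ξ v) = 0 := by
  rw [rreg_cf, show ξ ∘ₗ O.ρ c (O.F i) = 0 from LinearMap.ext (O.apply_F_eq_zero hξ i)]
  exact LinearMap.map_zero₂ (O.cfHom c) v

theorem one_mem_weightSpace : (1 : O.A) ∈ O.weightSpace 0 := by
  refine mem_weightSpace.mpr fun i => ⟨?_, ?_⟩ <;>
    exact ext fun u => by simp [ι_rreg, ι_lreg, O.ι_one, O.ε_K]

theorem mul_mem_weightSpace (hb : b ∈ O.weightSpace p) (hb' : b' ∈ O.weightSpace p') :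
    b * b' ∈ O.weightSpace (p + p') := by
  refine mem_weightSpace.mpr fun i => ⟨?_, ?_⟩
  · rw [rreg_K_mul, rreg_K_apply hb, rreg_K_apply hb', smul_mul_smul_comm,
      ← zpow_add₀ O.q_ne_zero, ← add_mul]
    rfl
  · rw [lreg_K_mul, lreg_K_apply hb, lreg_K_apply hb', smul_mul_smul_comm,
      ← zpow_add₀ O.q_ne_zero, ← add_mul]
    rfl

theorem lreg_E_mem_weightSpace (hb : b ∈ O.weightSpace p) (k : Fin n) :
    O.lreg (O.E k) b ∈ O.weightSpace (p + (0, simpleRoot a k)) := by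
  refine mem_weightSpace.mpr fun i => ⟨?_, ?_⟩
  · rw [rreg_lreg, rreg_K_apply hb, map_smul]
    simp
  · rw [← lreg_mul, O.K_mul_E, map_smul, LinearMap.smul_apply, lreg_mul, lreg_K_apply hb, map_smul,
      smul_smul, ← zpow_add₀ O.q_ne_zero, ← simpleRoot_mul, ← add_mul, add_comm]
    rfl

theorem lreg_F_mem_weightSpace (hb : b ∈ O.weightSpace p) (k : Fin n) :
    O.lreg (O.F k) b ∈ O.weightSpace (p - (0, simpleRoot a k)) := by
  refine mem_weightSpace.mpr fun i => ⟨?_, ?_⟩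
  · rw [rreg_lreg, rreg_K_apply hb, map_smul]
    simp
  · rw [← lreg_mul, O.K_mul_F, map_smul, LinearMap.smul_apply, lreg_mul, lreg_K_apply hb, map_smul,
      smul_smul, ← zpow_add₀ O.q_ne_zero, ← simpleRoot_mul, neg_add_eq_sub, ← sub_mul]
    rfl

theorem rreg_E_mem_weightSpace (hb : b ∈ O.weightSpace p) (k : Fin n) :
    O.rreg (O.E k) b ∈ O.weightSpace (p - (simpleRoot a k, 0)) := by
  refine mem_weightSpace.mpr fun i => ⟨?_, ?_⟩
  · have h_comm : O.E k * O.K i = q ^ (-(d i * a i k)) • (↑(O.K i) * O.E k) := by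
      rw [O.K_mul_E, smul_smul, ← zpow_add₀ O.q_ne_zero, neg_add_cancel, zpow_zero, one_smul]
    rw [← rreg_mul, h_comm, map_smul, LinearMap.smul_apply, rreg_mul, rreg_K_apply hb, map_smul,
      smul_smul, ← zpow_add₀ O.q_ne_zero, ← simpleRoot_mul, neg_add_eq_sub, ← sub_mul]
    rfl
  · rw [← rreg_lreg, lreg_K_apply hb, map_smul]
    simp

theorem rreg_F_mem_weightSpace (hb : b ∈ O.weightSpace p) (k : Fin n) :
    O.rreg (O.F k) b ∈ O.weightSpace (p + (simpleRoot a k, 0)) := by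
  refine mem_weightSpace.mpr fun i => ⟨?_, ?_⟩
  · have h_comm : O.F k * O.K i = q ^ (d i * a i k) • (↑(O.K i) * O.F k) := by
      rw [O.K_mul_F, smul_smul, ← zpow_add₀ O.q_ne_zero, add_neg_cancel, zpow_zero, one_smul]
    rw [← rreg_mul, h_comm, map_smul, LinearMap.smul_apply, rreg_mul, rreg_K_apply hb, map_smul,
      smul_smul, ← zpow_add₀ O.q_ne_zero, ← simpleRoot_mul, ← add_mul, add_comm]
    rfl
  · rw [← rreg_lreg, lreg_K_apply hb, map_smul]
    simp

variable {P : Biweight n → Submodule ℂ O.A}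

theorem mem_of_mem_iSup_of_le_weightSpace (hP : ∀ p, P p ≤ O.weightSpace p)
    (hb : b ∈ ⨆ p, P p) (hbp : b ∈ O.weightSpace p) : b ∈ P p := by
  let χ : Biweight n → Fin n ⊕ Fin n → ℂ := fun p =>
    Sum.elim (fun i => q ^ (p.1 i * d i)) fun i => q ^ (p.2 i * d i)
  have h_eigen : ∀ p, ∀ y ∈ O.weightSpace p, ∀ i,
      Sum.elim (fun i => O.rreg (O.K i)) (fun i => O.lreg (O.K i)) i y = χ p i • y := by
    rintro p y hy (i | i)
    · exact rreg_K_apply hy i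
    · exact lreg_K_apply hy i
  have hχ : Function.Injective χ := fun p p' h =>
    Prod.ext (O.weight_injective (congrArg (· ∘ Sum.inl) h))
      (O.weight_injective (congrArg (· ∘ Sum.inr) h))
  exact mem_of_mem_iSup_of_simultaneous_eigenvectors hχ (fun p y hy => h_eigen p y (hP p hy)) hb
    (h_eigen p b hbp)

theorem iSup_eq_top_of_cf_mem (h_one : 1 ∈ P 0)
    (h_mul : ∀ p p', ∀ b ∈ P p, ∀ b' ∈ P p', b * b' ∈ P (p + p'))
    (h_cf : ∀ c κ θ, ∀ ξ : Module.Dual ℂ (O.V c), ∀ v, inDualWt q d O.K (O.ρ c) (-κ) ξ →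
      v ∈ wtSp q d O.K (O.ρ c) θ → O.cf c ξ v ∈ ⨆ p, P p) : ⨆ p, P p = ⊤ := by
  have mul_mem : (⨆ p, P p) * (⨆ p, P p) ≤ ⨆ p, P p := by
    simp only [Submodule.iSup_mul, Submodule.mul_iSup]
    exact iSup₂_le fun p p' => Submodule.mul_le.mpr fun b hb b' hb' =>
      Submodule.mem_iSup_of_mem _ (h_mul _ _ b hb b' hb')
  refine eq_top_iff.mpr fun b _ => ?_
  induction b using O.cf_induction with
  | cf c ξ v =>
    have hξ : ξ ∈ ⨆ μ, wtSp q d O.K (O.dualRep (O.ρ c)) μ :=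
      iSup_wtSp_dualRep (O.iSup_wtSp c) ▸ Submodule.mem_top
    have hv : v ∈ ⨆ μ, wtSp q d O.K (O.ρ c) μ := O.iSup_wtSp c ▸ Submodule.mem_top
    have h_le : ∀ μ, wtSp q d O.K (O.dualRep (O.ρ c)) μ ≤ (⨆ p, P p).comap ((O.cfHom c).flip v) :=
      fun μ ξ hξ => (iSup_le fun θ v hv => h_cf c (-μ) θ ξ v
        (by rw [neg_neg]; exact inDualWt_of_mem_wtSp_dualRep hξ) hv :
          ⨆ μ, wtSp q d O.K (O.ρ c) μ ≤ (⨆ p, P p).comap (O.cfHom c ξ)) hv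
    exact iSup_le h_le hξ
  | one => exact Submodule.mem_iSup_of_mem 0 h_one
  | smul r b hb => exact Submodule.smul_mem _ r (hb trivial)
  | add b b' hb hb' => exact add_mem (hb trivial) (hb' trivial)
  | mul b b' hb hb' => exact mul_mem (Submodule.mul_mem_mul (hb trivial) (hb' trivial))

theorem iSup_weightSpace : ⨆ p, O.weightSpace p = ⊤ :=
  iSup_eq_top_of_cf_mem one_mem_weightSpace (fun _ _ _ hb _ hb' => mul_mem_weightSpace hb hb')
    fun _ _ _ _ _ hξ hv => Submodule.mem_iSup_of_mem _ (cf_mem_weightSpace hξ hv)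

theorem weightSpace_le (h_one : 1 ∈ P 0)
    (h_mul : ∀ p p', ∀ b ∈ O.weightSpace p ⊓ P p, ∀ b' ∈ O.weightSpace p' ⊓ P p',
      b * b' ∈ P (p + p'))
    (h_cf : ∀ c κ θ, ∀ ξ : Module.Dual ℂ (O.V c), ∀ v, inDualWt q d O.K (O.ρ c) (-κ) ξ →
      v ∈ wtSp q d O.K (O.ρ c) θ → O.cf c ξ v ∈ ⨆ p, O.weightSpace p ⊓ P p) :
    O.weightSpace p ≤ P p := by
  intro b hb
  have h_top : ⨆ p, O.weightSpace p ⊓ P p = ⊤ :=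
    iSup_eq_top_of_cf_mem ⟨one_mem_weightSpace, h_one⟩
      (fun p p' b hb b' hb' => ⟨mul_mem_weightSpace hb.1 hb'.1, h_mul p p' b hb b' hb'⟩) h_cf
  exact (mem_of_mem_iSup_of_le_weightSpace (fun _ => inf_le_left)
    (h_top ▸ Submodule.mem_top) hb).2

end Weight

section CommutationDefect

variable (O : QuantizedCoordinateRing q a d)

/-- The scalar `q ^ ((κ, κ') - (θ, θ'))`, where `p = (κ, θ)` and `p' = (κ', θ')`; the form may take
fractional values, hence the root of `q`. -/
noncomputable def twist (p p' : Biweight n) : ℂˣ :=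
  O.weightForm.root ^ (O.weightForm.form p.1 p'.1 - O.weightForm.form p.2 p'.2)

theorem twist_comm (p p' : Biweight n) : O.twist p p' = O.twist p' p := by
  rw [twist, twist, O.weightForm.form_comm, O.weightForm.form_comm p.2]

theorem twist_add (p p₁ p₂ : Biweight n) :
    O.twist p (p₁ + p₂) = O.twist p p₁ * O.twist p p₂ := by
  rw [twist, twist, twist, ← zpow_add, Prod.fst_add, Prod.snd_add, map_add, map_add,
    add_sub_add_comm]

theorem twist_sub (p p₁ p₂ : Biweight n) :
    O.twist p (p₁ - p₂) = O.twist p p₁ * (O.twist p p₂)⁻¹ := by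
  rw [eq_mul_inv_iff_mul_eq, ← twist_add, sub_add_cancel]

theorem twist_zero (p : Biweight n) : O.twist p 0 = 1 := by
  have := O.twist_add p 0 0
  rwa [add_zero, left_eq_mul] at this

theorem root_zpow_scale_mul (m : ℤ) :
    (O.weightForm.root : ℂ) ^ (O.weightForm.scale * m : ℤ) = q ^ m := by
  rw [zpow_mul, zpow_natCast, O.weightForm.root_pow]

theorem twist_simpleRoot_fst (p : Biweight n) (k : Fin n) :
    (O.twist p (simpleRoot a k, 0) : ℂ) = q ^ (p.1 k * d k) := by
  rw [twist, map_zero, sub_zero, O.weightForm.form_simpleRoot, Units.val_zpow_eq_zpow_val,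
    root_zpow_scale_mul, mul_comm]

theorem twist_simpleRoot_snd (p : Biweight n) (k : Fin n) :
    (O.twist p (0, simpleRoot a k) : ℂ) = q ^ (-(p.2 k * d k)) := by
  rw [twist, map_zero, zero_sub, O.weightForm.form_simpleRoot, Units.val_zpow_eq_zpow_val,
    ← mul_neg, root_zpow_scale_mul, mul_comm (d k : ℤ)]

variable {O}

theorem lreg_mem_of_mem_adjoin {S : Set O.U} {N : Submodule ℂ O.A}
    (hS : ∀ u ∈ S, ∀ b ∈ N, O.lreg u b ∈ N) {u : O.U} (hu : u ∈ Algebra.adjoin ℂ S) :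
    ∀ b ∈ N, O.lreg u b ∈ N :=
  mem_of_forall_mem_adjoin (AlgHom.ofLinearMap O.lreg (LinearMap.ext O.lreg_one) fun x y =>
    LinearMap.ext (O.lreg_mul x y)) hS hu

theorem rreg_mem_of_mem_adjoin {S : Set O.U} {N : Submodule ℂ O.A}
    (hS : ∀ u ∈ S, ∀ b ∈ N, O.rreg u b ∈ N) {u : O.U} (hu : u ∈ Algebra.adjoin ℂ S) :
    ∀ b ∈ N, O.rreg u b ∈ N := by
  induction hu using Algebra.adjoin_induction with
  | mem u hu => exact hS u hu
  | algebraMap r =>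
    intro b hb
    rw [Algebra.algebraMap_eq_smul_one, map_smul, LinearMap.smul_apply, rreg_one]
    exact N.smul_mem r hb
  | add u v _ _ hu hv => intro b hb; rw [map_add]; exact N.add_mem (hu b hb) (hv b hb)
  | mul u v _ _ hu hv => intro b hb; rw [rreg_mul]; exact hv _ (hu b hb)

/-- A subspace of `O_q(G)` is bihomogeneous if it contains the biweight components of each of its
elements. -/
def IsBihomogeneous (N : Submodule ℂ O.A) : Prop := N ≤ ⨆ p, O.weightSpace p ⊓ N

theorem isBihomogeneous_span {S : Set O.A} (hS : ∀ b ∈ S, ∃ p, b ∈ O.weightSpace p) :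
    IsBihomogeneous (Submodule.span ℂ S) := by
  refine Submodule.span_le.mpr fun b hb => ?_
  obtain ⟨p, hp⟩ := hS b hb
  exact Submodule.mem_iSup_of_mem p ⟨hp, Submodule.subset_span hb⟩

theorem isBihomogeneous_iSup {P : Biweight n → Submodule ℂ O.A} (hP : ∀ p, P p ≤ O.weightSpace p) :
    IsBihomogeneous (⨆ p, P p) :=
  iSup_mono fun p => le_inf (hP p) (le_iSup P p)

theorem IsBihomogeneous.apply_mem {N : Submodule ℂ O.A} (hN : IsBihomogeneous N)
    {f : Module.End ℂ O.A} {χ : Biweight n → ℂ} (hf : ∀ p, ∀ b ∈ O.weightSpace p, f b = χ p • b) :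
    ∀ b ∈ N, f b ∈ N := by
  refine fun b hb => (iSup_le fun p b hb => ?_ : ⨆ p, O.weightSpace p ⊓ N ≤ N.comap f) (hN hb)
  exact N.mem_comap.mpr (hf p b hb.1 ▸ N.smul_mem _ hb.2)

theorem IsBihomogeneous.lreg_mem_of_mem_cartan {N : Submodule ℂ O.A} (hN : IsBihomogeneous N)
    {u : O.U} (hu : u ∈ O.cartan) : ∀ b ∈ N, O.lreg u b ∈ N := by
  refine lreg_mem_of_mem_adjoin ?_ hu
  rintro _ (⟨i, rfl⟩ | ⟨i, rfl⟩)
  · exact hN.apply_mem fun p b hb => lreg_K_apply hb i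
  · exact hN.apply_mem fun p b hb => lreg_K_inv_apply hb i

theorem IsBihomogeneous.rreg_mem_of_mem_cartan {N : Submodule ℂ O.A} (hN : IsBihomogeneous N)
    {u : O.U} (hu : u ∈ O.cartan) : ∀ b ∈ N, O.rreg u b ∈ N := by
  refine rreg_mem_of_mem_adjoin ?_ hu
  rintro _ (⟨i, rfl⟩ | ⟨i, rfl⟩)
  · exact hN.apply_mem fun p b hb => rreg_K_apply hb i
  · exact hN.apply_mem fun p b hb => rreg_K_inv_apply hb i

theorem IsBihomogeneous.lreg_mem_of_lreg_E_eq_zero {M : Submodule ℂ O.A} (hM : IsBihomogeneous M)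
    (hF : ∀ i, ∀ b ∈ M, O.lreg (O.F i) b ∈ M) {b : O.A} (hb : ∀ i, O.lreg (O.E i) b = 0)
    (hbM : b ∈ M) (u : O.U) : O.lreg u b ∈ M := by
  have h_upper : ∀ e ∈ O.upper, O.lreg e b ∈ Submodule.span ℂ {b} := by
    refine fun e he => lreg_mem_of_mem_adjoin (Set.forall_mem_range.mpr fun i x hx => ?_) he b
      (Submodule.mem_span_singleton_self b)
    obtain ⟨r, rfl⟩ := Submodule.mem_span_singleton.mp hx
    rw [map_smul, hb, smul_zero]
    exact zero_mem _
  have h_span : Submodule.span ℂ {b} ≤ M := (M.span_singleton_le_iff_mem b).mpr hbM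
  induction u using O.triangular_induction with
  | mul f hf k hk e he =>
    rw [lreg_mul, lreg_mul]
    exact lreg_mem_of_mem_adjoin (Set.forall_mem_range.mpr hF) hf _
      (hM.lreg_mem_of_mem_cartan hk _ (h_span (h_upper e he)))
  | add u v hu hv => rw [map_add]; exact M.add_mem hu hv

theorem IsBihomogeneous.rreg_mem_of_rreg_F_eq_zero {M : Submodule ℂ O.A} (hM : IsBihomogeneous M)
    (hE : ∀ i, ∀ b ∈ M, O.rreg (O.E i) b ∈ M) {b : O.A} (hb : ∀ i, O.rreg (O.F i) b = 0)
    (hbM : b ∈ M) (u : O.U) : O.rreg u b ∈ M := by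
  have h_lower : ∀ f ∈ O.lower, O.rreg f b ∈ Submodule.span ℂ {b} := by
    refine fun f hf => rreg_mem_of_mem_adjoin (Set.forall_mem_range.mpr fun i x hx => ?_) hf b
      (Submodule.mem_span_singleton_self b)
    obtain ⟨r, rfl⟩ := Submodule.mem_span_singleton.mp hx
    rw [map_smul, hb, smul_zero]
    exact zero_mem _
  have h_span : Submodule.span ℂ {b} ≤ M := (M.span_singleton_le_iff_mem b).mpr hbM
  induction u using O.triangular_induction with
  | mul f hf k hk e he =>
    rw [rreg_mul, rreg_mul]
    exact rreg_mem_of_mem_adjoin (Set.forall_mem_range.mpr hE) he _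
      (hM.rreg_mem_of_mem_cartan hk _ (h_span (h_lower f hf)))
  | add u v hu hv => rw [map_add]; exact M.add_mem hu hv

theorem IsBihomogeneous.eq_bot_of_apply_one_eq_zero {N : Submodule ℂ O.A} (hN : IsBihomogeneous N)
    (hE : ∀ i, ∀ b ∈ N, O.lreg (O.E i) b ∈ N) (hF : ∀ i, ∀ b ∈ N, O.rreg (O.F i) b ∈ N)
    (h_one : ∀ b ∈ N, O.ι b 1 = 0) : N = ⊥ := by
  refine (Submodule.eq_bot_iff N).mpr fun b hb => ext fun u => ?_
  rw [map_zero, LinearMap.zero_apply]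
  induction u using O.triangular_induction with
  | mul f hf k hk e he =>
    have h_mem : O.rreg f (O.lreg k (O.lreg e b)) ∈ N :=
      rreg_mem_of_mem_adjoin (Set.forall_mem_range.mpr hF) hf _
        (hN.lreg_mem_of_mem_cartan hk _
          (lreg_mem_of_mem_adjoin (Set.forall_mem_range.mpr hE) he b hb))
    have h_apply := h_one _ h_mem
    rwa [ι_rreg, ι_lreg, ι_lreg, mul_one] at h_apply
  | add u v hu hv => rw [map_add, hu, hv, add_zero]

variable {p p' : Biweight n} {x y : O.A}

theorem ι_apply_one_eq_zero (hx : x ∈ O.weightSpace p) (hp : p.1 ≠ p.2) : O.ι x 1 = 0 := by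
  by_contra h
  refine hp (funext fun i => O.zpow_mul_d_inj.mp (mul_right_cancel₀ h (?_ :
    q ^ (p.1 i * d i) * O.ι x 1 = q ^ (p.2 i * d i) * O.ι x 1)))
  have h_rreg : O.ι (O.rreg (O.K i) x) 1 = q ^ (p.1 i * d i) * O.ι x 1 := by
    rw [rreg_K_apply hx, map_smul]
    rfl
  have h_lreg : O.ι (O.lreg (O.K i) x) 1 = q ^ (p.2 i * d i) * O.ι x 1 := by
    rw [lreg_K_apply hx, map_smul]
    rfl
  rw [← h_rreg, ← h_lreg, ι_rreg, ι_lreg, one_mul, mul_one]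

theorem ι_mul_apply_one (x y : O.A) : O.ι (x * y) 1 = O.ι x 1 * O.ι y 1 := by
  rw [ι_mul_apply, map_one, Algebra.TensorProduct.one_def, TensorProduct.dualDistrib_apply]

variable (O) in
/-- The deviations from `twist`-commutation of an `x` killed by the left `E i` and a `y` killed by
the right `F i`. -/
noncomputable def commutationDefect : Submodule ℂ O.A :=
  Submodule.span ℂ {z | ∃ p p', ∃ x ∈ O.weightSpace p, ∃ y ∈ O.weightSpace p',
    (∀ i, O.lreg (O.E i) x = 0) ∧ (∀ i, O.rreg (O.F i) y = 0) ∧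
    z = x * y - (O.twist p p' : ℂ) • (y * x)}

theorem lreg_E_mem_commutationDefect (i : Fin n) :
    ∀ b ∈ O.commutationDefect, O.lreg (O.E i) b ∈ O.commutationDefect := by
  refine Submodule.span_le (p := O.commutationDefect.comap (O.lreg (O.E i))) |>.mpr ?_
  rintro _ ⟨p, p', x, hx, y, hy, hEx, hFy, rfl⟩
  refine (Submodule.smul_mem_iff _ (zpow_ne_zero (-(p.2 i * d i)) O.q_ne_zero)).mp
    (Submodule.subset_span ⟨p, p' + (0, simpleRoot a i), x, hx, O.lreg (O.E i) y,
      lreg_E_mem_weightSpace hy i, hEx, fun j => by rw [rreg_lreg, hFy, map_zero], ?_⟩)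
  rw [twist_add, Units.val_mul, twist_simpleRoot_snd, map_smul, map_sub, map_smul, lreg_E_mul,
    lreg_E_mul, hEx, zero_mul, zero_add, mul_zero, add_zero, lreg_K_apply hx, smul_mul_assoc,
    smul_sub, smul_smul, smul_smul, ← zpow_add₀ O.q_ne_zero, neg_add_cancel, zpow_zero, one_smul,
    mul_comm]

theorem rreg_F_mem_commutationDefect (i : Fin n) :
    ∀ b ∈ O.commutationDefect, O.rreg (O.F i) b ∈ O.commutationDefect := by
  refine Submodule.span_le (p := O.commutationDefect.comap (O.rreg (O.F i))) |>.mpr ?_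
  rintro _ ⟨p, p', x, hx, y, hy, hEx, hFy, rfl⟩
  refine (Submodule.smul_mem_iff _ (zpow_ne_zero (p'.1 i * d i) O.q_ne_zero)).mp
    (Submodule.subset_span ⟨p + (simpleRoot a i, 0), p', O.rreg (O.F i) x,
      rreg_F_mem_weightSpace hx i, y, hy, fun j => by rw [← rreg_lreg, hEx, map_zero], hFy, ?_⟩)
  rw [O.twist_comm (p + (simpleRoot a i, 0)), twist_add, Units.val_mul, twist_simpleRoot_fst,
    O.twist_comm p' p, map_smul, map_sub, map_smul, rreg_F_mul, rreg_F_mul, hFy, zero_mul,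
    zero_add, mul_zero, add_zero, rreg_K_inv_apply hy, mul_smul_comm, smul_sub, smul_smul,
    smul_smul, ← zpow_add₀ O.q_ne_zero, add_neg_cancel, zpow_zero, one_smul, mul_comm]

theorem isBihomogeneous_commutationDefect : IsBihomogeneous O.commutationDefect := by
  refine isBihomogeneous_span ?_
  rintro _ ⟨p, p', x, hx, y, hy, -, -, rfl⟩
  exact ⟨p + p', Submodule.sub_mem _ (mul_mem_weightSpace hx hy)
    (Submodule.smul_mem _ _ (add_comm p' p ▸ mul_mem_weightSpace hy hx))⟩

theorem ι_apply_one_eq_zero_of_mem_commutationDefect :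
    ∀ b ∈ O.commutationDefect, O.ι b 1 = 0 := by
  refine Submodule.span_le (p := LinearMap.ker (O.ι.flip 1)) |>.mpr ?_
  rintro _ ⟨p, p', x, hx, y, hy, -, -, rfl⟩
  rw [SetLike.mem_coe, LinearMap.mem_ker, LinearMap.flip_apply, map_sub, map_smul,
    LinearMap.sub_apply, LinearMap.smul_apply, ι_mul_apply_one, ι_mul_apply_one]
  by_cases hp : p.1 = p.2
  · by_cases hp' : p'.1 = p'.2
    · rw [twist, hp, hp', sub_self, zpow_zero, Units.val_one, one_smul, mul_comm, sub_self]
    · simp [ι_apply_one_eq_zero hy hp']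
  · simp [ι_apply_one_eq_zero hx hp]

theorem mul_eq_twist_smul_mul (hx : x ∈ O.weightSpace p) (hy : y ∈ O.weightSpace p')
    (hEx : ∀ i, O.lreg (O.E i) x = 0) (hFy : ∀ i, O.rreg (O.F i) y = 0) :
    x * y = (O.twist p p' : ℂ) • (y * x) := by
  have h_bot : O.commutationDefect = ⊥ :=
    isBihomogeneous_commutationDefect.eq_bot_of_apply_one_eq_zero lreg_E_mem_commutationDefect
      rreg_F_mem_commutationDefect ι_apply_one_eq_zero_of_mem_commutationDefect
  refine sub_eq_zero.mp ((Submodule.mem_bot ℂ).mp (h_bot ▸ ?_))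
  exact Submodule.subset_span ⟨p, p', x, hx, y, hy, hEx, hFy, rfl⟩

end CommutationDefect

section SkewCommutation

variable {O : QuantizedCoordinateRing q a d} {p p₀ : Biweight n} {b z : O.A}

theorem IsBihomogeneous.cf_mem_of_rreg_E_mem {M : Submodule ℂ O.A} (hM : IsBihomogeneous M)
    (hE : ∀ i, ∀ b ∈ M, O.rreg (O.E i) b ∈ M) {c : Fin n → ℕ} {v : O.V c}
    (hv : ∀ ξ, inDualWt q d O.K (O.ρ c) (-dominantWeight c) ξ → O.cf c ξ v ∈ M)
    (ξ : Module.Dual ℂ (O.V c)) : O.cf c ξ v ∈ M := by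
  obtain ⟨x, hx⟩ := O.exists_highestWeightVector c
  obtain ⟨ξ₀, hξ₀, hξ₀x⟩ := exists_mem_wtSp_apply_ne_zero (O.iSup_wtSp c) hx.2.1 hx.1
  have hξ₀_wt := inDualWt_of_mem_wtSp_dualRep hξ₀
  have hξ₀_ne : ξ₀ ≠ 0 := fun h => hξ₀x (by rw [h, LinearMap.zero_apply])
  obtain ⟨u, rfl⟩ := (O.isIrreducible c).dualRep.exists_apply_eq hξ₀_ne ξ
  rw [show O.dualRep (O.ρ c) u ξ₀ = ξ₀ ∘ₗ O.ρ c (O.S u) from rfl, ← rreg_cf]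
  exact hM.rreg_mem_of_rreg_F_eq_zero hE (rreg_F_cf_eq_zero hξ₀_wt v) (hv ξ₀ hξ₀_wt) _

theorem IsBihomogeneous.cf_mem_of_lreg_F_mem {M : Submodule ℂ O.A} (hM : IsBihomogeneous M)
    (hF : ∀ i, ∀ b ∈ M, O.lreg (O.F i) b ∈ M) {c : Fin n → ℕ} {ξ : Module.Dual ℂ (O.V c)}
    (hξ : ∀ v ∈ wtSp q d O.K (O.ρ c) (dominantWeight c), O.cf c ξ v ∈ M) (v : O.V c) :
    O.cf c ξ v ∈ M := by
  obtain ⟨v₀, hv₀, hv₀_wt, -⟩ := O.exists_highestWeightVector c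
  obtain ⟨u, rfl⟩ := (O.isIrreducible c).exists_apply_eq hv₀ v
  rw [← lreg_cf]
  exact hM.lreg_mem_of_lreg_E_eq_zero hF (lreg_E_cf_eq_zero ξ hv₀_wt) (hξ v₀ hv₀_wt) u

/-- The elements of biweight `p` that commute with `z` up to the scalar `χ p`. -/
noncomputable def skewCommutant (z : O.A) (χ : Biweight n → ℂˣ) (p : Biweight n) :
    Submodule ℂ O.A :=
  O.weightSpace p ⊓ LinearMap.eqLocus (LinearMap.mulLeft ℂ z) ((χ p : ℂ) • LinearMap.mulRight ℂ z)

theorem mem_skewCommutant {χ : Biweight n → ℂˣ} :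
    b ∈ skewCommutant z χ p ↔ b ∈ O.weightSpace p ∧ z * b = (χ p : ℂ) • (b * z) := Iff.rfl

theorem mul_eq_smul_mul_of_cf_mem {χ : Biweight n → ℂˣ} (h_zero : χ 0 = 1)
    (h_add : ∀ p p', χ (p + p') = χ p * χ p')
    (h_cf : ∀ c κ θ, ∀ ξ : Module.Dual ℂ (O.V c), ∀ v, inDualWt q d O.K (O.ρ c) (-κ) ξ →
      v ∈ wtSp q d O.K (O.ρ c) θ → O.cf c ξ v ∈ ⨆ p, skewCommutant z χ p)
    (hb : b ∈ O.weightSpace p) : z * b = (χ p : ℂ) • (b * z) := by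
  refine (weightSpace_le ?_ (fun p p' b hb b' hb' => ?_) h_cf hb : b ∈
    LinearMap.eqLocus (LinearMap.mulLeft ℂ z) ((χ p : ℂ) • LinearMap.mulRight ℂ z))
  · simp [h_zero]
  · obtain ⟨⟨-, hb⟩, -, hb'⟩ := And.intro (mem_skewCommutant.mp hb) (mem_skewCommutant.mp hb')
    change z * (b * b') = (χ (p + p') : ℂ) • (b * b' * z)
    rw [← mul_assoc, hb, smul_mul_assoc, mul_assoc b, hb', mul_smul_comm, smul_smul, h_add,
      Units.val_mul, mul_assoc]

theorem isBihomogeneous_iSup_skewCommutant (z : O.A) (χ : Biweight n → ℂˣ) :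
    IsBihomogeneous (⨆ p, skewCommutant z χ p) :=
  isBihomogeneous_iSup fun _ => inf_le_left

theorem iSup_skewCommutant_le_comap_rreg_E (hz : z ∈ O.weightSpace p₀)
    (hEz : ∀ i, O.rreg (O.E i) z = 0) (i : Fin n) :
    ⨆ p, skewCommutant z (O.twist p₀) p ≤
      (⨆ p, skewCommutant z (O.twist p₀) p).comap (O.rreg (O.E i)) := by
  refine iSup_le fun p b hb => ?_
  obtain ⟨hb, hzb⟩ := mem_skewCommutant.mp hb
  refine Submodule.mem_iSup_of_mem (p - (simpleRoot a i, 0))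
    (mem_skewCommutant.mpr ⟨rreg_E_mem_weightSpace hb i, ?_⟩)
  have h := congrArg (O.rreg (O.E i)) hzb
  rw [map_smul, rreg_E_mul, rreg_E_mul, hEz, zero_mul, zero_add, mul_zero, add_zero,
    rreg_K_apply hz, smul_mul_assoc] at h
  rw [twist_sub, mul_comm, Units.val_mul, Units.val_inv_eq_inv_val, twist_simpleRoot_fst,
    mul_smul, ← h, inv_smul_smul₀ (zpow_ne_zero _ O.q_ne_zero)]

theorem iSup_skewCommutant_le_comap_lreg_F (hz : z ∈ O.weightSpace p₀)
    (hFz : ∀ i, O.lreg (O.F i) z = 0) (i : Fin n) :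
    ⨆ p, skewCommutant z (O.twist p₀)⁻¹ p ≤
      (⨆ p, skewCommutant z (O.twist p₀)⁻¹ p).comap (O.lreg (O.F i)) := by
  refine iSup_le fun p b hb => ?_
  obtain ⟨hb, hzb⟩ := mem_skewCommutant.mp hb
  refine Submodule.mem_iSup_of_mem (p - (0, simpleRoot a i))
    (mem_skewCommutant.mpr ⟨lreg_F_mem_weightSpace hb i, ?_⟩)
  have h := congrArg (O.lreg (O.F i)) hzb
  rw [map_smul, lreg_F_mul, lreg_F_mul, hFz, zero_mul, zero_add, mul_zero, add_zero,
    lreg_K_inv_apply hz, mul_smul_comm] at h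
  rw [h, Pi.inv_apply, Pi.inv_apply, twist_sub, mul_inv, inv_inv, Units.val_mul,
    twist_simpleRoot_snd, mul_smul]

theorem mul_eq_twist_smul_mul_of_E_eq_zero (hz : z ∈ O.weightSpace p₀)
    (hlz : ∀ i, O.lreg (O.E i) z = 0) (hrz : ∀ i, O.rreg (O.E i) z = 0)
    (hb : b ∈ O.weightSpace p) : z * b = (O.twist p₀ p : ℂ) • (b * z) := by
  refine mul_eq_smul_mul_of_cf_mem (O.twist_zero p₀) (O.twist_add p₀)
    (fun c κ θ ξ v _ hv => ?_) hb
  refine (isBihomogeneous_iSup_skewCommutant z _).cf_mem_of_rreg_E_mem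
    (iSup_skewCommutant_le_comap_rreg_E hz hrz) (fun ξ₀ hξ₀ => ?_) ξ
  have h_wt := cf_mem_weightSpace hξ₀ hv
  exact Submodule.mem_iSup_of_mem _ (mem_skewCommutant.mpr
    ⟨h_wt, mul_eq_twist_smul_mul hz h_wt hlz (rreg_F_cf_eq_zero hξ₀ v)⟩)

theorem mul_eq_twist_inv_smul_mul_of_F_eq_zero (hz : z ∈ O.weightSpace p₀)
    (hlz : ∀ i, O.lreg (O.F i) z = 0) (hrz : ∀ i, O.rreg (O.F i) z = 0)
    (hb : b ∈ O.weightSpace p) : z * b = (O.twist p₀ p : ℂ)⁻¹ • (b * z) := by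
  rw [← Units.val_inv_eq_inv_val]
  refine mul_eq_smul_mul_of_cf_mem (χ := (O.twist p₀)⁻¹) (inv_eq_one.mpr (O.twist_zero p₀))
    (fun p p' => by simp only [Pi.inv_apply, twist_add, mul_inv]) (fun c κ θ ξ v hξ _ => ?_) hb
  refine (isBihomogeneous_iSup_skewCommutant z _).cf_mem_of_lreg_F_mem
    (iSup_skewCommutant_le_comap_lreg_F hz hlz) (fun v₀ hv₀ => ?_) v
  have h_wt := cf_mem_weightSpace hξ hv₀
  refine Submodule.mem_iSup_of_mem _ (mem_skewCommutant.mpr ⟨h_wt, ?_⟩)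
  rw [mul_eq_twist_smul_mul h_wt hz (lreg_E_cf_eq_zero ξ hv₀) hrz, O.twist_comm, Pi.inv_apply,
    Units.val_inv_eq_inv_val, inv_smul_smul₀ (Units.ne_zero _)]

end SkewCommutation

section RegularStability

variable {O : QuantizedCoordinateRing q a d} {J : Submodule ℂ O.A} {p₀ : Biweight n} {z : O.A}
  {i : Fin n}

theorem IsBihomogeneous.le_comap (hJ : IsBihomogeneous J) {N : Submodule ℂ O.A}
    {f : Module.End ℂ O.A} (hf : ∀ p, ∀ b ∈ O.weightSpace p, b ∈ J → f b ∈ N) : J ≤ N.comap f :=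
  hJ.trans (iSup_le fun p _ hb => hf p _ hb.1 hb.2)

theorem zpow_sub_inv_ne_zero (O : QuantizedCoordinateRing q a d) (i : Fin n) {m : ℤ} (hm : m ≠ 0) :
    q ^ (m * d i) - (q ^ (m * d i))⁻¹ ≠ 0 := by
  rw [← zpow_neg, Ne, O.zpow_sub_zpow_neg_eq_zero]
  exact mul_ne_zero hm (Nat.cast_ne_zero.mpr (O.d_pos i).ne')

/- Applying `E i` to `z * b = t • (b * z)` by the Leibniz rule, all terms but two lie in `J`; those
two are proportional to `(E i b) * z`, with coefficients that differ because `p₀.1 i ≠ 0`. -/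
theorem rreg_E_mem_of_mul_mem (hJ : IsBihomogeneous J) (h_left : ∀ x, ∀ b ∈ J, x * b ∈ J)
    (h_right : ∀ x, ∀ b ∈ J, b * x ∈ J) (hz : z ∈ O.weightSpace p₀)
    (hlz : ∀ i, O.lreg (O.F i) z = 0) (hrz : ∀ i, O.rreg (O.F i) z = 0) (hi : p₀.1 i ≠ 0)
    (h_cancel : ∀ b, b * z ∈ J → b ∈ J) : ∀ b ∈ J, O.rreg (O.E i) b ∈ J := by
  refine hJ.le_comap fun p b hb hbJ => h_cancel _ ?_
  set t := (O.twist p₀ p : ℂ)⁻¹ with ht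
  set γ := q ^ (p₀.1 i * d i) with hγ
  have h_leibniz := congrArg (O.rreg (O.E i)) (mul_eq_twist_inv_smul_mul_of_F_eq_zero hz hlz hrz hb)
  have h_comm := mul_eq_twist_inv_smul_mul_of_F_eq_zero hz hlz hrz (rreg_E_mem_weightSpace hb i)
  rw [twist_sub, Units.val_mul, Units.val_inv_eq_inv_val, twist_simpleRoot_fst, mul_inv, inv_inv,
    ← ht, ← hγ] at h_comm
  rw [map_smul, rreg_E_mul, rreg_E_mul, rreg_K_apply hz, rreg_K_apply hb, ← ht, ← hγ,
    smul_mul_assoc, h_comm] at h_leibniz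
  have h_coeff : γ * (t * γ) - t ≠ 0 := by
    have hγ₀ : γ ≠ 0 := zpow_ne_zero _ O.q_ne_zero
    rw [show γ * (t * γ) - t = t * γ * (γ - γ⁻¹) by field_simp]
    exact mul_ne_zero (mul_ne_zero (inv_ne_zero (Units.ne_zero _)) hγ₀)
      (O.zpow_sub_inv_ne_zero i hi)
  have h_eq : (γ * (t * γ) - t) • (O.rreg (O.E i) b * z) =
      t • (q ^ (p.1 i * d i) • b * O.rreg (O.E i) z) - O.rreg (O.E i) z * b := by
    linear_combination (norm := module) h_leibniz
  rw [← J.smul_mem_iff h_coeff, h_eq]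
  exact J.sub_mem (J.smul_mem _ (h_right _ _ (J.smul_mem _ hbJ))) (h_left _ _ hbJ)

theorem rreg_F_mem_of_mul_mem (hJ : IsBihomogeneous J) (h_left : ∀ x, ∀ b ∈ J, x * b ∈ J)
    (h_right : ∀ x, ∀ b ∈ J, b * x ∈ J) (hz : z ∈ O.weightSpace p₀)
    (hlz : ∀ i, O.lreg (O.E i) z = 0) (hrz : ∀ i, O.rreg (O.E i) z = 0) (hi : p₀.1 i ≠ 0)
    (h_cancel : ∀ b, b * z ∈ J → b ∈ J) : ∀ b ∈ J, O.rreg (O.F i) b ∈ J := by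
  refine hJ.le_comap fun p b hb hbJ => h_cancel _ ?_
  set t := (O.twist p₀ p : ℂ) with ht
  set γ := q ^ (p₀.1 i * d i) with hγ
  have h_leibniz := congrArg (O.rreg (O.F i)) (mul_eq_twist_smul_mul_of_E_eq_zero hz hlz hrz hb)
  have h_comm := mul_eq_twist_smul_mul_of_E_eq_zero hz hlz hrz (rreg_F_mem_weightSpace hb i)
  rw [twist_add, Units.val_mul, twist_simpleRoot_fst, ← ht, ← hγ] at h_comm
  rw [map_smul, rreg_F_mul, rreg_F_mul, rreg_K_inv_apply hz, rreg_K_inv_apply hb, ← ht, zpow_neg,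
    zpow_neg, ← hγ, mul_smul_comm γ⁻¹, h_comm] at h_leibniz
  have h_coeff : t * γ - t * γ⁻¹ ≠ 0 := by
    rw [← mul_sub]
    exact mul_ne_zero (Units.ne_zero _) (O.zpow_sub_inv_ne_zero i hi)
  have h_eq : (t * γ - t * γ⁻¹) • (O.rreg (O.F i) b * z) =
      t • (b * O.rreg (O.F i) z) - O.rreg (O.F i) z * (q ^ (p.1 i * d i))⁻¹ • b := by
    linear_combination (norm := module) h_leibniz
  rw [← J.smul_mem_iff h_coeff, h_eq]
  exact J.sub_mem (J.smul_mem _ (h_right _ _ hbJ)) (h_left _ _ (J.smul_mem _ hbJ))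

end RegularStability

section TorusAction

variable {O : QuantizedCoordinateRing q a d} {J : Submodule ℂ O.A}

theorem one_mem_of_mul_mem_imp_mem (hJ : IsBihomogeneous J) (h_left : ∀ x, ∀ b ∈ J, x * b ∈ J)
    (h_right : ∀ x, ∀ b ∈ J, b * x ∈ J)
    (hE : ∀ i, ∃ p, ∃ z ∈ O.weightSpace p, p.1 i ≠ 0 ∧ (∀ j, O.lreg (O.F j) z = 0) ∧
      (∀ j, O.rreg (O.F j) z = 0) ∧ ∀ b, b * z ∈ J → b ∈ J)
    (hF : ∀ i, ∃ p, ∃ z ∈ O.weightSpace p, p.1 i ≠ 0 ∧ (∀ j, O.lreg (O.E j) z = 0) ∧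
      (∀ j, O.rreg (O.E j) z = 0) ∧ ∀ b, b * z ∈ J → b ∈ J)
    (h_ne : J ≠ ⊥) : 1 ∈ J := by
  have h_rreg_E : ∀ i, ∀ b ∈ J, O.rreg (O.E i) b ∈ J := fun i => by
    obtain ⟨p, z, hz, hi, hlz, hrz, h_cancel⟩ := hE i
    exact rreg_E_mem_of_mul_mem hJ h_left h_right hz hlz hrz hi h_cancel
  have h_rreg_F : ∀ i, ∀ b ∈ J, O.rreg (O.F i) b ∈ J := fun i => by
    obtain ⟨p, z, hz, hi, hlz, hrz, h_cancel⟩ := hF i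
    exact rreg_F_mem_of_mul_mem hJ h_left h_right hz hlz hrz hi h_cancel
  refine O.one_mem_of_rreg_mem h_left (fun u b hb => ?_) h_ne
  induction u using O.triangular_induction with
  | mul f hf k hk e he =>
    rw [rreg_mul, rreg_mul]
    exact rreg_mem_of_mem_adjoin (Set.forall_mem_range.mpr h_rreg_E) he _
      (hJ.rreg_mem_of_mem_cartan hk _
        (rreg_mem_of_mem_adjoin (Set.forall_mem_range.mpr h_rreg_F) hf b hb))
  | add u v hu hv => rw [map_add]; exact J.add_mem hu hv

variable (O) in
theorem exists_σ_fundamentalWeight_apply_ne_zero (w : O.W) (i : Fin n) :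
    ∃ j, (O.σ w).toAdd (dominantWeight (Pi.single j 1)) i ≠ 0 := by
  by_contra! h
  have h_zero : (Pi.evalAddMonoidHom (fun _ => ℤ) i).comp (O.σ w).toAdd.toAddMonoidHom = 0 := by
    refine AddMonoidHom.functions_ext' _ _ _ fun j => AddMonoidHom.ext_int ?_
    have h_single : dominantWeight (Pi.single j 1) = Pi.single j (1 : ℤ) := by
      ext k
      simp [dominantWeight, Pi.single_apply]
    simpa [h_single] using h j
  have h_apply := DFunLike.congr_fun h_zero ((O.σ w).toAdd.symm (Pi.single i 1))
  simp at h_apply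

theorem one_mem_of_mul_cf_mem_imp_mem (hJ : IsBihomogeneous J)
    (h_left : ∀ x, ∀ b ∈ J, x * b ∈ J) (h_right : ∀ x, ∀ b ∈ J, b * x ∈ J)
    {ξp ξm : ∀ i : Fin n, Module.Dual ℂ (O.V (Pi.single i 1))}
    {vp vm : ∀ i : Fin n, O.V (Pi.single i 1)}
    (hξp : ∀ i, inDualWt q d O.K (O.ρ _) (-dominantWeight (Pi.single i 1)) (ξp i))
    (hvp : ∀ i, vp i ∈ wtSp q d O.K (O.ρ _) ((O.σ O.w₀).toAdd (dominantWeight (Pi.single i 1))))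
    (hξm : ∀ i, inDualWt q d O.K (O.ρ _)
      (-(O.σ O.w₀).toAdd (dominantWeight (Pi.single i 1))) (ξm i))
    (hvm : ∀ i, vm i ∈ wtSp q d O.K (O.ρ _) (dominantWeight (Pi.single i 1)))
    (h_cancel_p : ∀ i b, b * O.cf _ (ξp i) (vp i) ∈ J → b ∈ J)
    (h_cancel_m : ∀ i b, b * O.cf _ (ξm i) (vm i) ∈ J → b ∈ J) (h_ne : J ≠ ⊥) : 1 ∈ J := by
  refine one_mem_of_mul_mem_imp_mem hJ h_left h_right (fun i => ?_) (fun i => ?_) h_ne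
  · exact ⟨_, _, cf_mem_weightSpace (hξp i) (hvp i), by simp, lreg_F_cf_eq_zero _ (hvp i),
      rreg_F_cf_eq_zero (hξp i) _, h_cancel_p i⟩
  · obtain ⟨j, hj⟩ := O.exists_σ_fundamentalWeight_apply_ne_zero O.w₀ i
    exact ⟨_, _, cf_mem_weightSpace (hξm j) (hvm j), hj, lreg_E_cf_eq_zero _ (hvm j),
      rreg_E_cf_eq_zero (hξm j) _, h_cancel_m j⟩

/-- The character of the torus `𝓗 = (ℂˣ)ⁿ × (ℂˣ)ⁿ` by which it acts on elements of biweight `p`.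
The first component of `p` is minus the weight of the functional `ξ` in `cf c ξ v`. -/
def torusChar (g : (Fin n → ℂˣ) × (Fin n → ℂˣ)) (p : Biweight n) : ℂˣ :=
  (∏ i, g.1 i ^ (-p.1) i) * ∏ i, g.2 i ^ p.2 i

theorem torusChar_zero (g : (Fin n → ℂˣ) × (Fin n → ℂˣ)) : torusChar g 0 = 1 := by
  simp [torusChar]

theorem torusChar_add (g : (Fin n → ℂˣ) × (Fin n → ℂˣ)) (p p' : Biweight n) :
    torusChar g (p + p') = torusChar g p * torusChar g p' := by
  simp only [torusChar, Prod.fst_add, Prod.snd_add, neg_add, Pi.add_apply, zpow_add,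
    Finset.prod_mul_distrib, mul_mul_mul_comm]

theorem torusChar_flip_injective :
    Function.Injective fun (p : Biweight n) g => (torusChar g p : ℂ) := by
  intro p p' h
  have h_char : ∀ g, torusChar g p = torusChar g p' := fun g => Units.ext (congrFun h g)
  let two : ℂˣ := Units.mk0 2 two_ne_zero
  have h_two : Function.Injective fun m : ℤ => two ^ m := by
    intro m m' hm
    have h_norm := congrArg (fun u : ℂˣ => ‖(u : ℂ)‖) hm
    simpa [two, zpow_right_inj₀] using h_norm
  have h_single : ∀ (i : Fin n) (μ : Fin n → ℤ),
      ∏ j, (Pi.mulSingle i two : Fin n → ℂˣ) j ^ μ j = two ^ μ i := by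
    intro i μ
    rw [Fintype.prod_eq_single i fun j hj => by rw [Pi.mulSingle_eq_of_ne hj, one_zpow],
      Pi.mulSingle_eq_same]
  refine Prod.ext (funext fun i => ?_) (funext fun i => ?_)
  · have := h_char (Pi.mulSingle i two, 1)
    simpa [torusChar, h_single, h_two.eq_iff] using this
  · have := h_char (1, Pi.mulSingle i two)
    simpa [torusChar, h_single, h_two.eq_iff] using this

/-- `act` is the action of the torus `𝓗` on `O_q(G)` by which `(g₁, g₂)` rescales `cf c ξ v`, with
`ξ` of weight `μ` and `v` of weight `η`, by `g₁(μ) g₂(η)`. -/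
def IsTorusAction (act : (Fin n → ℂˣ) × (Fin n → ℂˣ) → O.A →ₐ[ℂ] O.A) : Prop :=
  ∀ g c (ξ : Module.Dual ℂ (O.V c)) v (μ η : Fin n → ℤ),
    inDualWt q d O.K (O.ρ c) μ ξ → v ∈ wtSp q d O.K (O.ρ c) η →
    act g (O.cf c ξ v) =
      ((((∏ i, g.1 i ^ μ i) * (∏ i, g.2 i ^ η i) : ℂˣ) : ℂ)) • O.cf c ξ v

variable {act : (Fin n → ℂˣ) × (Fin n → ℂˣ) → O.A →ₐ[ℂ] O.A}

theorem IsTorusAction.apply_eq_smul (h_act : IsTorusAction act) (g) {p : Biweight n} {b : O.A}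
    (hb : b ∈ O.weightSpace p) : act g b = (torusChar g p : ℂ) • b := by
  refine Module.End.mem_eigenspace_iff.mp (weightSpace_le
    (P := fun p => Module.End.eigenspace (act g).toLinearMap (torusChar g p : ℂ)) ?_ ?_ ?_ hb)
  · simp [torusChar_zero]
  · rintro p p' b ⟨-, hb⟩ b' ⟨-, hb'⟩
    rw [SetLike.mem_coe, Module.End.mem_eigenspace_iff, AlgHom.toLinearMap_apply] at hb hb'
    rw [Module.End.mem_eigenspace_iff, AlgHom.toLinearMap_apply, map_mul, hb, hb',
      smul_mul_smul_comm, torusChar_add, Units.val_mul]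
  · intro c κ θ ξ v hξ hv
    exact Submodule.mem_iSup_of_mem (κ, θ) ⟨cf_mem_weightSpace hξ hv,
      Module.End.mem_eigenspace_iff.mpr (h_act g c ξ v (-κ) θ hξ hv)⟩

theorem IsTorusAction.isBihomogeneous (h_act : IsTorusAction act)
    (hJ : ∀ g, ∀ b ∈ J, act g b ∈ J) : IsBihomogeneous J := by
  intro b hb
  have h_top : b ∈ ⨆ p, O.weightSpace p := iSup_weightSpace (O := O) ▸ Submodule.mem_top
  obtain ⟨y, hy, rfl⟩ := (Submodule.mem_iSup_iff_exists_finsupp _ _).mp h_top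
  have h_mem := mem_of_sum_simultaneous_eigenvectors_mem (f := fun g => (act g).toLinearMap)
    torusChar_flip_injective hJ y.support y (fun p _ g => h_act.apply_eq_smul g (hy p)) hb
  exact Submodule.sum_mem _ fun p hp => Submodule.mem_iSup_of_mem p ⟨hy p, h_mem p hp⟩

end TorusAction

end QuantizedCoordinateRing

section Localisation

variable {R T : Type*} [Ring R] [Ring T] {I : TwoSidedIdeal T}

theorem mem_of_mul_isUnit_mem {t x : T} (hx : IsUnit x) (h : t * x ∈ I) : t ∈ I := by
  obtain ⟨u, rfl⟩ := hx
  simpa using I.mul_mem_right _ (↑u⁻¹ : T) h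

theorem eq_bot_of_comap_eq_bot {φ : R →+* T}
    (h_frac : ∀ t, ∃ b x, IsUnit (φ x) ∧ t * φ x = φ b) (h : I.comap φ = ⊥) : I = ⊥ := by
  refine eq_bot_iff.mpr fun t ht => ?_
  obtain ⟨b, x, hx, htx⟩ := h_frac t
  have hb : b ∈ I.comap φ := (TwoSidedIdeal.mem_comap φ).mpr (htx ▸ I.mul_mem_right _ _ ht)
  rw [h, TwoSidedIdeal.mem_bot] at hb
  rw [hb, map_zero, hx.mul_left_eq_zero] at htx
  exact (TwoSidedIdeal.mem_bot T).mpr htx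

end Localisation

end QuantumGroup

open QuantumGroup QuantizedCoordinateRing in
theorem localisation_H_simple_general {q : ℂ} {n : ℕ} {a : Fin n → Fin n → ℤ} {d : Fin n → ℕ}
    (O : QuantizedCoordinateRing q a d)
    {act : (Fin n → ℂˣ) × (Fin n → ℂˣ) → O.A →ₐ[ℂ] O.A} (h_act : IsTorusAction act)
    {ξp ξm : ∀ i : Fin n, Module.Dual ℂ (O.V (Pi.single i 1))}
    {vp vm : ∀ i : Fin n, O.V (Pi.single i 1)}
    (hξp : ∀ i, inDualWt q d O.K (O.ρ _) (-dominantWeight (Pi.single i 1)) (ξp i))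
    (hvp : ∀ i, vp i ∈ wtSp q d O.K (O.ρ _) ((O.σ O.w₀).toAdd (dominantWeight (Pi.single i 1))))
    (hξm : ∀ i, inDualWt q d O.K (O.ρ _)
      (-(O.σ O.w₀).toAdd (dominantWeight (Pi.single i 1))) (ξm i))
    (hvm : ∀ i, vm i ∈ wtSp q d O.K (O.ρ _) (dominantWeight (Pi.single i 1)))
    {T : Type*} [Ring T] [Algebra ℂ T] {φ : O.A →ₐ[ℂ] T}
    (h_unit_p : ∀ i, IsUnit (φ (O.cf _ (ξp i) (vp i))))
    (h_unit_m : ∀ i, IsUnit (φ (O.cf _ (ξm i) (vm i))))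
    (h_frac : ∀ t, ∃ b x, IsUnit (φ x) ∧ t * φ x = φ b)
    {I : TwoSidedIdeal T} (hI : ∀ g b, φ b ∈ I → φ (act g b) ∈ I) : I = ⊥ ∨ I = ⊤ := by
  let J : Submodule ℂ O.A := (I.comap φ).asIdeal.restrictScalars ℂ
  have mem_J : ∀ b, b ∈ J ↔ φ b ∈ I := fun b =>
    TwoSidedIdeal.mem_asIdeal.trans (TwoSidedIdeal.mem_comap φ)
  have h_cancel : ∀ x, IsUnit (φ x) → ∀ b, b * x ∈ J → b ∈ J := fun x hx b hb =>
    (mem_J b).mpr (mem_of_mul_isUnit_mem hx (map_mul φ b x ▸ (mem_J _).mp hb))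
  have h_left : ∀ x, ∀ b ∈ J, x * b ∈ J := fun x b hb =>
    (mem_J _).mpr (map_mul φ x b ▸ I.mul_mem_left _ _ ((mem_J b).mp hb))
  have h_right : ∀ x, ∀ b ∈ J, b * x ∈ J := fun x b hb =>
    (mem_J _).mpr (map_mul φ b x ▸ I.mul_mem_right _ _ ((mem_J b).mp hb))
  have hJ : IsBihomogeneous J := h_act.isBihomogeneous fun g b hb =>
    (mem_J _).mpr (hI g b ((mem_J b).mp hb))
  refine or_iff_not_imp_left.mpr fun hI_ne => I.eq_top ?_
  have h_ne : J ≠ ⊥ := by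
    intro hJ_bot
    refine hI_ne (eq_bot_of_comap_eq_bot (φ := (φ : O.A →+* T)) h_frac ?_)
    refine eq_bot_iff.mpr fun b hb => (Submodule.mem_bot ℂ).mp (hJ_bot ▸ (mem_J b).mpr ?_)
    exact (TwoSidedIdeal.mem_comap _).mp hb
  rw [← map_one φ]
  exact (mem_J 1).mp (one_mem_of_mul_cf_mem_imp_mem hJ h_left h_right hξp hvp hξm hvm
    (fun i => h_cancel _ (h_unit_p i)) (fun i => h_cancel _ (h_unit_m i)) h_ne)

theorem localisation_H_simple
    -- the deformation parameter: a transcendental complex number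
    (q : ℂ) (hq : Transcendental ℚ q)
    -- Cartan data of the complex semisimple Lie algebra 𝔤 of rank n
    (n : ℕ) (hn : 0 < n) (a : Fin n → Fin n → ℤ) (d : Fin n → ℕ)
    (ha_diag : ∀ i, a i i = 2) (ha_off : ∀ i j, i ≠ j → a i j ≤ 0)
    (ha_zero : ∀ i j, a i j = 0 ↔ a j i = 0)
    (hd_pos : ∀ i, 0 < d i)
    (ha_symm : ∀ i j, (d i : ℤ) * a i j = (d j : ℤ) * a j i)
    -- the quantised enveloping algebra U = U_q(𝔤): carries elements E i, F i and units K i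
    -- satisfying the defining relations, and is universal for these relations
    (U : Type) [Ring U] [Algebra ℂ U]
    (E F : Fin n → U) (K : Fin n → Uˣ)
    (hrel : UqRels q a d U E F K)
    (hUuniv : ∀ (B : Type) [Ring B] [Algebra ℂ B] (E' F' : Fin n → B) (K' : Fin n → Bˣ),
      UqRels q a d B E' F' K' → ∃! φ : U →ₐ[ℂ] B,
        (∀ i, φ (E i) = E' i) ∧ (∀ i, φ (F i) = F' i) ∧ (∀ i, φ (K i : U) = (K' i : B)))
    -- the Hopf algebra structure of U_q(𝔤)
    (Δ : U →ₐ[ℂ] U ⊗[ℂ] U) (ε : U →ₐ[ℂ] ℂ)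
    (hΔE : ∀ i, Δ (E i) = E i ⊗ₜ 1 + (K i : U) ⊗ₜ E i)
    (hΔF : ∀ i, Δ (F i) = F i ⊗ₜ (((K i)⁻¹ : Uˣ) : U) + 1 ⊗ₜ F i)
    (hΔK : ∀ i, Δ (K i : U) = (K i : U) ⊗ₜ (K i : U))
    (hεE : ∀ i, ε (E i) = 0) (hεF : ∀ i, ε (F i) = 0) (hεK : ∀ i, ε (K i : U) = 1)
    -- the Weyl group W, acting faithfully on the weight lattice P = ℤⁿ (coordinates taken in
    -- the basis of fundamental weights ϖ i), generated by the simple reflections s i, with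
    -- longest element w₀ (characterised by: w₀ maps dominant weights to antidominant ones)
    (W : Type) [Group W] [Finite W] (σ : W →* Multiplicative (AddAut (Fin n → ℤ)))
    (hσinj : Function.Injective σ)
    (s : Fin n → W) (hsgen : Subgroup.closure (Set.range s) = ⊤)
    (hs : ∀ i (μ : Fin n → ℤ), (σ (s i)).toAdd μ = fun k => μ k - μ i * a k i)
    (w₀ : W) (hw₀ : ∀ μ : Fin n → ℤ, (∀ i, 0 ≤ μ i) → ∀ i, (σ w₀).toAdd μ i ≤ 0)
    -- the simple finite-dimensional modules V(λ) of highest weight λ = ∑ c i ϖ i ∈ P⁺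
    (V : (Fin n → ℕ) → Type) [∀ c, AddCommGroup (V c)] [∀ c, Module ℂ (V c)]
    (ρ : ∀ c, U →ₐ[ℂ] Module.End ℂ (V c))
    (hfd : ∀ c, FiniteDimensional ℂ (V c))
    (hsimple : ∀ c (N : Submodule ℂ (V c)), (∀ (u : U), ∀ v ∈ N, ρ c u v ∈ N) → N = ⊥ ∨ N = ⊤)
    (hhw : ∀ c, ∃ v : V c, v ≠ 0 ∧ v ∈ wtSp q d K (ρ c) (fun i => (c i : ℤ)) ∧
      ∀ i, ρ c (E i) v = 0)
    (hwtsum : ∀ c, (⨆ μ : Fin n → ℤ, wtSp q d K (ρ c) μ) = ⊤)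
    (hextremal : ∀ c (w : W),
      Module.finrank ℂ (wtSp q d K (ρ c) ((σ w).toAdd (fun i => (c i : ℤ)))) = 1)
    -- the quantised coordinate ring A = O_q(G): an algebra of linear forms on U (via the
    -- injection ι into the dual space, multiplication being convolution through Δ),
    -- generated by the coordinate functions cf c ξ v = c^λ_{ξ,v} : u ↦ ξ (u · v)
    (A : Type) [Ring A] [Algebra ℂ A]
    (ι : A →ₗ[ℂ] (U →ₗ[ℂ] ℂ)) (hιinj : Function.Injective ι)
    (hι1 : ι 1 = ε.toLinearMap)
    (hιmul : ∀ x y : A, ι (x * y) =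
      (TensorProduct.lid ℂ ℂ).toLinearMap ∘ₗ (TensorProduct.map (ι x) (ι y)) ∘ₗ Δ.toLinearMap)
    (cf : ∀ c : Fin n → ℕ, Module.Dual ℂ (V c) → V c → A)
    (hcf : ∀ c ξ v u, ι (cf c ξ v) u = ξ (ρ c u v))
    (hAgen : Algebra.adjoin ℂ {x : A | ∃ c ξ v, x = cf c ξ v} = ⊤)
    -- the rational action of the torus 𝓗 = (ℂ*)ⁿ × (ℂ*)ⁿ on O_q(G), by which a pair
    -- (g₁, g₂) rescales a coordinate function c^λ_{ξ,v} with ξ of weight μ and v of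
    -- weight η by the scalar g₁(μ) g₂(η)
    (act : (Fin n → ℂˣ) × (Fin n → ℂˣ) →* (A ≃ₐ[ℂ] A))
    (hact : ∀ g c (ξ : Module.Dual ℂ (V c)) v (μ η : Fin n → ℤ),
      inDualWt q d K (ρ c) μ ξ → v ∈ wtSp q d K (ρ c) η →
      act g (cf c ξ v) =
        ((((∏ i, g.1 i ^ μ i) * (∏ i, g.2 i ^ η i) : ℂˣ) : ℂ)) • cf c ξ v)
    -- choices of the (essentially unique) coordinate functions c^{ϖ_i}_{-ϖ_i, w₀ϖ_i} and
    -- c^{ϖ_i}_{-w₀ϖ_i, ϖ_i}, for i = 1, …, n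
    (ξp ξm : ∀ i : Fin n, Module.Dual ℂ (V (Pi.single i 1)))
    (vp vm : ∀ i : Fin n, V (Pi.single i 1))
    (hξp : ∀ i, inDualWt q d K (ρ (Pi.single i 1)) (fun k => -((Pi.single i 1 : Fin n → ℕ) k : ℤ)) (ξp i) ∧ ξp i ≠ 0)
    (hvp : ∀ i, vp i ∈ wtSp q d K (ρ (Pi.single i 1)) ((σ w₀).toAdd (fun k => ((Pi.single i 1 : Fin n → ℕ) k : ℤ))) ∧ vp i ≠ 0)
    (hξm : ∀ i, inDualWt q d K (ρ (Pi.single i 1)) (-((σ w₀).toAdd (fun k => ((Pi.single i 1 : Fin n → ℕ) k : ℤ)))) (ξm i) ∧ ξm i ≠ 0)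
    (hvm : ∀ i, vm i ∈ wtSp q d K (ρ (Pi.single i 1)) (fun k => ((Pi.single i 1 : Fin n → ℕ) k : ℤ)) ∧ vm i ≠ 0)
    -- T: the localisation of O_q(G) at the multiplicative set generated by the 2n normal
    -- 𝓗-eigenvectors c^{ϖ_i}_{-ϖ_i, w₀ϖ_i} and c^{ϖ_i}_{-w₀ϖ_i, ϖ_i},
    -- with the induced 𝓗-action
    (T : Type) [Ring T] [Algebra ℂ T] (φ : A →ₐ[ℂ] T)
    (hφinj : Function.Injective φ)
    (hunit : ∀ x ∈ Submonoid.closure (Set.range (Sum.elim (fun i => cf (Pi.single i 1) (ξp i) (vp i)) (fun i => cf (Pi.single i 1) (ξm i) (vm i)))), IsUnit (φ x))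
    (hloc_r : ∀ t : T, ∃ a : A, ∃ x ∈ Submonoid.closure (Set.range (Sum.elim (fun i => cf (Pi.single i 1) (ξp i) (vp i)) (fun i => cf (Pi.single i 1) (ξm i) (vm i)))), t * φ x = φ a)
    (hloc_l : ∀ t : T, ∃ a : A, ∃ x ∈ Submonoid.closure (Set.range (Sum.elim (fun i => cf (Pi.single i 1) (ξp i) (vp i)) (fun i => cf (Pi.single i 1) (ξm i) (vm i)))), φ x * t = φ a)
    (actT : (Fin n → ℂˣ) × (Fin n → ℂˣ) →* (T ≃ₐ[ℂ] T))
    (hactT : ∀ g x, actT g (φ x) = φ (act g x)) :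
    -- T is 𝓗-simple: its only 𝓗-invariant two-sided ideals are 0 and T
    ∀ I : TwoSidedIdeal T, (∀ g x, x ∈ I → actT g x ∈ I) → I = ⊥ ∨ I = ⊤ := by
  let O : QuantumGroup.QuantizedCoordinateRing q a d :=
    { zpow_injective := QuantumGroup.zpow_injective_of_transcendental hq
      diag := ha_diag, d_pos := hd_pos, symm := ha_symm
      U, E, F, K, rels := hrel, universal := hUuniv
      Δ, ε, Δ_E := hΔE, Δ_F := hΔF, Δ_K := hΔK, ε_E := hεE, ε_F := hεF, ε_K := hεK
      W, σ, s, closure_range_s := hsgen, σ_s := hs, w₀, w₀_nonpos := hw₀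
      V, ρ, isIrreducible := hsimple, exists_highestWeightVector := hhw, iSup_wtSp := hwtsum
      finrank_wtSp_extremal := hextremal
      A, ι, ι_injective := hιinj, ι_one := hι1, ι_mul := hιmul, cf, ι_cf := hcf
      adjoin_cf := hAgen }
  intro I hI
  refine localisation_H_simple_general O (act := fun g => act g) hact (fun i => (hξp i).1)
    (fun i => (hvp i).1) (fun i => (hξm i).1) (fun i => (hvm i).1)
    (fun i => hunit _ (Submonoid.subset_closure ⟨.inl i, rfl⟩))
    (fun i => hunit _ (Submonoid.subset_closure ⟨.inr i, rfl⟩)) (fun t => ?_)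
    fun g b hb => hactT g b ▸ hI g _ hb
  obtain ⟨b, x, hx, htx⟩ := hloc_r t
  exact ⟨b, x, hunit x hx, htx⟩
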